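/- arXiv:2603.22098 — 5 statements merged into one kernel-verified Lean document; each statement's English description precedes it below -/
import Mathlib

section
/- There exists a deterministic online algorithm for placing L-shapes in the plane by translations (each placement irrevocable, all translates with pairwise disjoint interiors) such that for every finite input sequence of L-shapes with arm lengths in [0,1], the perimeter of the smallest axis-parallel bounding rectangle of the algorithm's placement is at most 16 times the minimum possible bounding-rectangle perimeter over all offline translational placements of the same L-shapes with pairwise disjoint interiors. -/
/-!
The algorithm packs L-shapes into dyadic rectangles, called cells; a cell of type `(i, j)` has size
`2 ^ i × 2 ^ j`.  An L-shape with `lx, ly > 0` has the type `(i, j)` for which `lx` lies in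
`(2/5 * 2 ^ i, 4/5 * 2 ^ i]` and `ly` in `(2/5 * 2 ^ j, 4/5 * 2 ^ j]`.  L-shapes of one type are
nested along the diagonal of a cell of that type: each is placed at the current offset, and the
offset then advances by `(wx, wy)` (`Geo.place`).  As long as the offset is below `1/5` of both
sides the next item fits.  Once this fails, the items in the cell have total area at least `2/25`
of the cell, and the cell is closed (`St.close`).  Each type has at most one open cell.

Cells come from a buddy system inside a region `R` anchored at the origin, which is a square or
twice as high as wide.  The parent of a type doubles its shorter side.  A request for a cell takes
a free cell of that type or splits a cell of the parent type, obtained in the same way (`request`);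
each type has at most one free cell.  If no ancestor type has a free cell, `R` is doubled
(`St.grow`), one half being the old region and the other a new free cell.

Let `w × h` be the bounding box of an offline placement and `p = w + h`.  Then `lx ≤ w` and `ly ≤ h`
for all items, and the total area of the items is at most `w * h` (`opt_bound`).  At a failed
request, let `2 ^ M` be the largest power of two that is at most `5/2 * p`.  All free cells have
types with both exponents at most `M` and different from `(M, M)`, so their area is at most
`3 * (5/2 * p) ^ 2`.  Open cells have area at most `4 * (5/2 * w) * (5/2 * h)`, and closed ones at
most `25/2 * w * h`.  Since `4 * w * h ≤ p ^ 2`, the area of `R` is at most `225/8 * p ^ 2`.  The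
half-perimeter of the doubled region is at most `3` times the root of the area of `R`, hence less
than `16 * p` (`St.grow_bound`).

L-shapes with `lx = 0` or `ly = 0` have empty interior and are placed at the origin.
-/

/-- An L-shape, given by its four parameters: arm lengths `lx, ly` and widths `wx, wy`. -/
structure LShape where
  lx : ℝ
  wx : ℝ
  ly : ℝ
  wy : ℝ

/-- The parameter constraints of an L-shape: `0 ≤ wx ≤ lx ≤ 1` and `0 ≤ wy ≤ ly ≤ 1`. -/
def LShape.IsValid (L : LShape) : Prop :=
  0 ≤ L.wx ∧ L.wx ≤ L.lx ∧ L.lx ≤ 1 ∧ 0 ≤ L.wy ∧ L.wy ≤ L.ly ∧ L.ly ≤ 1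

/-- The point set `([0,lx]×[0,wy]) ∪ ([0,wx]×[0,ly])` of an L-shape (reference point at the
origin). -/
def LShape.toSet (L : LShape) : Set (ℝ × ℝ) :=
  Set.Icc ((0, 0) : ℝ × ℝ) (L.lx, L.wy) ∪ Set.Icc ((0, 0) : ℝ × ℝ) (L.wx, L.ly)

/-- Translate a set in the plane by a vector. -/
def planeTranslate (v : ℝ × ℝ) (S : Set (ℝ × ℝ)) : Set (ℝ × ℝ) := (· + v) '' S

/-- The unit bin `[0,1]²`. -/
def unitBin : Set (ℝ × ℝ) := Set.Icc ((0, 0) : ℝ × ℝ) (1, 1)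

/-- The perimeter of the smallest axis-parallel rectangle containing `S`. -/
noncomputable def bboxPerim (S : Set (ℝ × ℝ)) : ℝ :=
  2 * ((sSup ((fun p : ℝ × ℝ => p.1) '' S) - sInf ((fun p : ℝ × ℝ => p.1) '' S)) +
       (sSup ((fun p : ℝ × ℝ => p.2) '' S) - sInf ((fun p : ℝ × ℝ => p.2) '' S)))

/-- The translation chosen by the online placement algorithm `A` for the `i`-th item of `l`
(depending only on the first `i+1` items). -/
def planePlaceOf (A : List LShape → ℝ × ℝ) (l : List LShape) (i : Fin l.length) : ℝ × ℝ :=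
  A (l.take (i.1 + 1))

/-- The placements produced by `A` on `l` have pairwise disjoint interiors. -/
def OnlinePlaces (A : List LShape → ℝ × ℝ) (l : List LShape) : Prop :=
  ∀ i j : Fin l.length, i ≠ j →
    Disjoint (interior (planeTranslate (planePlaceOf A l i) (l.get i).toSet))
             (interior (planeTranslate (planePlaceOf A l j) (l.get j).toSet))

/-! ### Dyadic types -/

/-- The type of the parent of a dyadic cell of type `t`: the shorter side is doubled (the height,
for a square).  A pair `(i, j)` stands for the shape `2 ^ i × 2 ^ j`. -/
def parT (t : ℤ × ℤ) : ℤ × ℤ := if t.1 < t.2 then (t.1 + 1, t.2) else (t.1, t.2 + 1)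

/-- The displacement from one half of a cell of type `parT t` to the other half. -/
noncomputable def shT (t : ℤ × ℤ) : ℝ × ℝ :=
  if t.1 < t.2 then ((2 : ℝ) ^ t.1, 0) else (0, (2 : ℝ) ^ t.2)

/-- The area of a cell of type `t`. -/
noncomputable def arT (t : ℤ × ℤ) : ℝ := (2 : ℝ) ^ t.1 * (2 : ℝ) ^ t.2

/-- The types of the growing region: a square, or a rectangle twice as high as wide. -/
def Spine (t : ℤ × ℤ) : Prop := t.2 = t.1 ∨ t.2 = t.1 + 1

lemma two_zpow_pos (i : ℤ) : (0 : ℝ) < 2 ^ i := by positivity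

lemma two_zpow_succ (i : ℤ) : (2 : ℝ) ^ (i + 1) = 2 * 2 ^ i := by
  rw [zpow_add_one₀ (by norm_num)]; ring

lemma arT_pos (t : ℤ × ℤ) : 0 < arT t := by unfold arT; positivity

lemma arT_parT (t : ℤ × ℤ) : arT (parT t) = 2 * arT t := by
  unfold arT parT
  split_ifs <;> simp only [two_zpow_succ] <;> ring

lemma arT_iterate (n : ℕ) (t : ℤ × ℤ) : arT (parT^[n] t) = 2 ^ n * arT t := by
  induction n generalizing t with
  | zero => simp
  | succ n ih => rw [Function.iterate_succ_apply, ih, arT_parT]; ring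

lemma iterate_succ_ne (n : ℕ) (t : ℤ × ℤ) : parT^[n + 1] t ≠ t := by
  intro h
  have h1 := arT_iterate (n + 1) t
  rw [h] at h1
  have h2 : (1 : ℝ) < 2 ^ (n + 1) := one_lt_pow₀ (by norm_num) (by omega)
  nlinarith [arT_pos t]

lemma spine_parT {t : ℤ × ℤ} (h : Spine t) : Spine (parT t) := by
  obtain ⟨i, j⟩ := t
  unfold Spine parT at *
  simp only at h
  split_ifs with h1 <;> simp only at h1 ⊢ <;> omega

/-- If both exponents of `t` are at most `M`, then each type on its chain of ancestors has exponents
at most `M` or is a spine type. -/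
lemma chain_types (M : ℤ) (n : ℕ) (t : ℤ × ℤ) (h : Spine t ∨ (t.1 ≤ M ∧ t.2 ≤ M)) :
    Spine (parT^[n] t) ∨ ((parT^[n] t).1 ≤ M ∧ (parT^[n] t).2 ≤ M) := by
  induction n generalizing t with
  | zero => simpa using h
  | succ n ih =>
    rw [Function.iterate_succ_apply]
    apply ih
    rcases h with h | h
    · exact Or.inl (spine_parT h)
    · obtain ⟨i, j⟩ := t
      unfold Spine parT
      simp only at h
      split_ifs with h1 <;> simp only at h1 ⊢ <;> omega

/-- The chain of ancestors of `t` passes through every spine type whose width is at least both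
sides of `t`. -/
lemma chain_reaches (s : ℤ × ℤ) (hs : Spine s) (t : ℤ × ℤ) (h : t.1 ≤ s.1 ∧ t.2 ≤ s.1) :
    ∃ n, parT^[n] t = s := by
  obtain ⟨d, hd⟩ : ∃ d : ℕ, s.1 + s.2 - (t.1 + t.2) ≤ d := ⟨_, Int.self_le_toNat _⟩
  induction d generalizing t with
  | zero =>
    refine ⟨0, ?_⟩
    obtain ⟨i, j⟩ := t
    obtain ⟨k, l⟩ := s
    unfold Spine at hs
    simp only at *
    simp only [Function.iterate_zero, id, Prod.mk.injEq]
    omega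
  | succ d ih =>
    by_cases h1 : s = parT t
    · exact ⟨1, h1.symm⟩
    by_cases h2 : s = t
    · exact ⟨0, h2.symm⟩
    have : ∃ n, parT^[n] (parT t) = s := by
      apply ih
      all_goals
        obtain ⟨i, j⟩ := t
        obtain ⟨k, l⟩ := s
        unfold Spine at hs
        unfold parT at *
        simp only [Prod.mk.injEq] at *
        split_ifs at * with h3 <;> simp only [Prod.mk.injEq] at * <;> omega
    obtain ⟨n, hn⟩ := this
    exact ⟨n + 1, by rw [Function.iterate_succ_apply, hn]⟩

lemma sum_zpow_le (I : Finset ℤ) : ∀ M : ℤ, (∀ i ∈ I, i ≤ M) →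
    ∑ i ∈ I, (2 : ℝ) ^ i ≤ 2 * 2 ^ M := by
  induction I using Finset.induction_on_max with
  | empty => intro M _; simp; positivity
  | insert a s ha ih =>
    intro M hM
    have hna : a ∉ s := fun h => lt_irrefl _ (ha a h)
    rw [Finset.sum_insert hna]
    have h1 := ih (a - 1) (fun i hi => by have := ha i hi; omega)
    have h2 : (2 : ℝ) ^ a = 2 * 2 ^ (a - 1) := by rw [← two_zpow_succ]; simp
    have h3 : (2 : ℝ) ^ a ≤ 2 ^ M :=
      zpow_le_zpow_right₀ (by norm_num) (hM a (Finset.mem_insert_self _ _))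
    linarith

/-- Distinct dyadic types of width at most `2 ^ M` and height at most `2 ^ N` have total area at
most `4 * 2 ^ M * 2 ^ N`: the sum is dominated by a product of two geometric series. -/
lemma sum_arT_le (F : Finset (ℤ × ℤ)) (M N : ℤ) (h : ∀ t ∈ F, t.1 ≤ M ∧ t.2 ≤ N) :
    ∑ t ∈ F, arT t ≤ 4 * (2 ^ M * 2 ^ N) := by
  have h1 : F ⊆ F.image Prod.fst ×ˢ F.image Prod.snd := Finset.subset_product
  have h2 : ∑ t ∈ F, arT t ≤ ∑ t ∈ F.image Prod.fst ×ˢ F.image Prod.snd, arT t :=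
    Finset.sum_le_sum_of_subset_of_nonneg h1 (fun t _ _ => (arT_pos t).le)
  have h3 : ∑ t ∈ F.image Prod.fst ×ˢ F.image Prod.snd, arT t
      = (∑ i ∈ F.image Prod.fst, (2 : ℝ) ^ i) * ∑ j ∈ F.image Prod.snd, (2 : ℝ) ^ j := by
    rw [Finset.sum_mul_sum, Finset.sum_product]; rfl
  have h4 := sum_zpow_le (F.image Prod.fst) M (by
    intro i hi; obtain ⟨t, ht, rfl⟩ := Finset.mem_image.1 hi; exact (h t ht).1)
  have h5 := sum_zpow_le (F.image Prod.snd) N (by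
    intro i hi; obtain ⟨t, ht, rfl⟩ := Finset.mem_image.1 hi; exact (h t ht).2)
  have h6 : (0 : ℝ) ≤ ∑ j ∈ F.image Prod.snd, (2 : ℝ) ^ j :=
    Finset.sum_nonneg (fun j _ => (two_zpow_pos j).le)
  rw [h3] at h2
  have := mul_le_mul h4 h5 h6 (by positivity)
  linarith

/-! ### Cells and the geometric invariant -/

/-- A cell: a rectangle of type `t` with lower left corner `v`, of which the part to the left of
or below the point `v + o` has been given up to items nested along the diagonal. -/
structure Cell where
  t : ℤ × ℤ
  v : ℝ × ℝ
  o : ℝ × ℝ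

namespace Cell

/-- The open rectangle of the cell `c` that is still at disposal. -/
def reg (c : Cell) : Set (ℝ × ℝ) :=
  Set.Ioo (c.v.1 + c.o.1) (c.v.1 + (2 : ℝ) ^ c.t.1) ×ˢ
    Set.Ioo (c.v.2 + c.o.2) (c.v.2 + (2 : ℝ) ^ c.t.2)

/-- The cell `c` lies in the region of type `r` anchored at the origin, and its offset is
nonnegative. -/
structure Inside (r : ℤ × ℤ) (c : Cell) : Prop where
  v1 : 0 ≤ c.v.1
  v2 : 0 ≤ c.v.2
  o1 : 0 ≤ c.o.1
  o2 : 0 ≤ c.o.2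
  s1 : c.v.1 + (2 : ℝ) ^ c.t.1 ≤ (2 : ℝ) ^ r.1
  s2 : c.v.2 + (2 : ℝ) ^ c.t.2 ≤ (2 : ℝ) ^ r.2

end Cell

/-- The point set of a placed item, that is, of an L-shape with its translation vector. -/
def itm (q : LShape × (ℝ × ℝ)) : Set (ℝ × ℝ) := planeTranslate q.2 q.1.toSet

/-- The closed region of type `r` anchored at the origin. -/
def boxT (r : ℤ × ℤ) : Set (ℝ × ℝ) := Set.Icc 0 ((2 : ℝ) ^ r.1) ×ˢ Set.Icc 0 ((2 : ℝ) ^ r.2)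

/-- The geometric invariant for the region of type `r`, the placed items `P` and the list `C` of
cells at disposal.  Items with empty interior sit at the origin and need not lie in the region. -/
structure Geo (r : ℤ × ℤ) (P : List (LShape × (ℝ × ℝ))) (C : List Cell) : Prop where
  inside : ∀ c ∈ C, c.Inside r
  cells : C.Pairwise (fun c d => Disjoint c.reg d.reg)
  avoid : ∀ c ∈ C, ∀ q ∈ P, Disjoint (interior (itm q)) c.reg
  items : P.Pairwise (fun p q => Disjoint (interior (itm p)) (interior (itm q)))
  box : ∀ q ∈ P, (q.2 = 0 ∧ interior (itm q) = ∅) ∨ itm q ⊆ boxT r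

lemma Geo.perm {r P C C'} (h : Geo r P C) (hp : C.Perm C') : Geo r P C' where
  inside c hc := h.inside c (hp.mem_iff.2 hc)
  cells := (hp.pairwise_iff (fun h => h.symm)).1 h.cells
  avoid c hc := h.avoid c (hp.mem_iff.2 hc)
  items := h.items
  box := h.box

lemma Geo.tail {r P c C} (h : Geo r P (c :: C)) : Geo r P C where
  inside d hd := h.inside d (List.mem_cons_of_mem _ hd)
  cells := (List.pairwise_cons.1 h.cells).2
  avoid d hd := h.avoid d (List.mem_cons_of_mem _ hd)
  items := h.items
  box := h.box

/-- A fresh cell may be replaced by its two halves. -/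
lemma Geo.split {r P c C t} (h : Geo r P (c :: C)) (ho : c.o = 0) (ht : c.t = parT t) :
    Geo r P (⟨t, c.v, 0⟩ :: ⟨t, c.v + shT t, 0⟩ :: C) := by
  obtain ⟨s, v, o⟩ := c
  obtain ⟨i, j⟩ := t
  obtain ⟨x, y⟩ := v
  simp only at ho ht
  subst ho ht
  have hi := h.inside _ List.mem_cons_self
  have p1 := two_zpow_pos i
  have p2 := two_zpow_pos j
  have sub1 : Cell.reg ⟨(i, j), (x, y), 0⟩ ⊆ Cell.reg ⟨parT (i, j), (x, y), 0⟩ := by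
    rintro ⟨a, b⟩ hab
    simp only [Cell.reg, Set.mem_prod, Set.mem_Ioo, parT] at hab ⊢
    split_ifs <;> simp only [two_zpow_succ] at * <;> simp at * <;> refine ⟨⟨?_, ?_⟩, ⟨?_, ?_⟩⟩ <;>
      linarith
  have sub2 : Cell.reg ⟨(i, j), (x, y) + shT (i, j), 0⟩ ⊆ Cell.reg ⟨parT (i, j), (x, y), 0⟩ := by
    rintro ⟨a, b⟩ hab
    simp only [Cell.reg, Set.mem_prod, Set.mem_Ioo, parT, shT] at hab ⊢
    split_ifs at * <;> simp only [two_zpow_succ] at * <;> simp at * <;>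
      refine ⟨⟨?_, ?_⟩, ⟨?_, ?_⟩⟩ <;> linarith
  have disj : Disjoint (Cell.reg ⟨(i, j), (x, y), 0⟩)
      (Cell.reg ⟨(i, j), (x, y) + shT (i, j), 0⟩) := by
    rw [Set.disjoint_left]
    rintro ⟨a, b⟩ hab hab'
    simp only [Cell.reg, Set.mem_prod, Set.mem_Ioo, shT] at hab hab'
    split_ifs at * <;> simp at * <;> linarith
  have hc := List.pairwise_cons.1 h.cells
  constructor
  · intro d hd
    simp only [List.mem_cons] at hd
    obtain ⟨v1, v2, o1, o2, s1, s2⟩ := hi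
    rcases hd with rfl | rfl | hd
    · unfold parT at s1 s2
      split_ifs at s1 s2 <;> simp only [two_zpow_succ] at s1 s2 <;>
        constructor <;> simp at * <;> linarith
    · unfold parT at s1 s2
      constructor <;> unfold shT <;> split_ifs at * <;> simp only [two_zpow_succ] at s1 s2 <;>
        simp at * <;> linarith
    · exact h.inside d (List.mem_cons_of_mem _ hd)
  · refine List.pairwise_cons.2 ⟨?_, List.pairwise_cons.2 ⟨?_, hc.2⟩⟩
    · intro d hd
      rcases List.mem_cons.1 hd with rfl | hd
      · exact disj
      · exact (hc.1 d hd).mono_left sub1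
    · intro d hd
      exact (hc.1 d hd).mono_left sub2
  · intro d hd q hq
    have h0 := h.avoid _ List.mem_cons_self q hq
    simp only [List.mem_cons] at hd
    rcases hd with rfl | rfl | hd
    · exact h0.mono_right sub1
    · exact h0.mono_right sub2
    · exact h.avoid d (List.mem_cons_of_mem _ hd) q hq
  · exact h.items
  · exact h.box

/-- Doubling the region creates a fresh cell congruent to the old region. -/
lemma Geo.grow {r P C} (h : Geo r P C) : Geo (parT r) P (⟨r, shT r, 0⟩ :: C) := by
  obtain ⟨i, j⟩ := r
  have p1 := two_zpow_pos i
  have p2 := two_zpow_pos j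
  have out : ∀ S ⊆ boxT (i, j), Disjoint S (Cell.reg ⟨(i, j), shT (i, j), 0⟩) := by
    intro S hS
    rw [Set.disjoint_left]
    rintro ⟨a, b⟩ hab hab'
    have := hS hab
    simp only [boxT, Cell.reg, Set.mem_prod, Set.mem_Ioo, Set.mem_Icc, shT] at this hab'
    split_ifs at * <;> simp at * <;> linarith
  constructor
  · intro d hd
    rcases List.mem_cons.1 hd with rfl | hd
    · constructor <;> unfold shT <;> try unfold parT
      all_goals split_ifs <;> (try simp only [two_zpow_succ]) <;> (try simp) <;> (try linarith)
    · obtain ⟨v1, v2, o1, o2, s1, s2⟩ := h.inside d hd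
      constructor <;> try assumption
      all_goals
        unfold parT
        split_ifs <;> (try simp only [two_zpow_succ]) <;> (try simp only at *) <;> linarith
  · refine List.pairwise_cons.2 ⟨fun d hd => ?_, h.cells⟩
    refine (out _ ?_).symm
    obtain ⟨v1, v2, o1, o2, s1, s2⟩ := h.inside d hd
    rintro ⟨a, b⟩ hab
    simp only [boxT, Cell.reg, Set.mem_prod, Set.mem_Ioo, Set.mem_Icc] at hab ⊢
    refine ⟨⟨?_, ?_⟩, ⟨?_, ?_⟩⟩ <;> linarith
  · intro d hd q hq
    rcases List.mem_cons.1 hd with rfl | hd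
    · rcases h.box q hq with ⟨_, hq⟩ | hq
      · rw [hq]; exact Set.empty_disjoint _
      · exact out _ (interior_subset.trans hq)
    · exact h.avoid d hd q hq
  · exact h.items
  · intro q hq
    refine (h.box q hq).imp_right (fun h => h.trans ?_)
    rintro ⟨a, b⟩ hab
    simp only [boxT, Set.mem_prod, Set.mem_Icc, parT] at hab ⊢
    split_ifs <;> simp only [two_zpow_succ] <;> refine ⟨⟨?_, ?_⟩, ⟨?_, ?_⟩⟩ <;> linarith

lemma mem_itm {q : LShape × (ℝ × ℝ)} {z : ℝ × ℝ} (h : z ∈ itm q) :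
    ((q.2.1 ≤ z.1 ∧ z.1 ≤ q.2.1 + q.1.lx) ∧ (q.2.2 ≤ z.2 ∧ z.2 ≤ q.2.2 + q.1.wy)) ∨
    ((q.2.1 ≤ z.1 ∧ z.1 ≤ q.2.1 + q.1.wx) ∧ (q.2.2 ≤ z.2 ∧ z.2 ≤ q.2.2 + q.1.ly)) := by
  obtain ⟨y, hy, rfl⟩ := h
  rcases hy with hy | hy
  · left
    simp only [Set.mem_Icc, Prod.le_def] at hy
    simp only [Prod.fst_add, Prod.snd_add]
    refine ⟨⟨?_, ?_⟩, ⟨?_, ?_⟩⟩ <;> linarith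
  · right
    simp only [Set.mem_Icc, Prod.le_def] at hy
    simp only [Prod.fst_add, Prod.snd_add]
    refine ⟨⟨?_, ?_⟩, ⟨?_, ?_⟩⟩ <;> linarith

lemma itm_subset {q : LShape × (ℝ × ℝ)} (hv : q.1.IsValid) :
    itm q ⊆ Set.Icc q.2.1 (q.2.1 + q.1.lx) ×ˢ Set.Icc q.2.2 (q.2.2 + q.1.ly) := by
  intro z hz
  obtain ⟨h1, h2, h3, h4, h5, h6⟩ := hv
  rcases mem_itm hz with h | h <;> simp only [Set.mem_prod, Set.mem_Icc] <;>
    refine ⟨⟨?_, ?_⟩, ⟨?_, ?_⟩⟩ <;> linarith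

lemma interior_itm {q : LShape × (ℝ × ℝ)} (hv : q.1.IsValid) :
    interior (itm q) ⊆ Set.Ioo q.2.1 (q.2.1 + q.1.lx) ×ˢ Set.Ioo q.2.2 (q.2.2 + q.1.ly) := by
  refine (interior_mono (itm_subset hv)).trans ?_
  rw [interior_prod_eq, interior_Icc, interior_Icc]

/-- The cell `c` after `L` has been placed at its current offset: the offset moves by the widths
of `L`. -/
def Cell.shrink (c : Cell) (L : LShape) : Cell := ⟨c.t, c.v, c.o + (L.wx, L.wy)⟩

/-- An L-shape placed at the offset of a cell has its interior inside the rectangle at disposal and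
is disjoint from what remains after the offset has moved. -/
lemma Geo.place {r P c C} {L : LShape} (h : Geo r P (c :: C)) (hv : L.IsValid)
    (h1 : c.o.1 + L.lx ≤ (2 : ℝ) ^ c.t.1) (h2 : c.o.2 + L.ly ≤ (2 : ℝ) ^ c.t.2) :
    Geo r ((L, c.v + c.o) :: P) (c.shrink L :: C) := by
  have hint : interior (itm (L, c.v + c.o)) ⊆ c.reg := by
    intro z hz
    have := interior_itm (q := (L, c.v + c.o)) hv hz
    simp only [Cell.reg, Set.mem_prod, Set.mem_Ioo, Prod.fst_add, Prod.snd_add] at this ⊢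
    refine ⟨⟨?_, ?_⟩, ⟨?_, ?_⟩⟩ <;> linarith
  have hsub := itm_subset (q := (L, c.v + c.o)) hv
  have hc := List.pairwise_cons.1 h.cells
  obtain ⟨v1, v2, o1, o2, s1, s2⟩ := h.inside _ List.mem_cons_self
  obtain ⟨w1, w2, w3, w4, w5, w6⟩ := hv
  have shr : (c.shrink L).reg ⊆ c.reg := by
    intro z hz
    simp only [Cell.reg, Cell.shrink, Set.mem_prod, Set.mem_Ioo, Prod.fst_add, Prod.snd_add] at hz ⊢
    refine ⟨⟨?_, ?_⟩, ⟨?_, ?_⟩⟩ <;> linarith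
  constructor
  · intro d hd
    rcases List.mem_cons.1 hd with rfl | hd
    · constructor <;> simp only [Cell.shrink, Prod.fst_add, Prod.snd_add] <;> linarith
    · exact h.inside d (List.mem_cons_of_mem _ hd)
  · exact List.pairwise_cons.2 ⟨fun d hd => (hc.1 d hd).mono_left shr, hc.2⟩
  · intro d hd q hq
    rcases List.mem_cons.1 hd with rfl | hd
    · rcases List.mem_cons.1 hq with rfl | hq
      · refine Disjoint.mono_left interior_subset ?_
        rw [Set.disjoint_left]
        intro z hz hz'
        simp only [Cell.reg, Cell.shrink, Set.mem_prod, Set.mem_Ioo, Prod.fst_add,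
          Prod.snd_add] at hz'
        rcases mem_itm hz with h | h <;> simp only [Prod.fst_add, Prod.snd_add] at h <;> linarith
      · exact (h.avoid _ List.mem_cons_self q hq).mono_right shr
    · rcases List.mem_cons.1 hq with rfl | hq
      · exact (hc.1 d hd).mono_left hint
      · exact h.avoid d (List.mem_cons_of_mem _ hd) q hq
  · exact List.pairwise_cons.2 ⟨fun q hq =>
      ((h.avoid _ List.mem_cons_self q hq).mono_right hint).symm, h.items⟩
  · intro q hq
    rcases List.mem_cons.1 hq with rfl | hq
    · right
      intro z hz
      have := hsub hz
      simp only [boxT, Set.mem_prod, Set.mem_Icc, Prod.fst_add, Prod.snd_add] at this ⊢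
      refine ⟨⟨?_, ?_⟩, ⟨?_, ?_⟩⟩ <;> linarith
    · exact h.box q hq

/-- An item with empty interior may be placed at the origin regardless of all other items. -/
lemma Geo.degenerate {r P C} {L : LShape} (h : Geo r P C) (he : interior (itm (L, 0)) = ∅) :
    Geo r ((L, 0) :: P) C where
  inside := h.inside
  cells := h.cells
  avoid c hc q hq := by
    rcases List.mem_cons.1 hq with rfl | hq
    · rw [he]; exact Set.empty_disjoint _
    · exact h.avoid c hc q hq
  items := List.pairwise_cons.2 ⟨fun q _ => by rw [he]; exact Set.empty_disjoint _, h.items⟩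
  box q hq := by
    rcases List.mem_cons.1 hq with rfl | hq
    · exact Or.inl ⟨rfl, he⟩
    · exact h.box q hq

open Classical in
lemma mem_perm {α : Type*} {c : α} {C : List α} (h : c ∈ C) : ∃ C', C.Perm (c :: C') :=
  ⟨_, List.perm_cons_erase h⟩

/-! ### The buddy system -/

/-- The total area of a list of cells. -/
noncomputable def sumAr (C : List Cell) : ℝ := (C.map (fun c => arT c.t)).sum

lemma sumAr_cons (c : Cell) (C : List Cell) : sumAr (c :: C) = arT c.t + sumAr C := by simp [sumAr]

lemma sumAr_perm {C C' : List Cell} (h : C.Perm C') : sumAr C = sumAr C' :=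
  (h.map _).sum_eq

lemma sumAr_nonneg (C : List Cell) : 0 ≤ sumAr C :=
  List.sum_nonneg (by simp only [List.mem_map]; rintro x ⟨c, _, rfl⟩; exact (arT_pos _).le)

/-- A list of free cells: all are fresh, and no two have the same type. -/
structure FreeList (Fr : List Cell) : Prop where
  nodup : (Fr.map Cell.t).Nodup
  zero : ∀ c ∈ Fr, c.o = 0

lemma request_here {r P X} {t : ℤ × ℤ} {Fr : List Cell} (hg : Geo r P (Fr ++ X)) (hf : FreeList Fr)
    (hc : ∃ c ∈ Fr, c.t = t) :
    ∃ h Fr', h.t = t ∧ h.o = 0 ∧ Geo r P (h :: (Fr' ++ X)) ∧ FreeList Fr' ∧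
      sumAr Fr = arT t + sumAr Fr' ∧ ∀ c ∈ Fr', c ∈ Fr := by
  obtain ⟨c, hc, rfl⟩ := hc
  obtain ⟨Fr', hp⟩ := mem_perm hc
  have hn := (hp.map Cell.t).nodup_iff.1 hf.nodup
  refine ⟨c, Fr', rfl, hf.zero c hc, hg.perm (hp.append_right X), ⟨?_, ?_⟩, ?_, ?_⟩
  · simp only [List.map_cons, List.nodup_cons] at hn
    exact hn.2
  · exact fun d hd => hf.zero d (hp.mem_iff.2 (List.mem_cons_of_mem _ hd))
  · rw [sumAr_perm hp, sumAr_cons]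
  · exact fun d hd => hp.mem_iff.2 (List.mem_cons_of_mem _ hd)

/-- If the list contains a free cell of some ancestor type of `t`, a fresh cell of type `t` can be
extracted by splitting the first free ancestor repeatedly.  Free cells of equal type do not arise,
since a cell is split only when the types below it on the chain have no free cell; new free cells
have types on the chain of `t`. -/
lemma request {r P X} (n : ℕ) : ∀ (t : ℤ × ℤ) (Fr : List Cell), Geo r P (Fr ++ X) → FreeList Fr →
    (∃ c ∈ Fr, c.t = parT^[n] t) →
    ∃ h Fr', h.t = t ∧ h.o = 0 ∧ Geo r P (h :: (Fr' ++ X)) ∧ FreeList Fr' ∧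
      sumAr Fr = arT t + sumAr Fr' ∧ ∀ c ∈ Fr', c ∈ Fr ∨ ∃ k, c.t = parT^[k] t := by
  induction n with
  | zero =>
    intro t Fr hg hf hc
    obtain ⟨h, Fr', h1, h2, h3, h4, h5, h6⟩ := request_here hg hf hc
    exact ⟨h, Fr', h1, h2, h3, h4, h5, fun c hc => Or.inl (h6 c hc)⟩
  | succ n ih =>
    intro t Fr hg hf hc
    by_cases ht : ∃ c ∈ Fr, c.t = t
    · obtain ⟨h, Fr', h1, h2, h3, h4, h5, h6⟩ := request_here hg hf ht
      exact ⟨h, Fr', h1, h2, h3, h4, h5, fun c hc => Or.inl (h6 c hc)⟩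
    · obtain ⟨h, Fr', h1, h2, h3, h4, h5, h6⟩ := ih (parT t) Fr hg hf (by simpa using hc)
      refine ⟨⟨t, h.v, 0⟩, ⟨t, h.v + shT t, 0⟩ :: Fr', rfl, rfl, h3.split h2 h1, ⟨?_, ?_⟩, ?_, ?_⟩
      · simp only [List.map_cons, List.nodup_cons]
        refine ⟨?_, h4.nodup⟩
        intro hm
        obtain ⟨c, hc, hct⟩ := List.mem_map.1 hm
        rcases h6 c hc with h7 | ⟨k, hk⟩
        · exact ht ⟨c, h7, hct⟩
        · rw [hct, ← Function.iterate_succ_apply] at hk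
          exact iterate_succ_ne k t hk.symm
      · intro c hc
        rcases List.mem_cons.1 hc with rfl | hc
        · rfl
        · exact h4.zero c hc
      · rw [h5, sumAr_cons, arT_parT]; ring
      · intro c hc
        rcases List.mem_cons.1 hc with rfl | hc
        · exact Or.inr ⟨0, rfl⟩
        · rcases h6 c hc with h7 | ⟨k, hk⟩
          · exact Or.inl h7
          · exact Or.inr ⟨k + 1, by rw [hk, Function.iterate_succ_apply]⟩

/-! ### Lower bound data and the types of items -/

/-- A lower bound for the area of an L-shape: the area of the larger of its two arms. -/
noncomputable def aw (L : LShape) : ℝ := max (L.wx * L.ly) (L.wy * L.lx)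

/-- The properties of the size `w × h` of a rectangle containing a packing of the items `Q` on
which the analysis relies. -/
structure LB (Q : List LShape) (w h : ℝ) : Prop where
  arms : ∀ L ∈ Q, L.lx ≤ w ∧ L.ly ≤ h
  area : (Q.map aw).sum ≤ w * h

lemma LShape.IsValid.aw_nonneg {L : LShape} (h : L.IsValid) : 0 ≤ aw L :=
  le_max_of_le_left (mul_nonneg h.1 (h.2.2.2.1.trans h.2.2.2.2.1))

lemma LB.tail {L : LShape} {Q : List LShape} {w h : ℝ} (hv : L.IsValid) (hl : LB (L :: Q) w h) :
    LB Q w h where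
  arms M hM := hl.arms M (List.mem_cons_of_mem _ hM)
  area := by
    have := hl.area
    simp only [List.map_cons, List.sum_cons] at this
    linarith [hv.aw_nonneg]

/-- The L-shape `L` is assigned to cells of type `t`: each arm length is more than `2 / 5` and at
most `4 / 5` of the corresponding side, so that `L` fits at any offset below `1 / 5` of the sides. -/
structure HasType (L : LShape) (t : ℤ × ℤ) : Prop where
  x1 : 2 / 5 * (2 : ℝ) ^ t.1 < L.lx
  x2 : L.lx ≤ 4 / 5 * (2 : ℝ) ^ t.1
  y1 : 2 / 5 * (2 : ℝ) ^ t.2 < L.ly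
  y2 : L.ly ≤ 4 / 5 * (2 : ℝ) ^ t.2

lemma exists_hasType {L : LShape} (hx : 0 < L.lx) (hy : 0 < L.ly) : ∃ t, HasType L t := by
  obtain ⟨i, hi⟩ := exists_mem_Ioc_zpow (x := 5 / 4 * L.lx) (by positivity) (one_lt_two)
  obtain ⟨j, hj⟩ := exists_mem_Ioc_zpow (x := 5 / 4 * L.ly) (by positivity) (one_lt_two)
  rw [Set.mem_Ioc, two_zpow_succ] at hi hj
  refine ⟨(i + 1, j + 1), ?_, ?_, ?_, ?_⟩ <;> simp only [two_zpow_succ] <;> linarith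

/-- The guaranteed total `aw` of the items in a cell, as a function of its offset: the widths of
the items in it add up to the offset, and their arms exceed `2 / 5` of the sides. -/
noncomputable def Cell.val (c : Cell) : ℝ :=
  max (c.o.1 * (2 / 5 * (2 : ℝ) ^ c.t.2)) (c.o.2 * (2 / 5 * (2 : ℝ) ^ c.t.1))

lemma Cell.val_nonneg {r : ℤ × ℤ} {c : Cell} (h : c.Inside r) : 0 ≤ c.val :=
  le_max_of_le_left (mul_nonneg h.o1 (by positivity))

lemma Cell.val_shrink {c : Cell} {L : LShape} (hv : L.IsValid) (ht : HasType L c.t) :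
    (c.shrink L).val ≤ c.val + aw L := by
  have h1 : L.wx * (2 / 5 * (2 : ℝ) ^ c.t.2) ≤ aw L :=
    le_max_of_le_left (mul_le_mul_of_nonneg_left ht.y1.le hv.1)
  have h2 : L.wy * (2 / 5 * (2 : ℝ) ^ c.t.1) ≤ aw L :=
    le_max_of_le_right (mul_le_mul_of_nonneg_left ht.x1.le hv.2.2.2.1)
  have h3 : c.o.1 * (2 / 5 * (2 : ℝ) ^ c.t.2) ≤ c.val := le_max_left _ _
  have h4 : c.o.2 * (2 / 5 * (2 : ℝ) ^ c.t.1) ≤ c.val := le_max_right _ _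
  unfold Cell.val Cell.shrink at *
  simp only [Prod.fst_add, Prod.snd_add, add_mul]
  exact max_le (by linarith) (by linarith)

/-! ### The state of the algorithm -/

/-- The state of the algorithm: `Q` lists the items that have arrived, `P` the placed ones, `r` is
the type of the region, `Fr` are the free cells and `Op` the cells in use, at most one per type.
Full cells are not recorded; they are accounted for in `area`, where `25 / 2` is the ratio between
the area of a full cell and the `aw` it is guaranteed to contain.  Free cells have spine types or
sides bounded in terms of any `LB Q w h`, and `bound` is the competitive estimate. -/
structure St (Q : List LShape) (P : List (LShape × (ℝ × ℝ))) (r : ℤ × ℤ) (Fr Op : List Cell) :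
    Prop where
  geo : Geo r P (Fr ++ Op)
  spine : Spine r
  free : FreeList Fr
  opn : (Op.map Cell.t).Nodup
  area : arT r ≤ sumAr Fr + sumAr Op +
    25 / 2 * ((P.map (fun q => aw q.1)).sum - (Op.map Cell.val).sum)
  asum : (P.map (fun q => aw q.1)).sum ≤ (Q.map aw).sum
  ftype : ∀ c ∈ Fr, Spine c.t ∨ ∀ w h, LB Q w h →
    (2 : ℝ) ^ c.t.1 ≤ 5 / 2 * (w + h) ∧ (2 : ℝ) ^ c.t.2 ≤ 5 / 2 * (w + h)
  otype : ∀ c ∈ Op, ∀ w h, LB Q w h →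
    (2 : ℝ) ^ c.t.1 ≤ 5 / 2 * w ∧ (2 : ℝ) ^ c.t.2 ≤ 5 / 2 * h
  bound : ∀ w h, LB Q w h → (2 : ℝ) ^ r.1 + (2 : ℝ) ^ r.2 ≤ 16 * (w + h)

lemma St.perm {Q P r Fr Op Op'} (h : St Q P r Fr Op) (hp : Op.Perm Op') : St Q P r Fr Op' where
  geo := h.geo.perm (hp.append_left Fr)
  spine := h.spine
  free := h.free
  opn := (hp.map Cell.t).nodup_iff.1 h.opn
  area := by rw [← sumAr_perm hp, ← (hp.map Cell.val).sum_eq]; exact h.area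
  asum := h.asum
  ftype := h.ftype
  otype c hc := h.otype c (hp.mem_iff.2 hc)
  bound := h.bound

/-- The new item counts for the lower bound before it is placed. -/
lemma St.arrive {Q P r Fr Op} {L : LShape} (h : St Q P r Fr Op) (hv : L.IsValid) :
    St (L :: Q) P r Fr Op where
  geo := h.geo
  spine := h.spine
  free := h.free
  opn := h.opn
  area := h.area
  asum := by
    have := h.asum
    simp only [List.map_cons, List.sum_cons]
    linarith [hv.aw_nonneg]
  ftype c hc := (h.ftype c hc).imp_right (fun H w h hl => H w h (hl.tail hv))
  otype c hc w h' hl := h.otype c hc w h' (hl.tail hv)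
  bound w h' hl := h.bound w h' (hl.tail hv)

lemma St.degenerate {Q P r Fr Op} {L : LShape} (h : St Q P r Fr Op) (hv : L.IsValid)
    (he : interior (itm (L, 0)) = ∅) : St (L :: Q) ((L, 0) :: P) r Fr Op where
  geo := h.geo.degenerate he
  spine := h.spine
  free := h.free
  opn := h.opn
  area := by
    have := h.area
    simp only [List.map_cons, List.sum_cons]
    linarith [hv.aw_nonneg]
  asum := by
    have := h.asum
    simp only [List.map_cons, List.sum_cons]
    linarith
  ftype := (h.arrive hv).ftype
  otype := (h.arrive hv).otype
  bound := (h.arrive hv).bound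

/-- A cell whose offset has reached `1 / 5` of a side contains items with total `aw` at least
`1 / 5 * 2 / 5 = 2 / 25` of its area, so it can be dropped from the list of open cells. -/
lemma St.close {Q P r Fr c Op} (h : St Q P r Fr (c :: Op))
    (hc : (2 : ℝ) ^ c.t.1 / 5 ≤ c.o.1 ∨ (2 : ℝ) ^ c.t.2 / 5 ≤ c.o.2) : St Q P r Fr Op where
  geo := (h.geo.perm List.perm_middle).tail
  spine := h.spine
  free := h.free
  opn := (List.nodup_cons.1 h.opn).2
  area := by
    have h1 := h.area
    simp only [List.map_cons, List.sum_cons, sumAr_cons] at h1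
    have p1 := two_zpow_pos c.t.1
    have p2 := two_zpow_pos c.t.2
    have h2 : arT c.t ≤ 25 / 2 * c.val := by
      unfold arT
      rcases hc with hc | hc
      · have h3 : c.o.1 * (2 / 5 * (2 : ℝ) ^ c.t.2) ≤ c.val := le_max_left _ _
        nlinarith
      · have h3 : c.o.2 * (2 / 5 * (2 : ℝ) ^ c.t.1) ≤ c.val := le_max_right _ _
        nlinarith
    linarith
  asum := h.asum
  ftype := h.ftype
  otype d hd := h.otype d (List.mem_cons_of_mem _ hd)
  bound := h.bound

lemma St.place {Q P r Fr c Op} {L : LShape} (h : St (L :: Q) P r Fr (c :: Op)) (hv : L.IsValid)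
    (ht : HasType L c.t) (h1 : c.o.1 < (2 : ℝ) ^ c.t.1 / 5) (h2 : c.o.2 < (2 : ℝ) ^ c.t.2 / 5)
    (hQ : Q = P.map Prod.fst) :
    St (L :: Q) ((L, c.v + c.o) :: P) r Fr (c.shrink L :: Op) where
  geo := by
    have := (h.geo.perm List.perm_middle).place hv (by linarith [ht.x2]) (by linarith [ht.y2])
    exact this.perm List.perm_middle.symm
  spine := h.spine
  free := h.free
  opn := h.opn
  area := by
    have h3 := h.area
    have h4 := Cell.val_shrink hv ht
    simp only [List.map_cons, List.sum_cons, sumAr_cons] at h3 ⊢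
    have : (c.shrink L).t = c.t := rfl
    rw [this]
    linarith
  asum := by
    subst hQ
    simp [Function.comp_def]
  ftype := h.ftype
  otype d hd := by
    rcases List.mem_cons.1 hd with rfl | hd
    · exact h.otype c List.mem_cons_self
    · exact h.otype d (List.mem_cons_of_mem _ hd)
  bound := h.bound

/-! ### Growth of the region -/

lemma sumAr_le {C : List Cell} (hn : (C.map Cell.t).Nodup) (M N : ℤ)
    (h : ∀ c ∈ C, c.t.1 ≤ M ∧ c.t.2 ≤ N) : sumAr C ≤ 4 * (2 ^ M * 2 ^ N) := by
  have h1 : sumAr C = ∑ t ∈ (C.map Cell.t).toFinset, arT t := by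
    rw [List.sum_toFinset _ hn, List.map_map]; rfl
  rw [h1]
  apply sum_arT_le
  intro t ht
  obtain ⟨c, hc, rfl⟩ := List.mem_map.1 (List.mem_toFinset.1 ht)
  exact h c hc

lemma exists_top {B : ℝ} (hB : 0 < B) :
    ∃ M : ℤ, (2 : ℝ) ^ M ≤ B ∧ ∀ i : ℤ, (2 : ℝ) ^ i ≤ B → i ≤ M := by
  obtain ⟨M, hM⟩ := exists_mem_Ico_zpow hB (one_lt_two)
  refine ⟨M, hM.1, fun i hi => ?_⟩
  have := (zpow_lt_zpow_iff_right₀ (one_lt_two (α := ℝ))).1 (hi.trans_lt hM.2)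
  omega

/-- If the region of spine type `r` is doubled, the square of its new half-perimeter is at most nine
times its old area. -/
lemma parT_perim {r : ℤ × ℤ} (h : Spine r) :
    ((2 : ℝ) ^ (parT r).1 + (2 : ℝ) ^ (parT r).2) ^ 2 ≤ 9 * arT r := by
  obtain ⟨i, j⟩ := r
  unfold Spine at h
  unfold parT arT
  have p := two_zpow_pos i
  simp only at h
  rcases h with rfl | rfl
  · simp [two_zpow_succ]; nlinarith
  · simp [two_zpow_succ]; nlinarith

/-- The competitive estimate at the moment of a growth.  No ancestor type of `τ` has a free cell, so
by `chain_reaches` the free cells are small; the open cells have distinct types bounded by the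
sides of the box; the full cells are paid for by the items in them.  Hence the area of the region is bounded. -/
lemma St.grow_bound {Q P r Fr Op} {L : LShape} {τ : ℤ × ℤ} (h : St Q P r Fr Op) (hL : L ∈ Q)
    (ht : HasType L τ) (hno : ¬ ∃ c ∈ Fr, ∃ n, c.t = parT^[n] τ) (w h' : ℝ) (hl : LB Q w h') :
    (2 : ℝ) ^ (parT r).1 + (2 : ℝ) ^ (parT r).2 ≤ 16 * (w + h') := by
  have p1 := two_zpow_pos τ.1
  have p2 := two_zpow_pos τ.2
  have ha := hl.arms L hL
  have hw : 0 < w := by linarith [ht.x1]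
  have hh : 0 < h' := by linarith [ht.y1]
  -- All free types have both exponents at most `M`, and `(M, M)` itself is not free, because the
  -- chain of `τ` passes through it.  A dummy cell of type `(M, M)` is therefore added to the list,
  -- which improves the factor `4` of `sumAr_le` to `3`.
  have hF : sumAr Fr ≤ 3 * (5 / 2 * (w + h')) ^ 2 := by
    obtain ⟨M, hM, hM'⟩ := exists_top (B := 5 / 2 * (w + h')) (by positivity)
    have hτ1 : τ.1 ≤ M := hM' _ (by linarith [ht.x1])
    have hτ2 : τ.2 ≤ M := hM' _ (by linarith [ht.y1])
    have hsp : ∀ c ∈ Fr, Spine c.t → ¬ (τ.1 ≤ c.t.1 ∧ τ.2 ≤ c.t.1) := by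
      intro c hc hs hcon
      obtain ⟨n, hn⟩ := chain_reaches c.t hs τ hcon
      exact hno ⟨c, hc, n, hn.symm⟩
    have h1 := sumAr_le (C := ⟨(M, M), 0, 0⟩ :: Fr) (by
      simp only [List.map_cons, List.nodup_cons]
      refine ⟨fun hm => ?_, h.free.nodup⟩
      obtain ⟨c, hc, hct⟩ := List.mem_map.1 hm
      refine hsp c hc ?_ ?_ <;> rw [hct]
      · exact Or.inl rfl
      · exact ⟨hτ1, hτ2⟩) M M (by
      intro c hc
      rcases List.mem_cons.1 hc with rfl | hc
      · exact ⟨le_rfl, le_rfl⟩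
      · rcases h.ftype c hc with hs | hb
        · have := hsp c hc hs
          unfold Spine at hs
          omega
        · have := hb w h' hl
          exact ⟨hM' _ this.1, hM' _ this.2⟩)
    rw [sumAr_cons] at h1
    have h2 : (2 : ℝ) ^ M * 2 ^ M ≤ (5 / 2 * (w + h')) ^ 2 := by
      rw [sq]; exact mul_le_mul hM hM (by positivity) (by positivity)
    simp only [arT] at h1
    linarith
  have hO : sumAr Op ≤ 4 * ((5 / 2 * w) * (5 / 2 * h')) := by
    obtain ⟨M, hM, hM'⟩ := exists_top (B := 5 / 2 * w) (by positivity)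
    obtain ⟨N, hN, hN'⟩ := exists_top (B := 5 / 2 * h') (by positivity)
    -- the open types are distinct, with exponents bounded by `M` and `N`
    have h1 := sumAr_le h.opn M N (fun c hc =>
      ⟨hM' _ (h.otype c hc w h' hl).1, hN' _ (h.otype c hc w h' hl).2⟩)
    have h2 : (2 : ℝ) ^ M * 2 ^ N ≤ (5 / 2 * w) * (5 / 2 * h') :=
      mul_le_mul hM hN (by positivity) (by positivity)
    linarith
  have hval : 0 ≤ (Op.map Cell.val).sum := by
    apply List.sum_nonneg
    intro x hx
    obtain ⟨c, hc, rfl⟩ := List.mem_map.1 hx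
    exact Cell.val_nonneg (h.geo.inside c (List.mem_append_right _ hc))
  have h3 := h.area
  have h4 := h.asum
  have h5 := hl.area
  have h6 := parT_perim h.spine
  -- With `p` the half-perimeter of the box and `A` its area, `4 * A ≤ p ^ 2` gives
  -- `9 * (3 * (5 / 2 * p) ^ 2 + (25 + 25 / 2) * A) ≤ (16 * p) ^ 2`.
  refine le_of_sq_le_sq ?_ (by positivity)
  nlinarith [sq_nonneg (w - h')]

lemma St.grow {Q P r Fr Op} {L : LShape} {τ : ℤ × ℤ} (h : St Q P r Fr Op)
    (hs : sumAr Fr < arT r) (hL : L ∈ Q) (ht : HasType L τ)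
    (hno : ¬ ∃ c ∈ Fr, ∃ n, c.t = parT^[n] τ) :
    St Q P (parT r) (⟨r, shT r, 0⟩ :: Fr) Op where
  geo := h.geo.grow
  spine := spine_parT h.spine
  free := by
    refine ⟨?_, ?_⟩
    · simp only [List.map_cons, List.nodup_cons]
      refine ⟨fun hm => ?_, h.free.nodup⟩
      obtain ⟨c, hc, hct⟩ := List.mem_map.1 hm
      obtain ⟨C, hp⟩ := mem_perm hc
      rw [sumAr_perm hp, sumAr_cons, hct] at hs
      linarith [sumAr_nonneg C]
    · intro c hc
      rcases List.mem_cons.1 hc with rfl | hc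
      · rfl
      · exact h.free.zero c hc
  opn := h.opn
  area := by
    have := h.area
    rw [sumAr_cons, arT_parT]
    linarith
  asum := h.asum
  ftype c hc := by
    rcases List.mem_cons.1 hc with rfl | hc
    · exact Or.inl h.spine
    · exact h.ftype c hc
  otype := h.otype
  bound := h.grow_bound hL ht hno

/-- By growing the region repeatedly, a free cell of some ancestor type of `τ` becomes available.
The inequality `sumAr Fr < arT r` ensures that no free cell has the type of the whole region, so
the new free cell has a new type. -/
lemma St.provide {Q P Op} {L : LShape} {τ : ℤ × ℤ} (hL : L ∈ Q) (ht : HasType L τ) (d : ℕ) :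
    ∀ r Fr, St Q P r Fr Op → sumAr Fr < arT r → 2 * max τ.1 τ.2 - (r.1 + r.2) ≤ d →
    ∃ r' Fr', St Q P r' Fr' Op ∧ sumAr Fr' < arT r' ∧ ∃ c ∈ Fr', ∃ n, c.t = parT^[n] τ := by
  induction d with
  | zero =>
    intro r Fr h hs hd
    by_cases hno : ∃ c ∈ Fr, ∃ n, c.t = parT^[n] τ
    · exact ⟨r, Fr, h, hs, hno⟩
    · have hsp := h.spine
      obtain ⟨n, hn⟩ := chain_reaches r h.spine τ (by unfold Spine at hsp; omega)
      refine ⟨_, _, h.grow hs hL ht hno, ?_, ⟨r, shT r, 0⟩, List.mem_cons_self, n, hn.symm⟩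
      rw [sumAr_cons, arT_parT]; linarith
  | succ d ih =>
    intro r Fr h hs hd
    by_cases hno : ∃ c ∈ Fr, ∃ n, c.t = parT^[n] τ
    · exact ⟨r, Fr, h, hs, hno⟩
    · refine ih _ _ (h.grow hs hL ht hno) ?_ ?_
      · rw [sumAr_cons, arT_parT]; linarith
      · have : (parT r).1 + (parT r).2 = r.1 + r.2 + 1 := by
          unfold parT; split_ifs <;> simp only <;> ring
        push_cast at hd
        omega

/-! ### Placing one item -/

/-- A fresh cell of type `τ` is taken from the free cells and opened. -/
lemma St.openCell {Q P r Fr Op} {L : LShape} {τ : ℤ × ℤ} (h : St Q P r Fr Op)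
    (hs : sumAr Fr ≤ arT r) (hL : L ∈ Q) (ht : HasType L τ)
    (hc : ∃ c ∈ Fr, ∃ n, c.t = parT^[n] τ) (hno : τ ∉ Op.map Cell.t) :
    ∃ c Fr', c.t = τ ∧ c.o = 0 ∧ St Q P r Fr' (c :: Op) ∧ sumAr Fr' < arT r := by
  obtain ⟨c, hc, n, hn⟩ := hc
  obtain ⟨k, Fr', h1, h2, h3, h4, h5, h6⟩ := request n τ Fr h.geo h.free ⟨c, hc, hn⟩
  refine ⟨k, Fr', h1, h2, ?_, by linarith [arT_pos τ]⟩
  have hval : k.val = 0 := by simp [Cell.val, h2]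
  constructor
  · exact h3.perm List.perm_middle.symm
  · exact h.spine
  · exact h4
  · simp only [List.map_cons, List.nodup_cons, h1]
    exact ⟨hno, h.opn⟩
  · have := h.area
    simp only [List.map_cons, List.sum_cons, sumAr_cons, hval, h1]
    linarith
  · exact h.asum
  · intro d hd
    rcases h6 d hd with h7 | ⟨m, hm⟩
    · exact h.ftype d h7
    · have := chain_types (max τ.1 τ.2) m τ (Or.inr ⟨le_max_left _ _, le_max_right _ _⟩)
      rw [← hm] at this
      refine this.imp_right (fun h8 w h' hl => ?_)
      have ha := hl.arms L hL
      have p1 := two_zpow_pos τ.1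
      have p2 := two_zpow_pos τ.2
      have hM : (2 : ℝ) ^ (max τ.1 τ.2) ≤ 5 / 2 * (w + h') := by
        rcases max_choice τ.1 τ.2 with hm | hm <;> rw [hm] <;> linarith [ht.x1, ht.y1]
      exact ⟨(zpow_le_zpow_right₀ (by norm_num) h8.1).trans hM,
        (zpow_le_zpow_right₀ (by norm_num) h8.2).trans hM⟩
  · intro d hd w h' hl
    rcases List.mem_cons.1 hd with rfl | hd
    · have ha := hl.arms L hL
      rw [h1]
      constructor <;> linarith [ht.x1, ht.y1]
    · exact h.otype d hd w h' hl
  · exact h.bound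

/-- The invariant of the placed items: either all are degenerate and sit at the origin, or they
come from a state of the algorithm in which the free cells do not fill the region. -/
def PackInv (P : List (LShape × (ℝ × ℝ))) : Prop :=
  (∀ q ∈ P, q.2 = 0 ∧ interior (itm q) = ∅) ∨
  ∃ r Fr Op, St (P.map Prod.fst) P r Fr Op ∧ sumAr Fr < arT r

/-- The first nondegenerate item starts with a single free square cell with side the larger side of
its type. -/
lemma St.start {P : List (LShape × (ℝ × ℝ))} {L : LShape} {τ : ℤ × ℤ}
    (hP : ∀ q ∈ P, q.1.IsValid) (hv : L.IsValid)
    (hd : ∀ q ∈ P, q.2 = 0 ∧ interior (itm q) = ∅) (ht : HasType L τ) :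
    St (L :: P.map Prod.fst) P (max τ.1 τ.2, max τ.1 τ.2)
      [⟨(max τ.1 τ.2, max τ.1 τ.2), 0, 0⟩] [] where
  geo := by
    constructor
    · intro c hc
      simp only [List.append_nil, List.mem_singleton] at hc
      subst hc
      constructor <;> simp
    · simp
    · intro c _ q hq
      rw [(hd q hq).2]; exact Set.empty_disjoint _
    · refine List.pairwise_of_forall_mem_list (fun q hq p _ => ?_)
      rw [(hd q hq).2]; exact Set.empty_disjoint _
    · exact fun q hq => Or.inl (hd q hq)
  spine := Or.inl rfl
  free := ⟨by simp, by simp⟩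
  opn := by simp
  area := by
    have : 0 ≤ (P.map (fun q => aw q.1)).sum := by
      apply List.sum_nonneg
      intro x hx
      obtain ⟨q, hq, rfl⟩ := List.mem_map.1 hx
      exact (hP q hq).aw_nonneg
    simp [sumAr]
    linarith
  asum := by
    simp [Function.comp_def, hv.aw_nonneg]
  ftype c hc := by
    simp only [List.mem_singleton] at hc
    subst hc
    exact Or.inl (Or.inl rfl)
  otype := by simp
  bound w h hl := by
    have ha := hl.arms L List.mem_cons_self
    have p1 := two_zpow_pos τ.1
    have p2 := two_zpow_pos τ.2
    rcases max_choice τ.1 τ.2 with hm | hm <;> simp only [hm] <;> linarith [ht.x1, ht.y1]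

/-- Every valid L-shape can be placed so that the invariant persists. -/
lemma step {P : List (LShape × (ℝ × ℝ))} {L : LShape} (hI : PackInv P)
    (hP : ∀ q ∈ P, q.1.IsValid) (hv : L.IsValid) : ∃ v, PackInv ((L, v) :: P) := by
  by_cases hpos : 0 < L.lx ∧ 0 < L.ly
  · obtain ⟨τ, ht⟩ := exists_hasType hpos.1 hpos.2
    have p1 := two_zpow_pos τ.1
    have p2 := two_zpow_pos τ.2
    -- it suffices to reach a state with a usable open cell of type `τ`
    have key : ∀ r Fr c Op, St (L :: P.map Prod.fst) P r Fr (c :: Op) → sumAr Fr < arT r →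
        c.t = τ → c.o.1 < (2 : ℝ) ^ c.t.1 / 5 → c.o.2 < (2 : ℝ) ^ c.t.2 / 5 →
        ∃ v, PackInv ((L, v) :: P) := by
      intro r Fr c Op h hs hc h1 h2
      exact ⟨c.v + c.o, Or.inr ⟨r, Fr, _, h.place hv (hc ▸ ht) h1 h2 rfl, hs⟩⟩
    have key2 : ∀ r Fr Op, St (L :: P.map Prod.fst) P r Fr Op → sumAr Fr ≤ arT r →
        (∃ c ∈ Fr, ∃ n, c.t = parT^[n] τ) → τ ∉ Op.map Cell.t → ∃ v, PackInv ((L, v) :: P) := by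
      intro r Fr Op h hs hc hno
      obtain ⟨c, Fr', h1, h2, h3, h4⟩ := h.openCell hs List.mem_cons_self ht hc hno
      refine key r Fr' c Op h3 h4 h1 ?_ ?_ <;> rw [h1, h2] <;> simp <;> positivity
    have key3 : ∀ r Fr Op, St (L :: P.map Prod.fst) P r Fr Op → sumAr Fr < arT r →
        τ ∉ Op.map Cell.t → ∃ v, PackInv ((L, v) :: P) := by
      intro r Fr Op h hs hno
      obtain ⟨r', Fr', h1, h2, h3⟩ := St.provide List.mem_cons_self ht _ r Fr h hs
        (Int.self_le_toNat _)
      exact key2 r' Fr' Op h1 h2.le h3 hno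
    rcases hI with hd | ⟨r, Fr, Op, h, hs⟩
    · refine key2 _ _ _ (St.start hP hv hd ht) ?_ ?_ (by simp)
      · simp [sumAr]
      · obtain ⟨n, hn⟩ := chain_reaches (max τ.1 τ.2, max τ.1 τ.2) (Or.inl rfl) τ
          ⟨le_max_left _ _, le_max_right _ _⟩
        exact ⟨_, List.mem_singleton_self _, n, hn.symm⟩
    · have h := h.arrive hv
      by_cases hτ : τ ∈ Op.map Cell.t
      · obtain ⟨c, hc, hct⟩ := List.mem_map.1 hτ
        obtain ⟨Op', hp⟩ := mem_perm hc
        have h := h.perm hp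
        by_cases hfull : (2 : ℝ) ^ c.t.1 / 5 ≤ c.o.1 ∨ (2 : ℝ) ^ c.t.2 / 5 ≤ c.o.2
        · refine key3 r Fr Op' (h.close hfull) hs ?_
          have := (List.nodup_cons.1 h.opn).1
          rwa [hct] at this
        · push Not at hfull
          exact key r Fr c Op' h hs hct hfull.1 hfull.2
      · exact key3 r Fr Op h hs hτ
  · have he : interior (itm (L, 0)) = ∅ := by
      rw [Set.eq_empty_iff_forall_notMem]
      intro z hz
      have := interior_itm (q := (L, 0)) hv hz
      simp only [Set.mem_prod, Set.mem_Ioo] at this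
      exact hpos ⟨by linarith, by linarith⟩
    refine ⟨0, ?_⟩
    rcases hI with hd | ⟨r, Fr, Op, h, hs⟩
    · left
      intro q hq
      rcases List.mem_cons.1 hq with rfl | hq
      · exact ⟨rfl, he⟩
      · exact hd q hq
    · exact Or.inr ⟨r, Fr, Op, h.degenerate hv he, hs⟩

lemma PackInv.pairwise {P : List (LShape × (ℝ × ℝ))} (h : PackInv P) :
    P.Pairwise (fun p q => Disjoint (interior (itm p)) (interior (itm q))) := by
  rcases h with hd | ⟨r, Fr, Op, h, _⟩
  · refine List.pairwise_of_forall_mem_list (fun q hq p _ => ?_)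
    rw [(hd q hq).2]; exact Set.empty_disjoint _
  · exact h.geo.items

/-- The items lie in a rectangle of half-perimeter at most `16 * (w + h)`.  The maxima with `w` and
`h` cover the degenerate items, which may stick out of the region. -/
lemma PackInv.box {P : List (LShape × (ℝ × ℝ))} (hI : PackInv P) (hP : ∀ q ∈ P, q.1.IsValid)
    {w h : ℝ} (hw : 0 ≤ w) (hh : 0 ≤ h) (hl : LB (P.map Prod.fst) w h) :
    ∃ W H, W + H ≤ 16 * (w + h) ∧ ∀ q ∈ P, itm q ⊆ Set.Icc 0 W ×ˢ Set.Icc 0 H := by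
  have hdeg : ∀ q ∈ P, q.2 = 0 → itm q ⊆ Set.Icc 0 w ×ˢ Set.Icc 0 h := by
    intro q hq h0
    refine (itm_subset (hP q hq)).trans ?_
    have := hl.arms q.1 (List.mem_map_of_mem hq)
    rw [h0]
    exact Set.prod_mono (Set.Icc_subset_Icc le_rfl (by simpa using this.1))
      (Set.Icc_subset_Icc le_rfl (by simpa using this.2))
  rcases hI with hd | ⟨r, Fr, Op, hS, _⟩
  · exact ⟨w, h, by linarith, fun q hq => hdeg q hq (hd q hq).1⟩
  · refine ⟨max (2 ^ r.1) w, max (2 ^ r.2) h, ?_, ?_⟩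
    · have hb := hS.bound w h hl
      have p := two_zpow_pos r.1
      have hr : (2 : ℝ) ^ r.1 ≤ 2 ^ r.2 ∧ (2 : ℝ) ^ r.2 ≤ 2 * 2 ^ r.1 := by
        rcases hS.spine with hs | hs <;> rw [hs]
        · constructor <;> linarith
        · rw [two_zpow_succ]; constructor <;> linarith
      rcases max_cases ((2 : ℝ) ^ r.1) w with h1 | h1 <;>
        rcases max_cases ((2 : ℝ) ^ r.2) h with h2 | h2 <;> linarith
    · intro q hq
      rcases hS.geo.box q hq with h1 | h1
      · exact (hdeg q hq h1.1).trans (Set.prod_mono (Set.Icc_subset_Icc le_rfl (le_max_right _ _))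
          (Set.Icc_subset_Icc le_rfl (le_max_right _ _)))
      · exact h1.trans (Set.prod_mono (Set.Icc_subset_Icc le_rfl (le_max_left _ _))
          (Set.Icc_subset_Icc le_rfl (le_max_left _ _)))

/-! ### The online algorithm -/

open Classical in
/-- A translation of `L` that preserves the invariant, if there is one (and `0` otherwise). -/
noncomputable def pick (P : List (LShape × (ℝ × ℝ))) (L : LShape) : ℝ × ℝ :=
  if h : ∃ v, PackInv ((L, v) :: P) then h.choose else 0

/-- The items of `l` with the translations chosen one after the other, the last item first. -/
noncomputable def run (l : List LShape) : List (LShape × (ℝ × ℝ)) :=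
  l.foldl (fun P L => (L, pick P L) :: P) []

/-- The online algorithm: the translation chosen for the last item of the list. -/
noncomputable def alg (l : List LShape) : ℝ × ℝ :=
  match run l with
  | [] => 0
  | q :: _ => q.2

lemma run_concat (l : List LShape) (L : LShape) :
    run (l ++ [L]) = (L, alg (l ++ [L])) :: run l := by
  have : run (l ++ [L]) = (L, pick (run l) L) :: run l := by simp [run]
  simp [alg, this]

lemma run_fst (l : List LShape) : (run l).map Prod.fst = l.reverse := by
  induction l using List.reverseRecOn with
  | nil => simp [run]
  | append_singleton l L ih => rw [run_concat]; simp [ih]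

lemma run_valid {l : List LShape} (hl : ∀ L ∈ l, L.IsValid) : ∀ q ∈ run l, q.1.IsValid := by
  intro q hq
  have := List.mem_map_of_mem (f := Prod.fst) hq
  rw [run_fst, List.mem_reverse] at this
  exact hl _ this

lemma run_inv (l : List LShape) (hl : ∀ L ∈ l, L.IsValid) : PackInv (run l) := by
  induction l using List.reverseRecOn with
  | nil => left; simp [run]
  | append_singleton l L ih =>
    have hl' : ∀ L ∈ l, L.IsValid := fun M hM => hl M (by simp [hM])
    have hs := step (ih hl') (run_valid hl') (hl L (by simp))
    have : run (l ++ [L]) = (L, pick (run l) L) :: run l := by simp [run]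
    rw [this, pick, dif_pos hs]
    exact hs.choose_spec

lemma run_take_succ (l : List LShape) (i : Fin l.length) :
    run (l.take (i.1 + 1)) = (l.get i, planePlaceOf alg l i) :: run (l.take i.1) := by
  have h : l.take (i.1 + 1) = l.take i.1 ++ [l.get i] := by simp
  unfold planePlaceOf
  rw [h, run_concat]

lemma mem_run_take (l : List LShape) (i : Fin l.length) (n : ℕ) (hi : i.1 < n)
    (hn : n ≤ l.length) : (l.get i, planePlaceOf alg l i) ∈ run (l.take n) := by
  induction n with
  | zero => omega
  | succ n ih =>
    have := run_take_succ l ⟨n, hn⟩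
    simp only at this
    rw [this]
    by_cases h : i.1 = n
    · have : i = ⟨n, hn⟩ := Fin.ext h
      rw [this]; exact List.mem_cons_self
    · exact List.mem_cons_of_mem _ (ih (by omega) (by omega))

lemma alg_places (l : List LShape) (hl : ∀ L ∈ l, L.IsValid) : OnlinePlaces alg l := by
  have key : ∀ i j : Fin l.length, i < j →
      Disjoint (interior (planeTranslate (planePlaceOf alg l i) (l.get i).toSet))
        (interior (planeTranslate (planePlaceOf alg l j) (l.get j).toSet)) := by
    intro i j hij
    have h1 := (run_inv (l.take (j.1 + 1)) (fun L hL => hl L (List.mem_of_mem_take hL))).pairwise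
    rw [run_take_succ] at h1
    exact ((List.pairwise_cons.1 h1).1 _ (mem_run_take l i j.1 hij j.2.le)).symm
  intro i j hij
  rcases lt_or_gt_of_ne hij with h | h
  · exact key i j h
  · exact (key j i h).symm

/-! ### Bounding boxes and the offline optimum -/

lemma bboxPerim_le {S : Set (ℝ × ℝ)} {W H : ℝ} (hne : S.Nonempty)
    (hS : S ⊆ Set.Icc 0 W ×ˢ Set.Icc 0 H) : bboxPerim S ≤ 2 * (W + H) := by
  have h1 : sSup ((fun p : ℝ × ℝ => p.1) '' S) ≤ W :=
    csSup_le (hne.image _) (by rintro _ ⟨z, hz, rfl⟩; exact (hS hz).1.2)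
  have h2 : sSup ((fun p : ℝ × ℝ => p.2) '' S) ≤ H :=
    csSup_le (hne.image _) (by rintro _ ⟨z, hz, rfl⟩; exact (hS hz).2.2)
  have h3 : 0 ≤ sInf ((fun p : ℝ × ℝ => p.1) '' S) :=
    le_csInf (hne.image _) (by rintro _ ⟨z, hz, rfl⟩; exact (hS hz).1.1)
  have h4 : 0 ≤ sInf ((fun p : ℝ × ℝ => p.2) '' S) :=
    le_csInf (hne.image _) (by rintro _ ⟨z, hz, rfl⟩; exact (hS hz).2.1)
  unfold bboxPerim
  linarith

lemma isCompact_itm (q : LShape × (ℝ × ℝ)) : IsCompact (itm q) := by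
  unfold itm planeTranslate LShape.toSet
  exact (isCompact_Icc.union isCompact_Icc).image (by fun_prop)

lemma mem_itm_of {L : LShape} {v : ℝ × ℝ} {x y : ℝ} (hx : 0 ≤ x) (hy : 0 ≤ y)
    (h : (x ≤ L.lx ∧ y ≤ L.wy) ∨ (x ≤ L.wx ∧ y ≤ L.ly)) : (x + v.1, y + v.2) ∈ itm (L, v) := by
  refine ⟨(x, y), ?_, rfl⟩
  rcases h with h | h
  · exact Or.inl ⟨⟨hx, hy⟩, ⟨h.1, h.2⟩⟩
  · exact Or.inr ⟨⟨hx, hy⟩, ⟨h.1, h.2⟩⟩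

open MeasureTheory in
lemma aw_le_volume {L : LShape} (hv : L.IsValid) (v : ℝ × ℝ) :
    ENNReal.ofReal (aw L) ≤ volume (interior (itm (L, v))) := by
  obtain ⟨w1, w2, w3, w4, w5, w6⟩ := hv
  have rect : ∀ a b : ℝ, (∀ x y : ℝ, x ≤ a → y ≤ b →
      (x ≤ L.lx ∧ y ≤ L.wy) ∨ (x ≤ L.wx ∧ y ≤ L.ly)) → 0 ≤ a →
      ENNReal.ofReal (a * b) ≤ volume (interior (itm (L, v))) := by
    intro a b hab ha
    have hsub : Set.Ioo v.1 (v.1 + a) ×ˢ Set.Ioo v.2 (v.2 + b) ⊆ interior (itm (L, v)) := by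
      refine interior_maximal ?_ (isOpen_Ioo.prod isOpen_Ioo)
      rintro ⟨x, y⟩ ⟨hx, hy⟩
      simp only [Set.mem_Ioo] at hx hy
      have := mem_itm_of (L := L) (v := v) (x := x - v.1) (y := y - v.2) (by linarith) (by linarith)
        (hab _ _ (by linarith) (by linarith))
      simpa using this
    refine le_trans ?_ (measure_mono hsub)
    rw [Measure.volume_eq_prod, Measure.prod_prod, Real.volume_Ioo, Real.volume_Ioo,
      ENNReal.ofReal_mul ha]
    simp
  unfold aw
  rcases max_choice (L.wx * L.ly) (L.wy * L.lx) with h | h <;> rw [h]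
  · exact rect L.wx L.ly (fun x y hx hy => Or.inr ⟨hx, hy⟩) w1
  · rw [mul_comm]
    exact rect L.lx L.wy (fun x y hx hy => Or.inl ⟨hx, hy⟩) (w1.trans w2)

open MeasureTheory in
/-- The bounding box of any offline placement is at least as wide and high as every item, and by
comparison of volumes its area is at least the sum of the `aw`. -/
lemma opt_bound {l : List LShape} (hl : ∀ L ∈ l, L.IsValid) (hne : l ≠ [])
    (u : Fin l.length → ℝ × ℝ)
    (hu : ∀ i j, i ≠ j → Disjoint (interior (planeTranslate (u i) (l.get i).toSet))
      (interior (planeTranslate (u j) (l.get j).toSet))) :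
    ∃ w h, 0 ≤ w ∧ 0 ≤ h ∧ LB l w h ∧
      bboxPerim (⋃ i, planeTranslate (u i) (l.get i).toSet) = 2 * (w + h) := by
  set S : Set (ℝ × ℝ) := ⋃ i, planeTranslate (u i) (l.get i).toSet with hS
  have hcomp : IsCompact S := isCompact_iUnion (fun i => isCompact_itm (l.get i, u i))
  have hb1 := (hcomp.image continuous_fst).bddAbove
  have hb2 := (hcomp.image continuous_fst).bddBelow
  have hb3 := (hcomp.image continuous_snd).bddAbove
  have hb4 := (hcomp.image continuous_snd).bddBelow
  have mem : ∀ (i : Fin l.length) (z : ℝ × ℝ), z ∈ itm (l.get i, u i) →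
      (sInf ((fun p : ℝ × ℝ => p.1) '' S) ≤ z.1 ∧ z.1 ≤ sSup ((fun p : ℝ × ℝ => p.1) '' S)) ∧
      (sInf ((fun p : ℝ × ℝ => p.2) '' S) ≤ z.2 ∧ z.2 ≤ sSup ((fun p : ℝ × ℝ => p.2) '' S)) := by
    intro i z hz
    have hzS : z ∈ S := Set.mem_iUnion.2 ⟨i, hz⟩
    exact ⟨⟨csInf_le hb2 ⟨z, hzS, rfl⟩, le_csSup hb1 ⟨z, hzS, rfl⟩⟩,
      ⟨csInf_le hb4 ⟨z, hzS, rfl⟩, le_csSup hb3 ⟨z, hzS, rfl⟩⟩⟩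
  set a := sInf ((fun p : ℝ × ℝ => p.1) '' S)
  set b := sSup ((fun p : ℝ × ℝ => p.1) '' S)
  set c := sInf ((fun p : ℝ × ℝ => p.2) '' S)
  set d := sSup ((fun p : ℝ × ℝ => p.2) '' S)
  have arms : ∀ i : Fin l.length, (l.get i).lx ≤ b - a ∧ (l.get i).ly ≤ d - c := by
    intro i
    obtain ⟨w1, w2, w3, w4, w5, w6⟩ := hl _ (l.get_mem i)
    have m0 := mem i _ (mem_itm_of (x := 0) (y := 0) le_rfl le_rfl
      (Or.inl ⟨w1.trans w2, w4⟩))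
    have m1 := mem i _ (mem_itm_of (x := (l.get i).lx) (y := 0) (w1.trans w2) le_rfl
      (Or.inl ⟨le_rfl, w4⟩))
    have m2 := mem i _ (mem_itm_of (x := 0) (y := (l.get i).ly) le_rfl (w4.trans w5)
      (Or.inr ⟨w1, le_rfl⟩))
    simp only at m0 m1 m2
    constructor <;> linarith
  have hpos : 0 < l.length := List.length_pos_iff.2 hne
  have hval0 := hl _ (l.get_mem ⟨0, hpos⟩)
  have hw : 0 ≤ b - a := (hval0.1.trans hval0.2.1).trans (arms ⟨0, hpos⟩).1
  have hh : 0 ≤ d - c := (hval0.2.2.2.1.trans hval0.2.2.2.2.1).trans (arms ⟨0, hpos⟩).2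
  refine ⟨b - a, d - c, hw, hh, ⟨?_, ?_⟩, rfl⟩
  · intro L hL
    obtain ⟨i, rfl⟩ := List.get_of_mem hL
    exact arms i
  · have h1 : (l.map aw).sum = ∑ i : Fin l.length, aw (l.get i) := by
      simp [← List.sum_ofFn]
    have h2 : ENNReal.ofReal (∑ i : Fin l.length, aw (l.get i)) ≤
        ENNReal.ofReal ((b - a) * (d - c)) := by
      rw [ENNReal.ofReal_sum_of_nonneg (fun i _ => (hl _ (l.get_mem i)).aw_nonneg)]
      calc ∑ i : Fin l.length, ENNReal.ofReal (aw (l.get i))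
          ≤ ∑ i : Fin l.length, volume (interior (itm (l.get i, u i))) :=
            Finset.sum_le_sum (fun i _ => aw_le_volume (hl _ (l.get_mem i)) (u i))
        _ = volume (⋃ i : Fin l.length, interior (itm (l.get i, u i))) := by
            have hm := measure_iUnion (μ := volume)
              (f := fun i : Fin l.length => interior (itm (l.get i, u i)))
              (fun i j hij => hu i j hij) (fun i => isOpen_interior.measurableSet)
            rw [hm, tsum_fintype]
        _ ≤ volume (Set.Icc a b ×ˢ Set.Icc c d) := by
            refine measure_mono (Set.iUnion_subset (fun i z hz => ?_))
            exact mem i z (interior_subset hz)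
        _ = ENNReal.ofReal ((b - a) * (d - c)) := by
            rw [Measure.volume_eq_prod, Measure.prod_prod, Real.volume_Icc, Real.volume_Icc,
              ENNReal.ofReal_mul hw]
    rw [h1]
    exact (ENNReal.ofReal_le_ofReal_iff (mul_nonneg hw hh)).1 h2

/-- there is a deterministic online algorithm placing L-shapes in the plane by
translations with pairwise disjoint interiors whose bounding-box perimeter is, on every
input sequence of L-shapes with arm lengths in `[0,1]`, at most 16 times the minimum
bounding-box perimeter over all offline placements with pairwise disjoint interiors. -/
theorem stmt9 :
    ∃ A : List LShape → ℝ × ℝ,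
      ∀ l : List LShape, (∀ L ∈ l, L.IsValid) →
        OnlinePlaces A l ∧
        bboxPerim (⋃ i : Fin l.length,
            planeTranslate (planePlaceOf A l i) (l.get i).toSet) ≤
          16 * sInf {P : ℝ | ∃ u : Fin l.length → ℝ × ℝ,
            (∀ i j, i ≠ j →
              Disjoint (interior (planeTranslate (u i) (l.get i).toSet))
                       (interior (planeTranslate (u j) (l.get j).toSet))) ∧
            P = bboxPerim (⋃ i, planeTranslate (u i) (l.get i).toSet)} := by
  refine ⟨alg, fun l hl => ⟨alg_places l hl, ?_⟩⟩
  suffices h : bboxPerim (⋃ i : Fin l.length,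
      planeTranslate (planePlaceOf alg l i) (l.get i).toSet) / 16 ≤
        sInf {P : ℝ | ∃ u : Fin l.length → ℝ × ℝ,
            (∀ i j, i ≠ j →
              Disjoint (interior (planeTranslate (u i) (l.get i).toSet))
                       (interior (planeTranslate (u j) (l.get j).toSet))) ∧
            P = bboxPerim (⋃ i, planeTranslate (u i) (l.get i).toSet)} by linarith
  apply le_csInf
  · exact ⟨_, planePlaceOf alg l, alg_places l hl, rfl⟩
  rintro _ ⟨u, hu, rfl⟩
  -- for the empty list both sides are the junk value `0`
  by_cases hne : l = []
  · subst hne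
    simp [bboxPerim]
  obtain ⟨w, h, hw, hh, hLB, hperim⟩ := opt_bound hl hne u hu
  have hLB' : LB ((run l).map Prod.fst) w h := by
    rw [run_fst]
    exact ⟨fun L hL => hLB.arms L (List.mem_reverse.1 hL), by
      rw [List.map_reverse, List.sum_reverse]; exact hLB.area⟩
  obtain ⟨W, H, hWH, hbox⟩ := (run_inv l hl).box (run_valid hl) hw hh hLB'
  have hmem : ∀ i : Fin l.length, (l.get i, planePlaceOf alg l i) ∈ run l := by
    intro i
    have := mem_run_take l i l.length i.2 le_rfl
    rwa [List.take_length] at this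
  have hle := bboxPerim_le (S := ⋃ i : Fin l.length,
      planeTranslate (planePlaceOf alg l i) (l.get i).toSet) (W := W) (H := H) ?_ ?_
  · rw [hperim]; linarith
  · have hpos : 0 < l.length := List.length_pos_iff.2 hne
    obtain ⟨w1, w2, w3, w4, w5, w6⟩ := hl _ (l.get_mem ⟨0, hpos⟩)
    exact ⟨_, Set.mem_iUnion.2 ⟨⟨0, hpos⟩, mem_itm_of (x := 0) (y := 0) le_rfl le_rfl
      (Or.inl ⟨w1.trans w2, w4⟩)⟩⟩
  · exact Set.iUnion_subset (fun i => hbox _ (hmem i))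
end

section
/- There exist a constant c > 0 and a deterministic online algorithm for placing L-shapes in the plane by translations (each placement irrevocable, all translates with pairwise disjoint interiors) such that for every finite input sequence of n L-shapes with arm lengths in [0,1] and positive widths (wx > 0 and wy > 0), the area of the smallest axis-parallel bounding rectangle of the algorithm's placement is at most c·√n·OPT + c, where OPT is the minimum possible bounding-rectangle area over all offline translational placements of the same L-shapes with pairwise disjoint interiors. -/
/-- The area of the smallest axis-parallel rectangle containing `S`. -/
noncomputable def bboxArea (S : Set (ℝ × ℝ)) : ℝ :=
  (sSup ((fun p : ℝ × ℝ => p.1) '' S) - sInf ((fun p : ℝ × ℝ => p.1) '' S)) *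
  (sSup ((fun p : ℝ × ℝ => p.2) '' S) - sInf ((fun p : ℝ × ℝ => p.2) '' S))

/-! ### The algorithm -/

/-- The dyadic scale `2⁻ᵃ`. -/
noncomputable def dyad (a : ℕ) : ℝ := (1 / 2) ^ a

/-- The dyadic class of a length `x ∈ (0,1]`: the `a` with `2⁻⁽ᵃ⁺¹⁾ < x ≤ 2⁻ᵃ`
(and `0` for other `x`). -/
noncomputable def dyadClass (x : ℝ) : ℕ :=
  open Classical in
  if h : ∃ a : ℕ, dyad (a + 1) < x ∧ x ≤ dyad a then h.choose else 0

/-- The class of an L-shape: the dyadic classes of its two arm lengths. -/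
noncomputable def LShape.cls (L : LShape) : ℕ × ℕ := (dyadClass L.lx, dyadClass L.ly)

/-- The memory of the algorithm, which fills the strip `0 ≤ x ≤ 4` from the bottom.
* Everything above height `H` is untouched.
* For each `b` there is a current shelf of height `2·2⁻ᵇ` with bottom `sy b`, used up to
  abscissa `sx b`; `sx b = 4` means that it is full (or does not exist yet).
* For each class `k = (a,b)` there is a current block of size `2·2⁻ᵃ × 2·2⁻ᵇ` with lower left
  corner `(bx k, bY k)`, in which the next L-shape goes to offset `(ox k, oy k)`. The block counts
  as closed (or not existing yet) as soon as `ox k ≥ 2⁻ᵃ` or `oy k ≥ 2⁻ᵇ`. -/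
structure PackState where
  H : ℝ
  sx : ℕ → ℝ
  sy : ℕ → ℝ
  bx : ℕ × ℕ → ℝ
  bY : ℕ × ℕ → ℝ
  ox : ℕ × ℕ → ℝ
  oy : ℕ × ℕ → ℝ

/-- The state before the first item: all shelves and blocks are marked full. -/
noncomputable def PackState.start : PackState where
  H := 0
  sx := fun _ => 4
  sy := fun _ => 0
  bx := fun _ => 0
  bY := fun _ => 0
  ox := fun k => dyad k.1
  oy := fun _ => 0

/-- The current block of class `k` is open. -/
def PackState.Live (s : PackState) (k : ℕ × ℕ) : Prop :=
  s.ox k < dyad k.1 ∧ s.oy k < dyad k.2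

/-- Start a new shelf for `k.2` on top if the current one has no room for a block of class `k`. -/
noncomputable def PackState.openShelf (s : PackState) (k : ℕ × ℕ) : PackState :=
  open Classical in
  if s.sx k.2 + 2 * dyad k.1 ≤ 4 then s else
    { s with
      H := s.H + 2 * dyad k.2
      sx := Function.update s.sx k.2 0
      sy := Function.update s.sy k.2 s.H }

/-- Cut a new block of class `k` off the current shelf for `k.2`. -/
noncomputable def PackState.cutBlock (s : PackState) (k : ℕ × ℕ) : PackState :=
  { s with
    sx := Function.update s.sx k.2 (s.sx k.2 + 2 * dyad k.1)
    bx := Function.update s.bx k (s.sx k.2)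
    bY := Function.update s.bY k (s.sy k.2)
    ox := Function.update s.ox k 0
    oy := Function.update s.oy k 0 }

/-- Make sure that the current block of class `k` is open. -/
noncomputable def PackState.prep (s : PackState) (k : ℕ × ℕ) : PackState :=
  open Classical in
  if s.Live k then s else (s.openShelf k).cutBlock k

/-- The corner of the free part of the current block of class `k`. -/
def PackState.corner (s : PackState) (k : ℕ × ℕ) : ℝ × ℝ := (s.bx k + s.ox k, s.bY k + s.oy k)

/-- Put `L` at the corner of the current block of its class; the next shape of that class is
nested into the notch of `L`. -/
noncomputable def PackState.put (s : PackState) (L : LShape) : PackState :=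
  { s with
    ox := Function.update s.ox L.cls (s.ox L.cls + L.wx)
    oy := Function.update s.oy L.cls (s.oy L.cls + L.wy) }

/-- The state transition on arrival of `L`. -/
noncomputable def PackState.step (s : PackState) (L : LShape) : PackState := (s.prep L.cls).put L

/-- The state after processing a list of items. -/
noncomputable def packRun (l : List LShape) : PackState := l.foldl PackState.step PackState.start

/-- The online algorithm: the last item goes to the corner of the (possibly newly opened) block
of its class. The value on the empty list is irrelevant. -/
noncomputable def packAlg (l : List LShape) : ℝ × ℝ :=
  let L := l.getLastD ⟨0, 0, 0, 0⟩
  ((packRun l.dropLast).prep L.cls).corner L.cls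

/-! ### Free regions -/

/-- Names of the free regions of a state. -/
inductive RegionIdx where
  | top : RegionIdx
  | shelf : ℕ → RegionIdx
  | block : ℕ × ℕ → RegionIdx

/-- The (open) free regions: the half-plane above `H`, the unused part of each shelf, the unused
part of each open block. -/
def PackState.region (s : PackState) : RegionIdx → Set (ℝ × ℝ)
  | .top => {p | s.H < p.2}
  | .shelf b => {p | s.sx b < p.1 ∧ p.1 < 4 ∧ s.sy b < p.2 ∧ p.2 < s.sy b + 2 * dyad b}
  | .block k => {p | s.Live k ∧ s.bx k + s.ox k < p.1 ∧ p.1 < s.bx k + 2 * dyad k.1 ∧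
      s.bY k + s.oy k < p.2 ∧ p.2 < s.bY k + 2 * dyad k.2}

/-- The union of the free regions. -/
def PackState.free (s : PackState) : Set (ℝ × ℝ) := ⋃ k, s.region k

/-- The invariant of the algorithm: open shelves and blocks lie in `[0,4] × [0,H]`, and the free
regions are pairwise disjoint. -/
structure PackState.Inv (s : PackState) : Prop where
  H0 : 0 ≤ s.H
  sx0 : ∀ b, 0 ≤ s.sx b
  shelf_mem : ∀ b, s.sx b < 4 → 0 ≤ s.sy b ∧ s.sy b + 2 * dyad b ≤ s.H
  ox0 : ∀ k, 0 ≤ s.ox k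
  oy0 : ∀ k, 0 ≤ s.oy k
  block_mem : ∀ k, s.Live k → (0 ≤ s.bx k ∧ s.bx k + 2 * dyad k.1 ≤ 4) ∧
    (0 ≤ s.bY k ∧ s.bY k + 2 * dyad k.2 ≤ s.H)
  disj : Pairwise (Function.onFun Disjoint s.region)

theorem dyad_pos (a : ℕ) : 0 < dyad a := by unfold dyad; positivity

theorem dyad_le_one (a : ℕ) : dyad a ≤ 1 := pow_le_one₀ (by norm_num) (by norm_num)

theorem dyad_succ (a : ℕ) : dyad (a + 1) = dyad a / 2 := by unfold dyad; rw [pow_succ]; ring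

theorem dyadClass_spec {x : ℝ} (h0 : 0 < x) (h1 : x ≤ 1) :
    dyad (dyadClass x) / 2 < x ∧ x ≤ dyad (dyadClass x) := by
  have h : ∃ a : ℕ, dyad (a + 1) < x ∧ x ≤ dyad a :=
    exists_nat_pow_near_of_lt_one h0 h1 (by norm_num) (by norm_num)
  rw [← dyad_succ, dyadClass, dif_pos h]
  exact h.choose_spec

/-- Recycling the name `i` for a part of region `j` that is removed from `j` keeps the regions
pairwise disjoint. -/
theorem pairwise_disjoint_recycle {ι : Type*} {R R' : ι → Set (ℝ × ℝ)} {i j : ι} (hij : i ≠ j)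
    (hR : Pairwise (Function.onFun Disjoint R)) (hsub : ∀ k, k ≠ i → R' k ⊆ R k)
    (hi : R' i ⊆ R j) (hd : Disjoint (R' i) (R' j)) :
    Pairwise (Function.onFun Disjoint R') := by
  have key : ∀ k, k ≠ i → Disjoint (R' i) (R' k) := by
    intro k hk
    by_cases hkj : k = j
    · exact hkj ▸ hd
    · exact (hR (Ne.symm hkj)).mono hi (hsub k hk)
  intro k m hkm
  by_cases hk : k = i
  · subst hk; exact key m hkm.symm
  · by_cases hm : m = i
    · subst hm; exact (key k hk).symm
    · exact (hR hkm).mono (hsub k hk) (hsub m hm)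

theorem PackState.inv_start : PackState.start.Inv where
  H0 := le_rfl
  sx0 := fun b => by simp [start]
  shelf_mem := fun b h => by simp [start] at h
  ox0 := fun k => (dyad_pos _).le
  oy0 := fun k => le_rfl
  block_mem := fun k h => by simp [start, Live] at h
  disj := by
    have h1 : ∀ b, PackState.start.region (.shelf b) = ∅ := by
      intro b
      ext p
      simp only [region, start, Set.mem_ofPred_eq, Set.mem_empty_iff_false, iff_false]
      rintro ⟨h, h', -⟩
      linarith
    have h2 : ∀ k, PackState.start.region (.block k) = ∅ := by
      intro k
      ext p
      simp [region, start, Live]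
    intro i j hij
    rcases i with _ | b | k
    · rcases j with _ | b' | k'
      · exact absurd rfl hij
      · simp [Function.onFun, h1]
      · simp [Function.onFun, h2]
    · simp [Function.onFun, h1]
    · simp [Function.onFun, h2]

theorem PackState.openShelf_spec {s : PackState} (hs : s.Inv) (k : ℕ × ℕ) :
    (s.openShelf k).Inv ∧ (s.openShelf k).free ⊆ s.free ∧
      (s.openShelf k).sx k.2 + 2 * dyad k.1 ≤ 4 ∧ s.H ≤ (s.openShelf k).H := by
  have ha := dyad_pos k.1
  have ha' := dyad_le_one k.1
  have hb := dyad_pos k.2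
  by_cases h : s.sx k.2 + 2 * dyad k.1 ≤ 4
  · have : s.openShelf k = s := by simp [openShelf, h]
    rw [this]
    exact ⟨hs, subset_rfl, h, le_rfl⟩
  have hE : s.openShelf k = { s with
      H := s.H + 2 * dyad k.2
      sx := Function.update s.sx k.2 0
      sy := Function.update s.sy k.2 s.H } := by simp [openShelf, h]
  set t := s.openShelf k with ht
  have hsub : ∀ i, i ≠ .shelf k.2 → t.region i ⊆ s.region i := by
    intro i hi
    rcases i with _ | b | k'
    · intro p hp
      simp only [hE, region, Set.mem_ofPred_eq] at hp ⊢
      linarith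
    · have hb' : b ≠ k.2 := fun e => hi (by rw [e])
      intro p hp
      simpa [hE, region, Function.update_of_ne hb'] using hp
    · intro p hp
      simpa [hE, region, Live] using hp
  have hi : t.region (.shelf k.2) ⊆ s.region .top := by
    intro p hp
    simp only [hE, region, Set.mem_ofPred_eq, Function.update_self] at hp ⊢
    exact hp.2.2.1
  refine ⟨⟨?_, ?_, ?_, ?_, ?_, ?_, ?_⟩, ?_, ?_, ?_⟩
  · have := hs.H0; simp only [hE]; linarith
  · intro b
    by_cases e : b = k.2
    · subst e; simp [hE]
    · simpa [hE, Function.update_of_ne e] using hs.sx0 b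
  · intro b
    by_cases e : b = k.2
    · subst e; simpa [hE] using hs.H0
    · have := hs.shelf_mem b
      simp only [hE, Function.update_of_ne e]
      intro h4
      exact ⟨(this h4).1, by linarith [(this h4).2]⟩
  · intro k'; simpa [hE] using hs.ox0 k'
  · intro k'; simpa [hE] using hs.oy0 k'
  · intro k' hk'
    have := hs.block_mem k' (by simpa [hE, Live] using hk')
    simp only [hE]
    exact ⟨this.1, this.2.1, by linarith [this.2.2]⟩
  · refine pairwise_disjoint_recycle (i := .shelf k.2) (j := .top) (by simp) hs.disj hsub hi ?_
    rw [Set.disjoint_left]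
    intro p hp hp'
    simp only [hE, region, Set.mem_ofPred_eq, Function.update_self] at hp hp'
    linarith [hp.2.2.2]
  · refine Set.iUnion_subset fun i => ?_
    by_cases e : i = .shelf k.2
    · rw [e]; exact hi.trans (Set.subset_iUnion _ _)
    · exact (hsub i e).trans (Set.subset_iUnion _ _)
  · simp only [hE, Function.update_self]; linarith
  · simp only [hE]; linarith

theorem PackState.cutBlock_spec {s : PackState} (hs : s.Inv) (k : ℕ × ℕ)
    (hroom : s.sx k.2 + 2 * dyad k.1 ≤ 4) :
    (s.cutBlock k).Inv ∧ (s.cutBlock k).free ⊆ s.free ∧ (s.cutBlock k).Live k := by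
  have ha := dyad_pos k.1
  have hb := dyad_pos k.2
  have hE : s.cutBlock k = { s with
    sx := Function.update s.sx k.2 (s.sx k.2 + 2 * dyad k.1)
    bx := Function.update s.bx k (s.sx k.2)
    bY := Function.update s.bY k (s.sy k.2)
    ox := Function.update s.ox k 0
    oy := Function.update s.oy k 0 } := rfl
  set t := s.cutBlock k with ht
  have hsub : ∀ i, i ≠ .block k → t.region i ⊆ s.region i := by
    intro i hi
    rcases i with _ | b | k'
    · exact subset_rfl
    · intro p hp
      by_cases e : b = k.2
      · subst e
        simp only [hE, region, Set.mem_ofPred_eq, Function.update_self] at hp ⊢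
        exact ⟨by linarith [hp.1], hp.2⟩
      · simpa [hE, region, Function.update_of_ne e] using hp
    · have e : k' ≠ k := fun e => hi (by rw [e])
      intro p hp
      simpa [hE, region, Live, Function.update_of_ne e] using hp
  have hi : t.region (.block k) ⊆ s.region (.shelf k.2) := by
    intro p hp
    simp only [hE, region, Set.mem_ofPred_eq, Function.update_self] at hp ⊢
    obtain ⟨-, h1, h2, h3, h4⟩ := hp
    exact ⟨by linarith, by linarith, by linarith, by linarith⟩
  have hlive : t.Live k := by simp [hE, Live, ha, hb]
  refine ⟨⟨hs.H0, ?_, ?_, ?_, ?_, ?_, ?_⟩, ?_, hlive⟩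
  · intro b
    by_cases e : b = k.2
    · subst e; simp only [hE, Function.update_self]; linarith [hs.sx0 k.2]
    · simpa [hE, Function.update_of_ne e] using hs.sx0 b
  · intro b
    by_cases e : b = k.2
    · subst e
      simp only [hE, Function.update_self]
      intro h4
      exact hs.shelf_mem k.2 (by linarith)
    · simpa [hE, Function.update_of_ne e] using hs.shelf_mem b
  · intro k'
    by_cases e : k' = k
    · subst e; simp [hE]
    · simpa [hE, Function.update_of_ne e] using hs.ox0 k'
  · intro k'
    by_cases e : k' = k
    · subst e; simp [hE]
    · simpa [hE, Function.update_of_ne e] using hs.oy0 k'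
  · intro k'
    by_cases e : k' = k
    · subst e
      intro _
      simp only [hE, Function.update_self]
      exact ⟨⟨hs.sx0 _, hroom⟩, hs.shelf_mem _ (by linarith)⟩
    · intro hk'
      have := hs.block_mem k' (by simpa [hE, Live, Function.update_of_ne e] using hk')
      simpa [hE, Function.update_of_ne e] using this
  · refine pairwise_disjoint_recycle (i := .block k) (j := .shelf k.2) (by simp) hs.disj hsub hi ?_
    rw [Set.disjoint_left]
    intro p hp hp'
    simp only [hE, region, Set.mem_ofPred_eq, Function.update_self] at hp hp'
    linarith [hp.2.2.1, hp'.1]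
  · refine Set.iUnion_subset fun i => ?_
    by_cases e : i = .block k
    · rw [e]; exact hi.trans (Set.subset_iUnion _ _)
    · exact (hsub i e).trans (Set.subset_iUnion _ _)

theorem PackState.prep_spec {s : PackState} (hs : s.Inv) (k : ℕ × ℕ) :
    (s.prep k).Inv ∧ (s.prep k).free ⊆ s.free ∧ (s.prep k).Live k ∧ s.H ≤ (s.prep k).H := by
  by_cases h : s.Live k
  · have : s.prep k = s := by simp [prep, h]
    rw [this]
    exact ⟨hs, subset_rfl, h, le_rfl⟩
  · have : s.prep k = (s.openShelf k).cutBlock k := by simp [prep, h]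
    rw [this]
    obtain ⟨h1, h2, h3, h4⟩ := openShelf_spec hs k
    obtain ⟨g1, g2, g3⟩ := cutBlock_spec h1 k h3
    exact ⟨g1, g2.trans h2, g3, h4⟩

/-! ### Geometry of one step -/

theorem mem_planeTranslate_iff (v : ℝ × ℝ) (L : LShape) (p : ℝ × ℝ) :
    p ∈ planeTranslate v L.toSet ↔
      (v.1 ≤ p.1 ∧ p.1 ≤ v.1 + L.lx ∧ v.2 ≤ p.2 ∧ p.2 ≤ v.2 + L.wy) ∨
      (v.1 ≤ p.1 ∧ p.1 ≤ v.1 + L.wx ∧ v.2 ≤ p.2 ∧ p.2 ≤ v.2 + L.ly) := by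
  have : p ∈ planeTranslate v L.toSet ↔ p - v ∈ L.toSet := by
    unfold planeTranslate
    constructor
    · rintro ⟨q, hq, rfl⟩
      simpa using hq
    · intro h
      exact ⟨p - v, h, by simp⟩
  rw [this]
  simp only [LShape.toSet, Set.mem_union, Set.mem_Icc, Prod.le_def, Prod.fst_sub, Prod.snd_sub]
  constructor
  · rintro (⟨⟨h1, h2⟩, h3, h4⟩ | ⟨⟨h1, h2⟩, h3, h4⟩)
    · left; refine ⟨?_, ?_, ?_, ?_⟩ <;> linarith
    · right; refine ⟨?_, ?_, ?_, ?_⟩ <;> linarith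
  · rintro (⟨h1, h2, h3, h4⟩ | ⟨h1, h2, h3, h4⟩)
    · left; refine ⟨⟨?_, ?_⟩, ?_, ?_⟩ <;> linarith
    · right; refine ⟨⟨?_, ?_⟩, ?_, ?_⟩ <;> linarith

theorem planeTranslate_subset_Icc {L : LShape} (hL : L.IsValid) (v : ℝ × ℝ) :
    planeTranslate v L.toSet ⊆
      Set.Icc v.1 (v.1 + L.lx) ×ˢ Set.Icc v.2 (v.2 + L.ly) := by
  obtain ⟨h1, h2, h3, h4, h5, h6⟩ := hL
  intro p hp
  rw [mem_planeTranslate_iff] at hp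
  rcases hp with ⟨a, b, c, d⟩ | ⟨a, b, c, d⟩
  · exact ⟨⟨a, b⟩, c, by linarith⟩
  · exact ⟨⟨a, by linarith⟩, c, d⟩

theorem interior_planeTranslate_subset {L : LShape} (hL : L.IsValid) (v : ℝ × ℝ) :
    interior (planeTranslate v L.toSet) ⊆
      Set.Ioo v.1 (v.1 + L.lx) ×ˢ Set.Ioo v.2 (v.2 + L.ly) := by
  have := interior_mono (planeTranslate_subset_Icc hL v)
  rwa [interior_prod_eq, interior_Icc, interior_Icc] at this

/-- Everything about one step: the item goes into the free area and into `[0,4] × [0,H]`, and the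
free area shrinks to a set disjoint from the item. -/
theorem PackState.step_spec {s : PackState} (hs : s.Inv) {L : LShape} (hL : L.IsValid)
    (hx : 0 < L.wx) (hy : 0 < L.wy) :
    (s.step L).Inv ∧ (s.step L).free ⊆ s.free ∧ s.H ≤ (s.step L).H ∧
      interior (planeTranslate ((s.prep L.cls).corner L.cls) L.toSet) ⊆ s.free ∧
      Disjoint (interior (planeTranslate ((s.prep L.cls).corner L.cls) L.toSet))
        (s.step L).free ∧
      planeTranslate ((s.prep L.cls).corner L.cls) L.toSet ⊆
        Set.Icc 0 4 ×ˢ Set.Icc 0 (s.step L).H := by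
  obtain ⟨ht, hfree, hlive, hH⟩ := prep_spec hs L.cls
  have hlx := (dyadClass_spec (hx.trans_le hL.2.1) hL.2.2.1).2
  have hly := (dyadClass_spec (hy.trans_le hL.2.2.2.2.1) hL.2.2.2.2.2).2
  change L.lx ≤ dyad L.cls.1 at hlx
  change L.ly ≤ dyad L.cls.2 at hly
  have hstep : s.step L = (s.prep L.cls).put L := rfl
  rw [hstep]
  set t := s.prep L.cls
  set k := L.cls with hk
  have hE : t.put L = { t with
    ox := Function.update t.ox k (t.ox k + L.wx)
    oy := Function.update t.oy k (t.oy k + L.wy) } := rfl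
  set r := t.put L
  have hox := ht.ox0 k
  have hoy := ht.oy0 k
  obtain ⟨⟨hb1, hb2⟩, hb3, hb4⟩ := ht.block_mem k hlive
  have hlive' : ∀ k', r.Live k' → t.Live k' := by
    intro k'
    by_cases e : k' = k
    · exact fun _ => e ▸ hlive
    · simp [hE, Live, Function.update_of_ne e]
  have hsub : ∀ i, r.region i ⊆ t.region i := by
    intro i
    rcases i with _ | b | k'
    · exact subset_rfl
    · exact subset_rfl
    · intro p hp
      have hl := hlive' k' hp.1
      by_cases e : k' = k
      · subst e
        simp only [hE, region, Set.mem_ofPred_eq, Function.update_self] at hp ⊢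
        obtain ⟨-, h1, h2, h3, h4⟩ := hp
        exact ⟨hl, by linarith, h2, by linarith, h4⟩
      · simp only [hE, region, Set.mem_ofPred_eq, Function.update_of_ne e] at hp ⊢
        exact ⟨hl, hp.2⟩
  have hin : interior (planeTranslate (t.corner k) L.toSet) ⊆ t.region (.block k) := by
    intro p hp
    obtain ⟨⟨h1, h2⟩, h3, h4⟩ := interior_planeTranslate_subset hL _ hp
    simp only [corner] at h1 h2 h3 h4
    simp only [region, Set.mem_ofPred_eq]
    obtain ⟨l1, l2⟩ := id hlive
    exact ⟨hlive, by linarith, by linarith, by linarith, by linarith⟩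
  refine ⟨⟨ht.H0, ht.sx0, ht.shelf_mem, ?_, ?_, fun k' h => ht.block_mem k' (hlive' k' h), ?_⟩,
    ?_, hH, hin.trans ((Set.subset_iUnion _ _).trans hfree), ?_, ?_⟩
  · intro k'
    by_cases e : k' = k
    · rw [e]; simp only [hE, Function.update_self]; linarith
    · simpa [hE, Function.update_of_ne e] using ht.ox0 k'
  · intro k'
    by_cases e : k' = k
    · rw [e]; simp only [hE, Function.update_self]; linarith
    · simpa [hE, Function.update_of_ne e] using ht.oy0 k'
  · exact fun i j hij => (ht.disj hij).mono (hsub i) (hsub j)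
  · exact (Set.iUnion_mono hsub).trans hfree
  · refine Set.disjoint_iUnion_right.2 fun i => ?_
    by_cases e : i = .block k
    · -- the new free part of the block lies beyond the notch corner of `L`
      subst e
      rw [Set.disjoint_left]
      intro p hp hp'
      have hp := interior_subset hp
      rw [mem_planeTranslate_iff] at hp
      simp only [hE, region, Set.mem_ofPred_eq, Function.update_self] at hp'
      simp only [corner] at hp
      obtain ⟨-, h1, h2, h3, h4⟩ := hp'
      rcases hp with ⟨a, b, c, d⟩ | ⟨a, b, c, d⟩ <;> linarith
    · exact (ht.disj (Ne.symm e)).mono hin (hsub i)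
  · intro p hp
    obtain ⟨⟨h1, h2⟩, h3, h4⟩ := planeTranslate_subset_Icc hL _ hp
    simp only [corner] at h1 h2 h3 h4
    obtain ⟨l1, l2⟩ := id hlive
    have : r.H = t.H := rfl
    refine ⟨⟨?_, ?_⟩, ?_, ?_⟩ <;> linarith

/-! ### The potential function -/

/-- A lower bound for the area of an L-shape: the average of the areas of its two arms. -/
noncomputable def LShape.halfArea (L : LShape) : ℝ := (L.lx * L.wy + L.ly * L.wx) / 2

/-- The potential of a state, summed over the classes below `N`: strip height, plus the used area
of the current shelves, plus the filling of the current blocks. -/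
noncomputable def PackState.pot (N : ℕ) (s : PackState) : ℝ :=
  s.H / 2 + ∑ b ∈ Finset.range N, s.sx b * dyad b / 2 +
    ∑ k ∈ Finset.range N ×ˢ Finset.range N, (s.ox k * dyad k.2 + s.oy k * dyad k.1)

theorem sum_change {ι : Type*} [DecidableEq ι] {F : Finset ι} {f g : ι → ℝ} {i : ι} (hi : i ∈ F)
    (h : ∀ j, j ≠ i → f j = g j) : ∑ j ∈ F, f j = ∑ j ∈ F, g j + (f i - g i) := by
  rw [← Finset.add_sum_erase F f hi, ← Finset.add_sum_erase F g hi,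
    Finset.sum_congr rfl fun j hj => h j (Finset.ne_of_mem_erase hj)]
  ring

/-- A shelf is abandoned only if more than half of its width is used, which pays for the new
one. -/
theorem PackState.pot_openShelf (N : ℕ) (s : PackState) {k : ℕ × ℕ} (hk : k.2 < N) :
    (s.openShelf k).pot N ≤ s.pot N := by
  have ha' := dyad_le_one k.1
  have hb := dyad_pos k.2
  by_cases h : s.sx k.2 + 2 * dyad k.1 ≤ 4
  · simp [openShelf, h]
  have hE : s.openShelf k = { s with
      H := s.H + 2 * dyad k.2
      sx := Function.update s.sx k.2 0
      sy := Function.update s.sy k.2 s.H } := by simp [openShelf, h]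
  have h1 := sum_change (F := Finset.range N) (i := k.2)
    (f := fun b => (Function.update s.sx k.2 0 b) * dyad b / 2)
    (g := fun b => s.sx b * dyad b / 2) (Finset.mem_range.2 hk)
    (fun j hj => by simp [Function.update_of_ne hj])
  simp only [Function.update_self] at h1
  rw [hE]
  simp only [pot]
  rw [h1]
  nlinarith

/-- A block is abandoned only when it is filled in one direction, which pays for the shelf area
used by the new one. -/
theorem PackState.pot_cutBlock (N : ℕ) (s : PackState) {k : ℕ × ℕ} (hk1 : k.1 < N) (hk : k.2 < N)
    (hox : 0 ≤ s.ox k) (hoy : 0 ≤ s.oy k) (hlive : ¬ s.Live k) :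
    (s.cutBlock k).pot N ≤ s.pot N := by
  have ha := dyad_pos k.1
  have hb := dyad_pos k.2
  have h1 := sum_change (F := Finset.range N) (i := k.2)
    (f := fun b => (Function.update s.sx k.2 (s.sx k.2 + 2 * dyad k.1) b) * dyad b / 2)
    (g := fun b => s.sx b * dyad b / 2) (Finset.mem_range.2 hk)
    (fun j hj => by simp [Function.update_of_ne hj])
  have h2 := sum_change (F := Finset.range N ×ˢ Finset.range N) (i := k)
    (f := fun j => (Function.update s.ox k 0 j) * dyad j.2 + (Function.update s.oy k 0 j) * dyad j.1)
    (g := fun j => s.ox j * dyad j.2 + s.oy j * dyad j.1)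
    (Finset.mem_product.2 ⟨Finset.mem_range.2 hk1, Finset.mem_range.2 hk⟩)
    (fun j hj => by simp [Function.update_of_ne hj])
  simp only [Function.update_self] at h1 h2
  simp only [pot, cutBlock]
  rw [h1, h2]
  have : dyad k.1 * dyad k.2 ≤ s.ox k * dyad k.2 + s.oy k * dyad k.1 := by
    by_cases h : s.ox k < dyad k.1
    · have h' : dyad k.2 ≤ s.oy k := not_lt.1 fun h' => hlive ⟨h, h'⟩
      nlinarith [mul_nonneg hox hb.le]
    · nlinarith [mul_nonneg hoy ha.le, not_lt.1 h]
  nlinarith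

theorem PackState.pot_step (N : ℕ) {s : PackState} (hs : s.Inv) {L : LShape} (hL : L.IsValid)
    (hx : 0 < L.wx) (hy : 0 < L.wy) (h1 : L.cls.1 < N) (h2 : L.cls.2 < N) :
    (s.step L).pot N ≤ s.pot N + 4 * L.halfArea := by
  have hprep : (s.prep L.cls).pot N ≤ s.pot N := by
    by_cases h : s.Live L.cls
    · simp [prep, h]
    · have e : s.prep L.cls = (s.openShelf L.cls).cutBlock L.cls := by simp [prep, h]
      have hi := (openShelf_spec hs L.cls).1
      rw [e]
      refine (pot_cutBlock N _ h1 h2 (hi.ox0 _) (hi.oy0 _) ?_).trans (pot_openShelf N s h2)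
      by_cases h4 : s.sx L.cls.2 + 2 * dyad L.cls.1 ≤ 4
      · simpa [openShelf, h4] using h
      · simpa [openShelf, h4, Live] using h
  have hlx := (dyadClass_spec (hx.trans_le hL.2.1) hL.2.2.1).1
  have hly := (dyadClass_spec (hy.trans_le hL.2.2.2.2.1) hL.2.2.2.2.2).1
  change dyad L.cls.1 / 2 < L.lx at hlx
  change dyad L.cls.2 / 2 < L.ly at hly
  have hput : ((s.prep L.cls).put L).pot N =
      (s.prep L.cls).pot N + (L.wx * dyad L.cls.2 + L.wy * dyad L.cls.1) := by
    generalize s.prep L.cls = t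
    have h3 := sum_change (F := Finset.range N ×ˢ Finset.range N) (i := L.cls)
      (f := fun j => (Function.update t.ox L.cls (t.ox L.cls + L.wx) j) * dyad j.2 +
        (Function.update t.oy L.cls (t.oy L.cls + L.wy) j) * dyad j.1)
      (g := fun j => t.ox j * dyad j.2 + t.oy j * dyad j.1)
      (Finset.mem_product.2 ⟨Finset.mem_range.2 h1, Finset.mem_range.2 h2⟩)
      (fun j hj => by simp [Function.update_of_ne hj])
    simp only [Function.update_self] at h3
    simp only [pot, put]
    rw [h3]
    ring
  change ((s.prep L.cls).put L).pot N ≤ _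
  rw [hput]
  unfold LShape.halfArea
  nlinarith

theorem sum_dyad_le (N : ℕ) : ∑ b ∈ Finset.range N, dyad b ≤ 2 := by
  have : ∑ b ∈ Finset.range N, dyad b = 2 - 2 * dyad N := by
    induction N with
    | zero => simp [dyad]
    | succ n ih => rw [Finset.sum_range_succ, ih, dyad_succ]; ring
  linarith [dyad_pos N]

theorem PackState.pot_start (N : ℕ) : PackState.start.pot N ≤ 8 := by
  have h := sum_dyad_le N
  have h0 : 0 ≤ ∑ b ∈ Finset.range N, dyad b := Finset.sum_nonneg fun b _ => (dyad_pos b).le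
  have e1 : ∑ b ∈ Finset.range N, 4 * dyad b / 2 = 2 * ∑ b ∈ Finset.range N, dyad b := by
    rw [Finset.mul_sum]
    exact Finset.sum_congr rfl fun b _ => by ring
  have e2 : ∑ k ∈ Finset.range N ×ˢ Finset.range N, (dyad k.1 * dyad k.2 + 0 * dyad k.1) =
      (∑ b ∈ Finset.range N, dyad b) * ∑ b ∈ Finset.range N, dyad b := by
    rw [Finset.sum_mul_sum, Finset.sum_product]
    simp
  simp only [pot, start]
  rw [e1, e2]
  nlinarith

theorem PackState.Inv.H_le_pot {s : PackState} (hs : s.Inv) (N : ℕ) : s.H ≤ 2 * s.pot N := by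
  have h1 : 0 ≤ ∑ b ∈ Finset.range N, s.sx b * dyad b / 2 :=
    Finset.sum_nonneg fun b _ => by have := hs.sx0 b; have := dyad_pos b; positivity
  have h2 : 0 ≤ ∑ k ∈ Finset.range N ×ˢ Finset.range N, (s.ox k * dyad k.2 + s.oy k * dyad k.1) :=
    Finset.sum_nonneg fun k _ => by
      have := hs.ox0 k
      have := hs.oy0 k
      have := dyad_pos k.1
      have := dyad_pos k.2
      positivity
  unfold pot
  linarith

/-! ### The run of the algorithm -/

theorem packRun_take_succ (l : List LShape) (i : ℕ) (hi : i < l.length) :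
    packRun (l.take (i + 1)) = (packRun (l.take i)).step l[i] := by
  rw [← List.take_append_getElem hi, packRun, packRun, List.foldl_append]
  rfl

theorem planePlaceOf_packAlg (l : List LShape) (i : Fin l.length) :
    planePlaceOf packAlg l i =
      ((packRun (l.take i)).prep (l.get i).cls).corner (l.get i).cls := by
  have h : l.take (i.1 + 1) = l.take i ++ [l.get i] := (List.take_append_getElem i.2).symm
  rw [planePlaceOf, h]
  simp only [packAlg, List.dropLast_concat, List.getLastD_concat]

theorem inv_packRun {l : List LShape} (hl : ∀ L ∈ l, L.IsValid ∧ 0 < L.wx ∧ 0 < L.wy)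
    (n : ℕ) (hn : n ≤ l.length) : (packRun (l.take n)).Inv := by
  induction n with
  | zero => simpa [packRun] using PackState.inv_start
  | succ n ih =>
    obtain ⟨h1, h2, h3⟩ := hl _ (List.getElem_mem (h := hn))
    rw [packRun_take_succ l n hn]
    exact (PackState.step_spec (ih (by lia)) h1 h2 h3).1

theorem free_packRun_anti {l : List LShape} (hl : ∀ L ∈ l, L.IsValid ∧ 0 < L.wx ∧ 0 < L.wy)
    {m n : ℕ} (hmn : m ≤ n) (hn : n ≤ l.length) :
    (packRun (l.take n)).free ⊆ (packRun (l.take m)).free ∧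
      (packRun (l.take m)).H ≤ (packRun (l.take n)).H := by
  induction n, hmn using Nat.le_induction with
  | base => exact ⟨subset_rfl, le_rfl⟩
  | succ n hmn ih =>
    obtain ⟨h1, h2, h3⟩ := hl _ (List.getElem_mem (h := hn))
    obtain ⟨i1, i2⟩ := ih (by lia)
    rw [packRun_take_succ l n hn]
    have := PackState.step_spec (inv_packRun hl n (by lia)) h1 h2 h3
    exact ⟨this.2.1.trans i1, i2.trans this.2.2.1⟩

theorem packAlg_onlinePlaces {l : List LShape}
    (hl : ∀ L ∈ l, L.IsValid ∧ 0 < L.wx ∧ 0 < L.wy) : OnlinePlaces packAlg l := by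
  have key : ∀ i j : Fin l.length, i < j →
      Disjoint (interior (planeTranslate (planePlaceOf packAlg l i) (l.get i).toSet))
             (interior (planeTranslate (planePlaceOf packAlg l j) (l.get j).toSet)) := by
    intro i j hij
    obtain ⟨h1, h2, h3⟩ := hl _ (List.get_mem l i)
    obtain ⟨g1, g2, g3⟩ := hl _ (List.get_mem l j)
    have hi := PackState.step_spec (inv_packRun hl i i.2.le) h1 h2 h3
    have hj := PackState.step_spec (inv_packRun hl j j.2.le) g1 g2 g3
    rw [planePlaceOf_packAlg, planePlaceOf_packAlg]
    refine hi.2.2.2.2.1.mono_right (hj.2.2.2.1.trans ?_)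
    have := (free_packRun_anti hl (Nat.succ_le_of_lt hij) j.2.le).1
    rwa [Nat.succ_eq_add_one, packRun_take_succ l i i.2] at this
  intro i j hij
  rcases lt_or_gt_of_ne hij with h | h
  · exact key i j h
  · exact (key j i h).symm

theorem packAlg_subset {l : List LShape}
    (hl : ∀ L ∈ l, L.IsValid ∧ 0 < L.wx ∧ 0 < L.wy) :
    (⋃ i : Fin l.length, planeTranslate (planePlaceOf packAlg l i) (l.get i).toSet) ⊆
      Set.Icc 0 4 ×ˢ Set.Icc 0 (packRun l).H := by
  refine Set.iUnion_subset fun i => ?_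
  obtain ⟨h1, h2, h3⟩ := hl _ (List.get_mem l i)
  have hi := PackState.step_spec (inv_packRun hl i i.2.le) h1 h2 h3
  rw [planePlaceOf_packAlg]
  refine hi.2.2.2.2.2.trans (Set.prod_mono subset_rfl (Set.Icc_subset_Icc le_rfl ?_))
  have := (free_packRun_anti hl (Nat.succ_le_of_lt i.2) le_rfl).2
  rwa [Nat.succ_eq_add_one, packRun_take_succ l i i.2, List.take_length] at this

theorem packRun_H_le {l : List LShape} (hl : ∀ L ∈ l, L.IsValid ∧ 0 < L.wx ∧ 0 < L.wy) :
    (packRun l).H ≤ 16 + 8 * ∑ i : Fin l.length, (l.get i).halfArea := by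
  obtain ⟨N, hN⟩ : ∃ N, ∀ i : Fin l.length, (l.get i).cls.1 < N ∧ (l.get i).cls.2 < N := by
    refine ⟨∑ i : Fin l.length, ((l.get i).cls.1 + (l.get i).cls.2) + 1, fun i => ?_⟩
    have := Finset.single_le_sum
      (f := fun i : Fin l.length => (l.get i).cls.1 + (l.get i).cls.2)
      (fun _ _ => Nat.zero_le _) (Finset.mem_univ i)
    constructor <;> lia
  have key : ∀ n ≤ l.length, (packRun (l.take n)).pot N ≤
      8 + 4 * ((l.take n).map LShape.halfArea).sum := by
    intro n
    induction n with
    | zero => intro _; simpa [packRun] using PackState.pot_start N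
    | succ n ih =>
      intro hn
      obtain ⟨h1, h2, h3⟩ := hl _ (List.getElem_mem (h := hn))
      have := PackState.pot_step N (inv_packRun hl n (by lia)) h1 h2 h3
        (hN ⟨n, hn⟩).1 (hN ⟨n, hn⟩).2
      rw [packRun_take_succ l n hn, ← List.take_append_getElem hn]
      simp only [List.map_append, List.sum_append, List.map_cons, List.map_nil, List.sum_singleton]
      linarith [ih (by lia)]
  have h := key l.length le_rfl
  have hI := inv_packRun hl l.length le_rfl
  rw [List.take_length] at h hI
  have e : ∑ i : Fin l.length, (l.get i).halfArea = (l.map LShape.halfArea).sum := by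
    have := List.map_ofFn (f := l.get) (g := LShape.halfArea)
    rw [List.ofFn_get] at this
    rw [this, List.sum_ofFn]
    rfl
  rw [e]
  linarith [hI.H_le_pot N]

/-! ### Bounding boxes -/

theorem bboxArea_le_of_subset {U : Set (ℝ × ℝ)} {W H : ℝ} (hW : 0 ≤ W) (hH : 0 ≤ H)
    (h : U ⊆ Set.Icc 0 W ×ˢ Set.Icc 0 H) : bboxArea U ≤ W * H := by
  have a1 : ∀ x ∈ (fun p : ℝ × ℝ => p.1) '' U, 0 ≤ x ∧ x ≤ W := by
    rintro _ ⟨p, hp, rfl⟩; exact (h hp).1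
  have a2 : ∀ x ∈ (fun p : ℝ × ℝ => p.2) '' U, 0 ≤ x ∧ x ≤ H := by
    rintro _ ⟨p, hp, rfl⟩; exact (h hp).2
  have b1 := Real.sSup_le (fun x hx => (a1 x hx).2) hW
  have b2 := Real.sSup_le (fun x hx => (a2 x hx).2) hH
  have c1 := Real.sInf_nonneg fun x hx => (a1 x hx).1
  have c2 := Real.sInf_nonneg fun x hx => (a2 x hx).1
  have d := Real.sInf_le_sSup _ ⟨0, fun x hx => (a2 x hx).1⟩ ⟨H, fun x hx => (a2 x hx).2⟩
  unfold bboxArea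
  exact mul_le_mul (by linarith) (by linarith) (by linarith) hW

open MeasureTheory in
theorem halfArea_le_volume {L : LShape} (hL : L.IsValid) (v : ℝ × ℝ) :
    ENNReal.ofReal L.halfArea ≤ volume (interior (planeTranslate v L.toSet)) := by
  obtain ⟨h1, h2, h3, h4, h5, h6⟩ := hL
  have arm : ∀ x y : ℝ, 0 ≤ x → 0 ≤ y →
      Set.Ioo v.1 (v.1 + x) ×ˢ Set.Ioo v.2 (v.2 + y) ⊆ planeTranslate v L.toSet →
      ENNReal.ofReal (x * y) ≤ volume (interior (planeTranslate v L.toSet)) := by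
    intro x y hx hy h
    have : volume (Set.Ioo v.1 (v.1 + x) ×ˢ Set.Ioo v.2 (v.2 + y)) = ENNReal.ofReal (x * y) := by
      rw [Measure.volume_eq_prod, Measure.prod_prod, Real.volume_Ioo, Real.volume_Ioo,
        ← ENNReal.ofReal_mul (by linarith)]
      congr 1
      ring
    rw [← this]
    exact measure_mono (interior_maximal h (isOpen_Ioo.prod isOpen_Ioo))
  have A1 := arm L.lx L.wy (by linarith) h4 fun p hp => by
    rw [mem_planeTranslate_iff]
    exact Or.inl ⟨hp.1.1.le, hp.1.2.le, hp.2.1.le, hp.2.2.le⟩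
  have A2 := arm L.wx L.ly h1 (by linarith) fun p hp => by
    rw [mem_planeTranslate_iff]
    exact Or.inr ⟨hp.1.1.le, hp.1.2.le, hp.2.1.le, hp.2.2.le⟩
  rcases le_total (L.lx * L.wy) (L.wx * L.ly) with h | h
  · exact (ENNReal.ofReal_le_ofReal (by unfold LShape.halfArea; linarith)).trans A2
  · exact (ENNReal.ofReal_le_ofReal (by unfold LShape.halfArea; linarith)).trans A1

open MeasureTheory in
/-- The bounding box of any placement with disjoint interiors has at least the total area of the
items. -/
theorem sum_halfArea_le_bboxArea {l : List LShape} (hl : ∀ L ∈ l, L.IsValid)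
    (u : Fin l.length → ℝ × ℝ)
    (hu : ∀ i j, i ≠ j → Disjoint (interior (planeTranslate (u i) (l.get i).toSet))
      (interior (planeTranslate (u j) (l.get j).toSet))) :
    ∑ i, (l.get i).halfArea ≤ bboxArea (⋃ i, planeTranslate (u i) (l.get i).toSet) := by
  set U := ⋃ i, planeTranslate (u i) (l.get i).toSet with hU
  have hcomp : IsCompact U := by
    refine isCompact_iUnion fun i => ?_
    exact (isCompact_Icc.union isCompact_Icc).image (by fun_prop)
  have k1 : IsCompact ((fun p : ℝ × ℝ => p.1) '' U) := hcomp.image continuous_fst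
  have k2 : IsCompact ((fun p : ℝ × ℝ => p.2) '' U) := hcomp.image continuous_snd
  unfold bboxArea
  set a := sInf ((fun p : ℝ × ℝ => p.1) '' U)
  set b := sSup ((fun p : ℝ × ℝ => p.1) '' U)
  set c := sInf ((fun p : ℝ × ℝ => p.2) '' U)
  set d := sSup ((fun p : ℝ × ℝ => p.2) '' U)
  have hab : a ≤ b := Real.sInf_le_sSup _ k1.bddBelow k1.bddAbove
  have hcd : c ≤ d := Real.sInf_le_sSup _ k2.bddBelow k2.bddAbove
  have hsub : U ⊆ Set.Icc a b ×ˢ Set.Icc c d := by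
    intro p hp
    exact ⟨⟨csInf_le k1.bddBelow ⟨p, hp, rfl⟩, le_csSup k1.bddAbove ⟨p, hp, rfl⟩⟩,
      csInf_le k2.bddBelow ⟨p, hp, rfl⟩, le_csSup k2.bddAbove ⟨p, hp, rfl⟩⟩
  have hnn : ∀ i, 0 ≤ (l.get i).halfArea := by
    intro i
    obtain ⟨h1, h2, h3, h4, h5, h6⟩ := hl _ (List.get_mem l i)
    have : 0 ≤ (l.get i).lx := h1.trans h2
    have : 0 ≤ (l.get i).ly := h4.trans h5
    unfold LShape.halfArea
    positivity
  rw [← ENNReal.ofReal_le_ofReal_iff (mul_nonneg (by linarith) (by linarith)),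
    ENNReal.ofReal_sum_of_nonneg fun i _ => hnn i]
  calc ∑ i, ENNReal.ofReal (l.get i).halfArea
      ≤ ∑ i, volume (interior (planeTranslate (u i) (l.get i).toSet)) :=
        Finset.sum_le_sum fun i _ => halfArea_le_volume (hl _ (List.get_mem l i)) _
    _ = volume (⋃ i, interior (planeTranslate (u i) (l.get i).toSet)) := by
        rw [measure_iUnion (fun i j hij => hu i j hij) fun i => isOpen_interior.measurableSet,
          tsum_fintype]
    _ ≤ volume (Set.Icc a b ×ˢ Set.Icc c d) :=
        measure_mono ((Set.iUnion_mono fun i => interior_subset).trans hsub)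
    _ = ENNReal.ofReal ((b - a) * (d - c)) := by
        rw [Measure.volume_eq_prod, Measure.prod_prod, Real.volume_Icc, Real.volume_Icc,
          ← ENNReal.ofReal_mul (by linarith)]

/-- there are a constant `c > 0` and a deterministic online algorithm placing
L-shapes in the plane by translations with pairwise disjoint interiors such that, on every
input sequence of `n` L-shapes with arm lengths in `[0,1]` and positive widths, the
bounding-box area of the produced placement is at most `c·√n·OPT + c`, where `OPT` is the
minimum bounding-box area over all offline placements with pairwise disjoint interiors. -/
theorem stmt10 :
    ∃ c : ℝ, 0 < c ∧
    ∃ A : List LShape → ℝ × ℝ,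
      ∀ l : List LShape, (∀ L ∈ l, L.IsValid ∧ 0 < L.wx ∧ 0 < L.wy) →
        OnlinePlaces A l ∧
        bboxArea (⋃ i : Fin l.length,
            planeTranslate (planePlaceOf A l i) (l.get i).toSet) ≤
          c * Real.sqrt l.length *
            sInf {P : ℝ | ∃ u : Fin l.length → ℝ × ℝ,
              (∀ i j, i ≠ j →
                Disjoint (interior (planeTranslate (u i) (l.get i).toSet))
                         (interior (planeTranslate (u j) (l.get j).toSet))) ∧
              P = bboxArea (⋃ i, planeTranslate (u i) (l.get i).toSet)} + c := by
  refine ⟨64, by norm_num, packAlg, fun l hl => ⟨packAlg_onlinePlaces hl, ?_⟩⟩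
  have hH0 : 0 ≤ (packRun l).H := by
    simpa using (inv_packRun hl l.length le_rfl).H0
  have hbox := bboxArea_le_of_subset (by norm_num) hH0 (packAlg_subset hl)
  have hH := packRun_H_le hl
  set opt := sInf {P : ℝ | ∃ u : Fin l.length → ℝ × ℝ,
    (∀ i j, i ≠ j →
      Disjoint (interior (planeTranslate (u i) (l.get i).toSet))
               (interior (planeTranslate (u j) (l.get j).toSet))) ∧
    P = bboxArea (⋃ i, planeTranslate (u i) (l.get i).toSet)} with hopt
  have hle : ∑ i : Fin l.length, (l.get i).halfArea ≤ opt := by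
    refine le_csInf ⟨_, planePlaceOf packAlg l, packAlg_onlinePlaces hl, rfl⟩ ?_
    rintro P ⟨u, hu, rfl⟩
    exact sum_halfArea_le_bboxArea (fun L hL => (hl L hL).1) u hu
  have h0 : 0 ≤ ∑ i : Fin l.length, (l.get i).halfArea := by
    refine Finset.sum_nonneg fun i _ => ?_
    obtain ⟨⟨-, h2, -, -, h5, -⟩, h1, h4⟩ := hl _ (List.get_mem l i)
    have := h1.trans_le h2
    have := h4.trans_le h5
    unfold LShape.halfArea
    positivity
  -- `√n ≥ 1` unless the list is empty, in which case the total area vanishes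
  have hsqrt : ∑ i : Fin l.length, (l.get i).halfArea ≤ Real.sqrt l.length * opt := by
    rcases Nat.eq_zero_or_pos l.length with h | h
    · have : l = [] := List.length_eq_zero_iff.1 h
      subst this
      simp
    · have : 1 ≤ Real.sqrt l.length := Real.one_le_sqrt.2 (by exact_mod_cast h)
      nlinarith
  nlinarith
end

section
/- For every real t with 0 < t < 1, setting A = (1−t)³/125, there exists a deterministic online algorithm for placing L-shapes into the single unit bin [0,1]² by translations (each placement irrevocable, all translates contained in [0,1]² with pairwise disjoint interiors) that successfully places every item of every finite input sequence of L-shapes whose arm lengths satisfy ℓx ≤ t and ℓy ≤ t and whose total area is at most A. In particular, the online critical packing density for L-shapes with arm lengths bounded by t < 1 is positive. -/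
/-- The area of an L-shape. -/
noncomputable def LShape.area (L : LShape) : ℝ :=
  L.lx * L.wy + L.wx * L.ly - L.wx * L.wy

/-! ### Separation of translated L-shapes -/

namespace OnlineL

theorem mem_translate (L : LShape) (v p : ℝ × ℝ) :
    p ∈ planeTranslate v L.toSet ↔
      (v.1 ≤ p.1 ∧ p.1 ≤ v.1 + L.lx ∧ v.2 ≤ p.2 ∧ p.2 ≤ v.2 + L.wy) ∨
      (v.1 ≤ p.1 ∧ p.1 ≤ v.1 + L.wx ∧ v.2 ≤ p.2 ∧ p.2 ≤ v.2 + L.ly) := by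
  constructor
  · rintro ⟨q, hq, rfl⟩
    rcases hq with ⟨h1, h2⟩ | ⟨h1, h2⟩ <;> rw [Prod.le_def] at h1 h2 <;>
      simp only [Prod.fst_add, Prod.snd_add] at * <;> [left; right] <;>
      refine ⟨?_, ?_, ?_, ?_⟩ <;> linarith [h1.1, h1.2, h2.1, h2.2]
  · intro h
    refine ⟨p - v, ?_, by simp⟩
    rcases h with ⟨h1, h2, h3, h4⟩ | ⟨h1, h2, h3, h4⟩ <;> [left; right] <;>
      refine ⟨Prod.le_def.2 ⟨?_, ?_⟩, Prod.le_def.2 ⟨?_, ?_⟩⟩ <;>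
      simp only [Prod.fst_sub, Prod.snd_sub] <;> linarith

theorem translate_subset_unitBin {L : LShape} (hL : L.IsValid) {v : ℝ × ℝ}
    (h1 : 0 ≤ v.1) (h2 : 0 ≤ v.2) (h3 : v.1 + L.lx ≤ 1) (h4 : v.2 + L.ly ≤ 1) :
    planeTranslate v L.toSet ⊆ unitBin := by
  obtain ⟨a1, a2, a3, a4, a5, a6⟩ := hL
  intro p hp
  rw [mem_translate] at hp
  refine ⟨Prod.le_def.2 ?_, Prod.le_def.2 ?_⟩ <;> rcases hp with hp | hp <;>
    constructor <;> simp only <;> linarith [hp.1, hp.2.1, hp.2.2.1, hp.2.2.2]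

/-- Moving an interior point slightly along the diagonal stays in the set. -/
theorem exists_diag_of_mem_interior {S : Set (ℝ × ℝ)} {p : ℝ × ℝ} (hp : p ∈ interior S) :
    ∃ e : ℝ, 0 < e ∧ (p.1 + e, p.2 + e) ∈ S := by
  have hc : Filter.Tendsto (fun e : ℝ => (p.1 + e, p.2 + e)) (nhdsWithin 0 (Set.Ioi 0))
      (nhds p) := by
    have : ContinuousAt (fun e : ℝ => (p.1 + e, p.2 + e)) 0 := by fun_prop
    have h := this.tendsto
    simp only [add_zero] at h
    exact h.mono_left nhdsWithin_le_nhds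
  have h1 := hc.eventually (mem_interior_iff_mem_nhds.1 hp)
  obtain ⟨e, he, he'⟩ := (h1.and self_mem_nhdsWithin).exists
  exact ⟨e, he', he⟩

/-- A sufficient condition for `L` at `v` and `L'` at `v'` to be separated: `L'` lies to the
right of `L`, or above `L`, or in the quadrant spanned by the inner corner of `L`. -/
def Before (L : LShape) (v : ℝ × ℝ) (v' : ℝ × ℝ) : Prop :=
  v.1 + L.lx ≤ v'.1 ∨ v.2 + L.ly ≤ v'.2 ∨ (v.1 + L.wx ≤ v'.1 ∧ v.2 + L.wy ≤ v'.2)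

theorem Before.disjoint {L L' : LShape} (hL : L.IsValid) {v v' : ℝ × ℝ} (h : Before L v v') :
    Disjoint (interior (planeTranslate v L.toSet)) (interior (planeTranslate v' L'.toSet)) := by
  obtain ⟨a1, a2, a3, a4, a5, a6⟩ := hL
  rw [Set.disjoint_left]
  intro p hp hp'
  obtain ⟨e, he, hm⟩ := exists_diag_of_mem_interior hp
  have hm' := interior_subset hp'
  rw [mem_translate] at hm hm'
  have hq : v'.1 ≤ p.1 ∧ v'.2 ≤ p.2 := by
    rcases hm' with h | h <;> exact ⟨h.1, h.2.2.1⟩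
  simp only at hm
  rcases h with h | h | ⟨h, h'⟩ <;> rcases hm with hm | hm <;>
    linarith [hm.1, hm.2.1, hm.2.2.1, hm.2.2.2, hq.1, hq.2]

theorem interior_eq_empty {L : LShape} (hL : L.IsValid) (h : L.lx ≤ 0 ∨ L.ly ≤ 0)
    (v : ℝ × ℝ) : interior (planeTranslate v L.toSet) = ∅ := by
  obtain ⟨a1, a2, a3, a4, a5, a6⟩ := hL
  rw [Set.eq_empty_iff_forall_notMem]
  intro p hp
  obtain ⟨e, he, hm⟩ := exists_diag_of_mem_interior hp
  have hm' := interior_subset hp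
  rw [mem_translate] at hm hm'
  simp only at hm
  rcases h with h | h <;> rcases hm with hm | hm <;> rcases hm' with hm' | hm' <;>
    linarith [hm.1, hm.2.1, hm.2.2.1, hm.2.2.2, hm'.1, hm'.2.1, hm'.2.2.1, hm'.2.2.2]

theorem area_ge {L : LShape} (hL : L.IsValid) :
    L.wx * L.ly ≤ L.area ∧ L.wy * L.lx ≤ L.area ∧ 0 ≤ L.area := by
  obtain ⟨a1, a2, a3, a4, a5, a6⟩ := hL
  unfold LShape.area
  refine ⟨?_, ?_, ?_⟩ <;> nlinarith [mul_nonneg a4 (sub_nonneg.2 a2),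
    mul_nonneg a1 (sub_nonneg.2 a5), mul_nonneg a1 (a4.trans a5), mul_nonneg a4 (a1.trans a2)]

/-! ### Online allocation of intervals on a tape -/

section Tape

set_option linter.unusedSectionVars false

variable {Λ : Type*} [DecidableEq Λ]

/-- A tape is cut, from left to right, into consecutive intervals, one for each label in order
of first appearance in the sequence `lab`; the interval of the label `a` has length `h a`.
`base lab h i` is the left end of the interval belonging to `lab i`. It depends only on
`lab 0, …, lab i`. -/
noncomputable def base (lab : ℕ → Λ) (h : Λ → ℝ) (i : ℕ) : ℝ :=
  ∑ a ∈ (Finset.range (sInf {j | lab j = lab i})).image lab, h a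

theorem first_le (lab : ℕ → Λ) (i : ℕ) : sInf {j | lab j = lab i} ≤ i :=
  Nat.sInf_le rfl

theorem lab_first (lab : ℕ → Λ) (i : ℕ) : lab (sInf {j | lab j = lab i}) = lab i :=
  Nat.sInf_mem (s := {j | lab j = lab i}) ⟨i, rfl⟩

theorem notMem_first (lab : ℕ → Λ) (i : ℕ) :
    lab i ∉ (Finset.range (sInf {j | lab j = lab i})).image lab := by
  intro h
  obtain ⟨j, hj, hji⟩ := Finset.mem_image.1 h
  exact Nat.notMem_of_lt_sInf (Finset.mem_range.1 hj) hji

theorem base_congr {lab lab' : ℕ → Λ} {h : Λ → ℝ} {i : ℕ} (hl : ∀ j ≤ i, lab j = lab' j) :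
    base lab h i = base lab' h i := by
  have key : sInf {j | lab j = lab i} = sInf {j | lab' j = lab' i} := by
    apply le_antisymm
    · apply Nat.sInf_le
      rw [Set.mem_ofPred_eq, hl _ (first_le lab' i), hl i le_rfl, lab_first lab' i]
    · apply Nat.sInf_le
      rw [Set.mem_ofPred_eq, ← hl _ (first_le lab i), ← hl i le_rfl, lab_first lab i]
  unfold base
  rw [← key]
  congr 1
  apply Finset.image_congr
  intro j hj
  exact hl j ((Finset.mem_range.1 hj).le.trans (first_le lab i))

theorem base_eq_of_lab_eq {lab : ℕ → Λ} {h : Λ → ℝ} {i j : ℕ} (hl : lab i = lab j) :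
    base lab h i = base lab h j := by
  unfold base
  rw [hl]

theorem base_nonneg {lab : ℕ → Λ} {h : Λ → ℝ} (hh : ∀ a, 0 ≤ h a) (i : ℕ) :
    0 ≤ base lab h i :=
  Finset.sum_nonneg fun a _ => hh a

theorem base_add_le_of_first_lt {lab : ℕ → Λ} {h : Λ → ℝ} (hh : ∀ a, 0 ≤ h a) {i j : ℕ}
    (hlt : sInf {k | lab k = lab i} < sInf {k | lab k = lab j}) :
    base lab h i + h (lab i) ≤ base lab h j := by
  unfold base
  rw [add_comm, ← Finset.sum_insert (notMem_first lab i)]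
  apply Finset.sum_le_sum_of_subset_of_nonneg
  · intro a ha
    rcases Finset.mem_insert.1 ha with rfl | ha
    · exact Finset.mem_image.2 ⟨_, Finset.mem_range.2 hlt, lab_first lab i⟩
    · obtain ⟨k, hk, rfl⟩ := Finset.mem_image.1 ha
      exact Finset.mem_image_of_mem _
        (Finset.mem_range.2 ((Finset.mem_range.1 hk).trans hlt))
  · intro a _ _
    exact hh a

/-- Intervals of different labels do not overlap. -/
theorem base_separated {lab : ℕ → Λ} {h : Λ → ℝ} (hh : ∀ a, 0 ≤ h a) {i j : ℕ}
    (hne : lab i ≠ lab j) :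
    base lab h i + h (lab i) ≤ base lab h j ∨ base lab h j + h (lab j) ≤ base lab h i := by
  rcases lt_trichotomy (sInf {k | lab k = lab i}) (sInf {k | lab k = lab j}) with hl | hl | hl
  · exact Or.inl (base_add_le_of_first_lt hh hl)
  · exact absurd (by rw [← lab_first lab i, hl, lab_first lab j]) hne
  · exact Or.inr (base_add_le_of_first_lt hh hl)

theorem base_add_le {lab : ℕ → Λ} {h : Λ → ℝ} (hh : ∀ a, 0 ≤ h a) (i : ℕ) :
    base lab h i + h (lab i) ≤ ∑ a ∈ (Finset.range (i + 1)).image lab, h a := by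
  unfold base
  rw [add_comm, ← Finset.sum_insert (notMem_first lab i)]
  apply Finset.sum_le_sum_of_subset_of_nonneg
  · intro a ha
    rcases Finset.mem_insert.1 ha with rfl | ha
    · exact Finset.mem_image_of_mem _ (Finset.mem_range.2 (Nat.lt_succ_self i))
    · obtain ⟨k, hk, rfl⟩ := Finset.mem_image.1 ha
      have := first_le lab i
      have := Finset.mem_range.1 hk
      exact Finset.mem_image_of_mem _ (Finset.mem_range.2 (by omega))
  · intro a _ _
    exact hh a

theorem sum_dyadic_le (K : Finset ℕ) : ∑ k ∈ K, (1 / 2 : ℝ) ^ k ≤ 2 := by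
  have h : ∑ k ∈ K, (1 / 2 : ℝ) ^ k ≤ ∑' k : ℕ, (1 / 2 : ℝ) ^ k :=
    Summable.sum_le_tsum _ (fun _ _ => by positivity) summable_geometric_two
  rwa [tsum_geometric_two] at h

/-- Bound for the tape length consumed by the labels satisfying `p`. Such a label `a` has a
size class `K a`, its interval has the dyadic length `2 c / 2 ^ K a`, and it carries a serial
number `N a` inside its class. If serial numbers are bounded by `D + E 2 ^ k` times the area that
arrived in class `k`, then the classes cost one interval each (a geometric series), plus a
constant multiple of the area. -/
theorem tape_bound (I : Finset ℕ) (lab : ℕ → Λ) (p : Λ → Prop) [DecidablePred p]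
    (K N : Λ → ℕ) (inj : ∀ a b, p a → p b → K a = K b → N a = N b → a = b)
    (area : ℕ → ℝ) (harea : ∀ j ∈ I, 0 ≤ area j) {c D E : ℝ} (hc : 0 ≤ c) (hD : 0 ≤ D)
    (hE : 0 ≤ E)
    (hN : ∀ i ∈ I, p (lab i) → (N (lab i) : ℝ) ≤
      D + E * 2 ^ K (lab i) * ∑ j ∈ I with p (lab j) ∧ K (lab j) = K (lab i), area j) :
    ∑ a ∈ I.image lab, (if p a then 2 * c / 2 ^ K a else 0) ≤
      4 * c * (1 + D) + 2 * c * E * ∑ j ∈ I with p (lab j), area j := by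
  set T : Finset Λ := (I.image lab).filter p with hT
  set B : ℕ → ℝ := fun k => ∑ j ∈ I with p (lab j) ∧ K (lab j) = k, area j with hB
  have hB0 : ∀ k, 0 ≤ B k := fun k =>
    Finset.sum_nonneg fun j hj => harea j (Finset.mem_filter.1 hj).1
  have hTmem : ∀ a ∈ T, p a ∧ (N a : ℝ) ≤ D + E * 2 ^ K a * B (K a) := by
    intro a ha
    obtain ⟨h1, h2⟩ := Finset.mem_filter.1 ha
    obtain ⟨i, hi, rfl⟩ := Finset.mem_image.1 h1
    exact ⟨h2, hN i hi h2⟩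
  have hcard : ∀ k, (((T.filter fun a => K a = k).card : ℕ) : ℝ) ≤
      1 + D + E * 2 ^ k * B k := by
    intro k
    have hnn : 0 ≤ D + E * 2 ^ k * B k := by
      have := hB0 k
      positivity
    have h1 : (T.filter fun a => K a = k).card ≤
        (Finset.range (⌊D + E * 2 ^ k * B k⌋₊ + 1)).card := by
      apply Finset.card_le_card_of_injOn N
      · intro a ha
        obtain ⟨ha1, ha2⟩ := Finset.mem_filter.1 ha
        have := (hTmem a ha1).2
        rw [ha2] at this
        have := Nat.le_floor this
        exact Finset.mem_coe.2 (Finset.mem_range.2 (by omega))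
      · intro a ha b hb hab
        obtain ⟨ha1, ha2⟩ := Finset.mem_filter.1 ha
        obtain ⟨hb1, hb2⟩ := Finset.mem_filter.1 hb
        exact inj a b (hTmem a ha1).1 (hTmem b hb1).1 (ha2.trans hb2.symm) hab
    rw [Finset.card_range] at h1
    have h2 : (((T.filter fun a => K a = k).card : ℕ) : ℝ) ≤
        (⌊D + E * 2 ^ k * B k⌋₊ : ℝ) + 1 := by exact_mod_cast h1
    linarith [Nat.floor_le hnn]
  rw [← Finset.sum_filter, ← hT,
    ← Finset.sum_fiberwise_of_maps_to (t := T.image K) (g := K)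
      (fun a ha => Finset.mem_image_of_mem _ ha)]
  calc ∑ k ∈ T.image K, ∑ a ∈ T with K a = k, 2 * c / 2 ^ K a
      ≤ ∑ k ∈ T.image K, (2 * c * (1 + D) * (1 / 2) ^ k + 2 * c * E * B k) := by
        apply Finset.sum_le_sum
        intro k _
        have h1 : ∑ a ∈ T with K a = k, 2 * c / 2 ^ K a =
            ((T.filter fun a => K a = k).card : ℝ) * (2 * c / 2 ^ k) := by
          rw [← nsmul_eq_mul, ← Finset.sum_const]
          apply Finset.sum_congr rfl
          intro a ha
          rw [(Finset.mem_filter.1 ha).2]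
        rw [h1]
        calc _ ≤ (1 + D + E * 2 ^ k * B k) * (2 * c / 2 ^ k) :=
              mul_le_mul_of_nonneg_right (hcard k) (by positivity)
          _ = _ := by
              rw [one_div, inv_pow]
              field_simp
    _ = 2 * c * (1 + D) * ∑ k ∈ T.image K, (1 / 2 : ℝ) ^ k +
          2 * c * E * ∑ k ∈ T.image K, B k := by
        rw [Finset.sum_add_distrib, Finset.mul_sum, Finset.mul_sum]
    _ ≤ 2 * c * (1 + D) * 2 + 2 * c * E * ∑ j ∈ I with p (lab j), area j := by
        have h1 := sum_dyadic_le (T.image K)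
        have h2 : ∑ k ∈ T.image K, B k = ∑ j ∈ I with p (lab j), area j := by
          rw [← Finset.sum_fiberwise_of_maps_to (s := I.filter fun j => p (lab j))
            (t := T.image K) (g := fun j => K (lab j))]
          · apply Finset.sum_congr rfl
            intro k _
            rw [Finset.filter_filter]
          · intro j hj
            obtain ⟨hj1, hj2⟩ := Finset.mem_filter.1 hj
            exact Finset.mem_image_of_mem K
              (Finset.mem_filter.2 ⟨Finset.mem_image_of_mem _ hj1, hj2⟩)
        rw [h2]
        gcongr
    _ = _ := by ring

end Tape

/-! ### The placement rule -/

/-- The five kinds of items, relative to a threshold `c` for the arm lengths: degenerate (some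
arm has length zero), both arms longer than `c`, only the vertical arm longer than `c`, only the
horizontal arm longer than `c`, and both arms at most `c`. -/
inductive Kind
  | deg | long | vert | horiz | small

noncomputable instance : DecidableEq Kind := Classical.decEq Kind

/-- The dyadic class of a length `0 < x ≤ c`: the number `k` with
`c / 2 ^ (k + 1) < x ≤ c / 2 ^ k`. -/
noncomputable def cls (c x : ℝ) : ℕ := sInf {k : ℕ | c / 2 ^ (k + 1) < x}

/-- The kind of an item. -/
noncomputable def kind (c : ℝ) (L : LShape) : Kind :=
  if L.lx ≤ 0 ∨ L.ly ≤ 0 then .deg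
  else if L.lx ≤ c then (if L.ly ≤ c then .small else .vert)
  else (if L.ly ≤ c then .horiz else .long)

/-- The class of an item: its kind, and the dyadic classes of those arms that are at most `c`. -/
noncomputable def cell (c : ℝ) (L : LShape) : Kind × ℕ × ℕ :=
  match kind c L with
  | .vert => (.vert, cls c L.lx, 0)
  | .horiz => (.horiz, 0, cls c L.ly)
  | .small => (.small, cls c L.lx, cls c L.ly)
  | .long => (.long, 0, 0)
  | .deg => (.deg, 0, 0)

/-- The amount of area of items of a class after which a new box is opened for that class. -/
noncomputable def cap (c : ℝ) : Kind × ℕ × ℕ → ℝ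
  | (.vert, k, _) => c * (c / 2 ^ k)
  | (.horiz, _, m) => c * (c / 2 ^ m)
  | (.small, k, m) => (c / 2 ^ k) * (c / 2 ^ m) / 2
  | (.long, _, _) => c
  | (.deg, _, _) => 1

/-- The filling of the class of item `i` by the items before `i`, in units of boxes. -/
noncomputable def fill (c : ℝ) (s : ℕ → LShape) (i : ℕ) : ℝ :=
  (∑ j ∈ Finset.range i with cell c (s j) = cell c (s i), (s j).area) / cap c (cell c (s i))

/-- The box receiving item `i`: its class together with a serial number. -/
noncomputable def box (c : ℝ) (s : ℕ → LShape) (i : ℕ) : (Kind × ℕ × ℕ) × ℕ :=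
  (cell c (s i), ⌊fill c s i⌋₊)

/-- The relative position of item `i` along the diagonal of its box. -/
noncomputable def off (c : ℝ) (s : ℕ → LShape) (i : ℕ) : ℝ :=
  fill c s i - ⌊fill c s i⌋₊

/-- The height of a box on the tape which stacks the boxes for small items of width class `k`. -/
noncomputable def stackH (c : ℝ) (k : ℕ) (b : (Kind × ℕ × ℕ) × ℕ) : ℝ :=
  if b.1.1 = Kind.small ∧ b.1.2.1 = k then 2 * c / 2 ^ b.1.2.2 else 0

/-- The position of the box of item `i` on the infinite stack of its width class. -/
noncomputable def stack (c : ℝ) (s : ℕ → LShape) (i : ℕ) : ℝ :=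
  base (box c s) (stackH c (cell c (s i)).2.1) i

/-- The column receiving item `i`. The infinite stacks of boxes for small items are cut into
columns of height `1 - 2 * c`. -/
noncomputable def colLab (c : ℝ) (s : ℕ → LShape) (i : ℕ) : Kind × ℕ × ℕ :=
  ((cell c (s i)).1, (cell c (s i)).2.1,
    if (cell c (s i)).1 = .small then ⌊stack c s i / (1 - 2 * c)⌋₊ else ⌊fill c s i⌋₊)

/-- The width of a column; it is zero for the kinds that are not placed in columns. -/
noncomputable def colW (c : ℝ) (a : Kind × ℕ × ℕ) : ℝ :=
  (if a.1 = Kind.vert then 2 * c / 2 ^ a.2.1 else 0) +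
    (if a.1 = Kind.small then 2 * c / 2 ^ a.2.1 else 0)

/-- The left side of the column of item `i`. -/
noncomputable def col (c : ℝ) (s : ℕ → LShape) (i : ℕ) : ℝ := base (colLab c s) (colW c) i

/-- The row receiving item `i`. -/
noncomputable def rowLab (c : ℝ) (s : ℕ → LShape) (i : ℕ) : Kind × ℕ × ℕ :=
  ((cell c (s i)).1, (cell c (s i)).2.2, ⌊fill c s i⌋₊)

/-- The height of a row; it is zero for the kinds that are not placed in rows. -/
noncomputable def rowH (c : ℝ) (a : Kind × ℕ × ℕ) : ℝ :=
  if a.1 = Kind.horiz then 2 * c / 2 ^ a.2.1 else 0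

/-- The lower side of the row of item `i`. -/
noncomputable def row (c : ℝ) (s : ℕ → LShape) (i : ℕ) : ℝ := base (rowLab c s) (rowH c) i

/-- The position of item `i`. Columns lie in `[0, W] × [0, 1]`, rows in `[W, 1] × [0, W]`, and the
items of kind `long` in `[W, 1] × [W, 1]`. -/
noncomputable def pos (c W : ℝ) (s : ℕ → LShape) (i : ℕ) : ℝ × ℝ :=
  match kind c (s i) with
  | .deg => (0, 0)
  | .long => (W + fill c s i, W + fill c s i)
  | .vert => (col c s i + c / 2 ^ cls c (s i).lx * off c s i, 2 * c * off c s i)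
  | .horiz => (W + 2 * c * off c s i, row c s i + c / 2 ^ cls c (s i).ly * off c s i)
  | .small => (col c s i + c / 2 ^ cls c (s i).lx * off c s i,
      stack c s i - (1 - 2 * c) * ⌊stack c s i / (1 - 2 * c)⌋₊ +
        c / 2 ^ cls c (s i).ly * off c s i)

section Online

variable {c : ℝ} {s s' : ℕ → LShape} {i : ℕ}

theorem fill_congr (h : ∀ j ≤ i, s j = s' j) : fill c s i = fill c s' i := by
  unfold fill
  rw [h i le_rfl]
  congr 1
  apply Finset.sum_congr
  · apply Finset.filter_congr
    intro j hj
    rw [h j (Finset.mem_range.1 hj).le]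
  · intro j hj
    rw [h j (Finset.mem_range.1 (Finset.mem_filter.1 hj).1).le]

theorem box_congr (h : ∀ j ≤ i, s j = s' j) : box c s i = box c s' i := by
  unfold box
  rw [fill_congr h, h i le_rfl]

theorem stack_congr (h : ∀ j ≤ i, s j = s' j) : stack c s i = stack c s' i := by
  unfold stack
  rw [h i le_rfl]
  exact base_congr fun j hj => box_congr fun k hk => h k (hk.trans hj)

theorem col_congr (h : ∀ j ≤ i, s j = s' j) : col c s i = col c s' i := by
  apply base_congr
  intro j hj
  have h' : ∀ k ≤ j, s k = s' k := fun k hk => h k (hk.trans hj)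
  unfold colLab
  rw [stack_congr h', fill_congr h', h j hj]

theorem row_congr (h : ∀ j ≤ i, s j = s' j) : row c s i = row c s' i := by
  apply base_congr
  intro j hj
  have h' : ∀ k ≤ j, s k = s' k := fun k hk => h k (hk.trans hj)
  unfold rowLab
  rw [fill_congr h', h j hj]

/-- The placement rule is online. -/
theorem pos_congr {W : ℝ} (h : ∀ j ≤ i, s j = s' j) : pos c W s i = pos c W s' i := by
  unfold pos off
  rw [stack_congr h, fill_congr h, col_congr h, row_congr h, h i le_rfl]

end Online

/-! ### Items, classes and filling -/

theorem cls_spec {c x : ℝ} (hx : 0 < x) (hxc : x ≤ c) :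
    c / 2 ^ cls c x / 2 < x ∧ x ≤ c / 2 ^ cls c x := by
  have hc : 0 < c := hx.trans_le hxc
  have hne : {k : ℕ | c / 2 ^ (k + 1) < x}.Nonempty := by
    obtain ⟨n, hn⟩ := pow_unbounded_of_one_lt (c / x) (one_lt_two (α := ℝ))
    refine ⟨n, ?_⟩
    rw [Set.mem_ofPred_eq, div_lt_iff₀ (by positivity)]
    rw [div_lt_iff₀ hx] at hn
    rw [pow_succ]
    nlinarith [pow_pos (two_pos (α := ℝ)) n]
  constructor
  · have h : c / 2 ^ (cls c x + 1) < x := Nat.sInf_mem hne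
    rwa [pow_succ, ← div_div] at h
  · rcases Nat.eq_zero_or_pos (cls c x) with h0 | h0
    · rw [h0]
      simpa using hxc
    · have hlt : cls c x - 1 < cls c x := by omega
      have h := Nat.notMem_of_lt_sInf hlt
      rw [Set.mem_ofPred_eq, not_lt, Nat.sub_add_cancel h0] at h
      exact h

theorem kind_deg {c : ℝ} {L : LShape} (h : kind c L = .deg) : L.lx ≤ 0 ∨ L.ly ≤ 0 := by
  unfold kind at h
  split_ifs at h
  assumption

theorem kind_long {c : ℝ} {L : LShape} (h : kind c L = .long) : c < L.lx ∧ c < L.ly := by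
  unfold kind at h
  split_ifs at h
  constructor <;> linarith

theorem kind_vert {c : ℝ} {L : LShape} (h : kind c L = .vert) :
    0 < L.lx ∧ L.lx ≤ c ∧ c < L.ly := by
  unfold kind at h
  split_ifs at h with h1 h2 h3
  push Not at h1
  exact ⟨h1.1, h2, not_le.1 h3⟩

theorem kind_horiz {c : ℝ} {L : LShape} (h : kind c L = .horiz) :
    0 < L.ly ∧ L.ly ≤ c ∧ c < L.lx := by
  unfold kind at h
  split_ifs at h with h1 h2 h3
  push Not at h1
  exact ⟨h1.2, by assumption, not_le.1 h2⟩

theorem kind_small {c : ℝ} {L : LShape} (h : kind c L = .small) :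
    0 < L.lx ∧ L.lx ≤ c ∧ 0 < L.ly ∧ L.ly ≤ c := by
  unfold kind at h
  split_ifs at h with h1 h2 h3
  push Not at h1
  exact ⟨h1.1, h2, h1.2, h3⟩

theorem cell_fst (c : ℝ) (L : LShape) : (cell c L).1 = kind c L := by
  unfold cell
  split <;> simp_all

theorem cell_vert {c : ℝ} {L : LShape} (h : kind c L = .vert) :
    cell c L = (.vert, cls c L.lx, 0) := by
  unfold cell
  rw [h]

theorem cell_horiz {c : ℝ} {L : LShape} (h : kind c L = .horiz) :
    cell c L = (.horiz, 0, cls c L.ly) := by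
  unfold cell
  rw [h]

theorem cell_small {c : ℝ} {L : LShape} (h : kind c L = .small) :
    cell c L = (.small, cls c L.lx, cls c L.ly) := by
  unfold cell
  rw [h]

theorem cell_long {c : ℝ} {L : LShape} (h : kind c L = .long) : cell c L = (.long, 0, 0) := by
  unfold cell
  rw [h]

theorem cap_pos {c : ℝ} (hc : 0 < c) (a : Kind × ℕ × ℕ) : 0 < cap c a := by
  obtain ⟨k, a, b⟩ := a
  cases k <;> simp only [cap] <;> positivity

/-- If an area `a` is at least `w * l` and `l` exceeds `l₀`, then `w ≤ d * (a / κ)` as soon as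
`κ ≤ d * l₀`. -/
theorem width_le {w l l₀ a d κ : ℝ} (hw : 0 ≤ w) (ha : w * l ≤ a) (hl : l₀ ≤ l)
    (hd : 0 ≤ d) (hκ : 0 < κ) (h : κ ≤ d * l₀) : w ≤ d * (a / κ) := by
  rw [← mul_div_assoc, le_div_iff₀ hκ]
  calc w * κ ≤ w * (d * l₀) := by gcongr
    _ = d * (w * l₀) := by ring
    _ ≤ d * (w * l) := by gcongr
    _ ≤ d * a := by gcongr

section Fill

variable {c : ℝ} {s : ℕ → LShape}

theorem fill_nonneg (hc : 0 < c) (hs : ∀ j, (s j).IsValid) (i : ℕ) : 0 ≤ fill c s i :=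
  div_nonneg (Finset.sum_nonneg fun j _ => (area_ge (hs j)).2.2) (cap_pos hc _).le

theorem off_nonneg (hc : 0 < c) (hs : ∀ j, (s j).IsValid) (i : ℕ) : 0 ≤ off c s i :=
  sub_nonneg.2 (Nat.floor_le (fill_nonneg hc hs i))

theorem off_le_one (i : ℕ) : off c s i ≤ 1 := by
  have := Nat.lt_floor_add_one (fill c s i)
  unfold off
  linarith

theorem fill_add_le (hc : 0 < c) (hs : ∀ j, (s j).IsValid) {i j : ℕ} (hij : i < j)
    (h : cell c (s i) = cell c (s j)) :
    fill c s i + (s i).area / cap c (cell c (s i)) ≤ fill c s j := by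
  unfold fill
  rw [← h, ← add_div, add_comm]
  apply div_le_div_of_nonneg_right _ (cap_pos hc _).le
  have hni : i ∉ (Finset.range i).filter fun k => cell c (s k) = cell c (s i) := by simp
  rw [← Finset.sum_insert (f := fun k => (s k).area) hni]
  apply Finset.sum_le_sum_of_subset_of_nonneg
  · intro k hk
    rw [Finset.mem_insert, Finset.mem_filter, Finset.mem_range] at hk
    rw [Finset.mem_filter, Finset.mem_range]
    rcases hk with rfl | ⟨hk, hk'⟩
    · exact ⟨hij, rfl⟩
    · exact ⟨hk.trans hij, hk'⟩
  · intro k _ _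
    exact (area_ge (hs k)).2.2

/-- Items in the same box are displaced from each other along the diagonal by at least the area
of the earlier one, in units of the box capacity. -/
theorem off_add_le (hc : 0 < c) (hs : ∀ j, (s j).IsValid) {i j : ℕ} (hij : i < j)
    (h : box c s i = box c s j) :
    off c s i + (s i).area / cap c (cell c (s i)) ≤ off c s j := by
  have h1 := fill_add_le hc hs hij (congrArg Prod.fst h)
  have h2 : ⌊fill c s i⌋₊ = ⌊fill c s j⌋₊ := congrArg Prod.snd h
  unfold off
  rw [h2]
  linarith

end Fill

/-! ### The columns and rows stay inside their regions -/

section Bounds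

variable {c : ℝ} {s : ℕ → LShape}

theorem stackH_nonneg (hc : 0 < c) (k : ℕ) (b : (Kind × ℕ × ℕ) × ℕ) : 0 ≤ stackH c k b := by
  unfold stackH
  split_ifs <;> positivity

theorem colW_nonneg (hc : 0 < c) (a : Kind × ℕ × ℕ) : 0 ≤ colW c a := by
  unfold colW
  split_ifs <;> positivity

theorem rowH_nonneg (hc : 0 < c) (a : Kind × ℕ × ℕ) : 0 ≤ rowH c a := by
  unfold rowH
  split_ifs <;> positivity

theorem floor_fill_le (hc : 0 < c) (hs : ∀ j, (s j).IsValid) {i n : ℕ} (hin : i < n)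
    (q : ℕ → Prop) [DecidablePred q] (hq : ∀ j, cell c (s j) = cell c (s i) → q j) :
    (⌊fill c s i⌋₊ : ℝ) ≤
      (∑ j ∈ Finset.range n with q j, (s j).area) / cap c (cell c (s i)) := by
  refine (Nat.floor_le (fill_nonneg hc hs i)).trans ?_
  apply div_le_div_of_nonneg_right _ (cap_pos hc _).le
  apply Finset.sum_le_sum_of_subset_of_nonneg
  · intro j hj
    rw [Finset.mem_filter, Finset.mem_range] at hj ⊢
    exact ⟨hj.1.trans hin, hq j hj.2⟩
  · intro j _ _
    exact (area_ge (hs j)).2.2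

theorem stack_add_le (hc : 0 < c) (hs : ∀ j, (s j).IsValid) (i : ℕ) :
    stack c s i + stackH c (cell c (s i)).2.1 (box c s i) ≤
      4 * c + 4 * 2 ^ (cell c (s i)).2.1 / c *
        ∑ j ∈ Finset.range (i + 1) with
          (cell c (s j)).1 = .small ∧ (cell c (s j)).2.1 = (cell c (s i)).2.1, (s j).area := by
  set k := (cell c (s i)).2.1 with hk
  refine (base_add_le (stackH_nonneg hc k) i).trans ?_
  refine (tape_bound (Finset.range (i + 1)) (box c s)
    (fun b => b.1.1 = Kind.small ∧ b.1.2.1 = k) (fun b => b.1.2.2) (fun b => b.2) ?_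
    (fun j => (s j).area) (fun j _ => (area_ge (hs j)).2.2) hc.le le_rfl
    (E := 2 * 2 ^ k / c ^ 2) (by positivity) ?_).trans (le_of_eq ?_)
  · rintro ⟨⟨a1, a2, a3⟩, a4⟩ ⟨⟨b1, b2, b3⟩, b4⟩ ⟨h1, h2⟩ ⟨h3, h4⟩ h5 h6
    simp only at h1 h2 h3 h4 h5 h6
    subst h1 h2 h3 h5 h6
    rw [h4]
  · intro j hj hp
    refine (floor_fill_le hc hs (Finset.mem_range.1 hj)
      (fun l => ((box c s l).1.1 = Kind.small ∧ (box c s l).1.2.1 = k) ∧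
        (box c s l).1.2.2 = (box c s j).1.2.2) ?_).trans (le_of_eq ?_)
    · intro l hl
      have : (box c s l).1 = (box c s j).1 := hl
      rw [this]
      exact ⟨hp, rfl⟩
    · have hb : cell c (s j) = (.small, k, (box c s j).1.2.2) :=
        Prod.ext hp.1 (Prod.ext hp.2 rfl)
      rw [hb]
      simp only [cap]
      field_simp
      ring
  · simp only [box]
    field_simp
    ring_nf

theorem filter_area_le (hs : ∀ j, (s j).IsValid) {A : ℝ}
    (hA : ∀ n, ∑ j ∈ Finset.range n, (s j).area ≤ A) (n : ℕ) (q : ℕ → Prop) [DecidablePred q] :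
    ∑ j ∈ Finset.range n with q j, (s j).area ≤ A :=
  (Finset.sum_le_sum_of_subset_of_nonneg (Finset.filter_subset _ _)
    fun j _ _ => (area_ge (hs j)).2.2).trans (hA n)

theorem lab_inj (k : Kind) (a b : Kind × ℕ × ℕ) (ha : a.1 = k) (hb : b.1 = k)
    (h1 : a.2.1 = b.2.1) (h2 : a.2.2 = b.2.2) : a = b :=
  Prod.ext (ha.trans hb.symm) (Prod.ext h1 h2)

theorem row_add_le (hc : 0 < c) (hs : ∀ j, (s j).IsValid) {A : ℝ}
    (hA : ∀ n, ∑ j ∈ Finset.range n, (s j).area ≤ A) (i : ℕ) :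
    row c s i + rowH c (rowLab c s i) ≤ 4 * c + 2 / c * A := by
  refine (base_add_le (rowH_nonneg hc) i).trans ?_
  refine (tape_bound (Finset.range (i + 1)) (rowLab c s) (fun a => a.1 = Kind.horiz)
    (fun a => a.2.1) (fun a => a.2.2) (lab_inj _)
    (fun j => (s j).area) (fun j _ => (area_ge (hs j)).2.2) hc.le le_rfl
    (E := 1 / c ^ 2) (by positivity) ?_).trans ?_
  · intro j hj hp
    refine (floor_fill_le hc hs (Finset.mem_range.1 hj)
      (fun l => (rowLab c s l).1 = Kind.horiz ∧
        (rowLab c s l).2.1 = (rowLab c s j).2.1) ?_).trans (le_of_eq ?_)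
    · intro l hl
      simp only [rowLab] at hp ⊢
      rw [hl]
      exact ⟨hp, rfl⟩
    · have hb : cell c (s j) = (.horiz, (cell c (s j)).2.1, (rowLab c s j).2.1) :=
        Prod.ext hp rfl
      rw [hb]
      simp only [cap]
      field_simp
      ring
  · have h := filter_area_le hs hA (i + 1) (fun j => (rowLab c s j).1 = Kind.horiz)
    calc _ ≤ 4 * c * (1 + 0) + 2 * c * (1 / c ^ 2) * A := by gcongr
      _ = _ := by field_simp; ring

theorem col_add_le (hc : 0 < c) (hc2 : 2 * c < 1) (hs : ∀ j, (s j).IsValid) {A : ℝ}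
    (hA : ∀ n, ∑ j ∈ Finset.range n, (s j).area ≤ A) (i : ℕ) :
    col c s i + colW c (colLab c s i) ≤
      (4 * c + 2 / c * A) + (4 * c * (1 + 4 * c / (1 - 2 * c)) + 8 / (1 - 2 * c) * A) := by
  have hH : 0 < 1 - 2 * c := by linarith
  refine (base_add_le (colW_nonneg hc) i).trans ?_
  unfold colW
  rw [Finset.sum_add_distrib]
  apply add_le_add
  · refine (tape_bound (Finset.range (i + 1)) (colLab c s) (fun a => a.1 = Kind.vert)
      (fun a => a.2.1) (fun a => a.2.2) (lab_inj _)
      (fun j => (s j).area) (fun j _ => (area_ge (hs j)).2.2) hc.le le_rfl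
      (E := 1 / c ^ 2) (by positivity) ?_).trans ?_
    · intro j hj hp
      have hp' : (cell c (s j)).1 = Kind.vert := hp
      have hn : (colLab c s j).2.2 = ⌊fill c s j⌋₊ := by
        simp [colLab, hp']
      simp only [hn]
      refine (floor_fill_le hc hs (Finset.mem_range.1 hj)
        (fun l => (colLab c s l).1 = Kind.vert ∧
          (colLab c s l).2.1 = (colLab c s j).2.1) ?_).trans (le_of_eq ?_)
      · intro l hl
        simp only [colLab]
        rw [hl]
        exact ⟨hp, rfl⟩
      · have hb : cell c (s j) = (.vert, (colLab c s j).2.1, (cell c (s j)).2.2) :=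
          Prod.ext hp rfl
        rw [hb]
        simp only [cap]
        field_simp
        ring
    · have h := filter_area_le hs hA (i + 1) (fun j => (colLab c s j).1 = Kind.vert)
      calc _ ≤ 4 * c * (1 + 0) + 2 * c * (1 / c ^ 2) * A := by gcongr
        _ = _ := by field_simp; ring
  · refine (tape_bound (Finset.range (i + 1)) (colLab c s) (fun a => a.1 = Kind.small)
      (fun a => a.2.1) (fun a => a.2.2) (lab_inj _)
      (fun j => (s j).area) (fun j _ => (area_ge (hs j)).2.2) hc.le
      (D := 4 * c / (1 - 2 * c)) (by positivity)
      (E := 4 / (c * (1 - 2 * c))) (by positivity) ?_).trans ?_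
    · intro j hj hp
      have hp' : (cell c (s j)).1 = Kind.small := hp
      have hn : (colLab c s j).2.2 = ⌊stack c s j / (1 - 2 * c)⌋₊ := by
        simp [colLab, hp']
      simp only [hn]
      have h0 : 0 ≤ stack c s j := base_nonneg (stackH_nonneg hc _) j
      refine (Nat.floor_le (by positivity)).trans ?_
      have h1 := stack_add_le hc hs j
      have h2 := stackH_nonneg hc (cell c (s j)).2.1 (box c s j)
      have h3 : ∑ l ∈ Finset.range (j + 1) with
          (cell c (s l)).1 = .small ∧ (cell c (s l)).2.1 = (cell c (s j)).2.1, (s l).area ≤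
          ∑ l ∈ Finset.range (i + 1) with (colLab c s l).1 = Kind.small ∧
          (colLab c s l).2.1 = (colLab c s j).2.1, (s l).area := by
        apply Finset.sum_le_sum_of_subset_of_nonneg
        · intro l hl
          have := Finset.mem_range.1 hj
          rw [Finset.mem_filter, Finset.mem_range] at hl ⊢
          exact ⟨by omega, hl.2⟩
        · intro l _ _
          exact (area_ge (hs l)).2.2
      set S := ∑ l ∈ Finset.range (i + 1) with (colLab c s l).1 = Kind.small ∧
          (colLab c s l).2.1 = (colLab c s j).2.1, (s l).area
      have h4 : stack c s j ≤ 4 * c + 4 * 2 ^ (cell c (s j)).2.1 / c * S := by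
        have : 4 * 2 ^ (cell c (s j)).2.1 / c * _ ≤ 4 * 2 ^ (cell c (s j)).2.1 / c * S :=
          mul_le_mul_of_nonneg_left h3 (by positivity)
        linarith
      calc stack c s j / (1 - 2 * c)
          ≤ (4 * c + 4 * 2 ^ (cell c (s j)).2.1 / c * S) / (1 - 2 * c) := by gcongr
        _ = 4 * c / (1 - 2 * c) + 4 / (c * (1 - 2 * c)) * 2 ^ (colLab c s j).2.1 * S := by
            simp only [colLab]
            field_simp
    · have h := filter_area_le hs hA (i + 1) (fun j => (colLab c s j).1 = Kind.small)
      calc _ ≤ 4 * c * (1 + 4 * c / (1 - 2 * c)) + 2 * c * (4 / (c * (1 - 2 * c))) * A := by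
            gcongr
        _ = _ := by field_simp; ring

end Bounds

/-! ### Correctness of the placement -/

section Correct

variable {c W : ℝ} {s : ℕ → LShape}

theorem pos_long {i : ℕ} (h : kind c (s i) = .long) :
    pos c W s i = (W + fill c s i, W + fill c s i) := by
  unfold pos
  rw [h]

theorem pos_vert {i : ℕ} (h : kind c (s i) = .vert) :
    pos c W s i = (col c s i + c / 2 ^ cls c (s i).lx * off c s i, 2 * c * off c s i) := by
  unfold pos
  rw [h]

theorem pos_horiz {i : ℕ} (h : kind c (s i) = .horiz) :
    pos c W s i =
      (W + 2 * c * off c s i, row c s i + c / 2 ^ cls c (s i).ly * off c s i) := by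
  unfold pos
  rw [h]

/-- The vertical position, inside its column, of the box of the small item `i`. -/
noncomputable def level (c : ℝ) (s : ℕ → LShape) (i : ℕ) : ℝ :=
  stack c s i - (1 - 2 * c) * ⌊stack c s i / (1 - 2 * c)⌋₊

theorem pos_small {i : ℕ} (h : kind c (s i) = .small) :
    pos c W s i = (col c s i + c / 2 ^ cls c (s i).lx * off c s i,
      level c s i + c / 2 ^ cls c (s i).ly * off c s i) := by
  unfold pos
  rw [h, level]

theorem level_mem (hc : 0 < c) (hc2 : 2 * c < 1) (i : ℕ) :
    0 ≤ level c s i ∧ level c s i ≤ 1 - 2 * c := by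
  have hH : 0 < 1 - 2 * c := by linarith
  have h0 : 0 ≤ stack c s i := base_nonneg (stackH_nonneg hc _) i
  have h1 := Nat.floor_le (div_nonneg h0 hH.le)
  have h2 := (Nat.lt_floor_add_one (stack c s i / (1 - 2 * c))).le
  rw [le_div_iff₀ hH] at h1
  rw [div_le_iff₀ hH] at h2
  unfold level
  constructor <;> linarith

theorem scaled_off_mem (hc : 0 < c) (hs : ∀ j, (s j).IsValid) (i : ℕ) {d : ℝ} (hd : 0 ≤ d) :
    0 ≤ d * off c s i ∧ d * off c s i ≤ d :=
  ⟨mul_nonneg hd (off_nonneg hc hs i), mul_le_of_le_one_right hd (off_le_one i)⟩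

theorem col_extent (hc : 0 < c) (hs : ∀ j, (s j).IsValid) {i : ℕ}
    (h : kind c (s i) = .vert ∨ kind c (s i) = .small) :
    col c s i ≤ (pos c W s i).1 ∧
      (pos c W s i).1 + (s i).lx ≤ col c s i + colW c (colLab c s i) := by
  have hd := scaled_off_mem hc hs i (d := c / 2 ^ cls c (s i).lx) (by positivity)
  rcases h with h | h
  · have hx := (cls_spec (kind_vert h).1 (kind_vert h).2.1).2
    have hw : colW c (colLab c s i) = 2 * (c / 2 ^ cls c (s i).lx) := by
      simp [colW, colLab, cell_vert h, mul_div_assoc]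
    rw [pos_vert h, hw]
    constructor <;> simp only <;> linarith
  · have hx := (cls_spec (kind_small h).1 (kind_small h).2.1).2
    have hw : colW c (colLab c s i) = 2 * (c / 2 ^ cls c (s i).lx) := by
      simp [colW, colLab, cell_small h, mul_div_assoc]
    rw [pos_small h, hw]
    constructor <;> simp only <;> linarith

theorem row_extent (hc : 0 < c) (hs : ∀ j, (s j).IsValid) {i : ℕ}
    (h : kind c (s i) = .horiz) :
    row c s i ≤ (pos c W s i).2 ∧
      (pos c W s i).2 + (s i).ly ≤ row c s i + rowH c (rowLab c s i) := by
  have hd := scaled_off_mem hc hs i (d := c / 2 ^ cls c (s i).ly) (by positivity)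
  have hx := (cls_spec (kind_horiz h).1 (kind_horiz h).2.1).2
  have hw : rowH c (rowLab c s i) = 2 * (c / 2 ^ cls c (s i).ly) := by
    simp [rowH, rowLab, cell_horiz h, mul_div_assoc]
  rw [pos_horiz h, hw]
  constructor <;> simp only <;> linarith

theorem div_pow_pos (hc : 0 < c) (k : ℕ) : 0 < c / 2 ^ k := by positivity

/-- Two items of the same box are nested. -/
theorem nested_of_box_eq (hc : 0 < c) (hs : ∀ j, (s j).IsValid) {i j : ℕ} (hij : i < j)
    (hi : kind c (s i) ≠ .deg) (hl : kind c (s i) ≠ .long) (h : box c s i = box c s j)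
    (hcol : col c s i = col c s j ∨ kind c (s i) = .horiz)
    (hrow : row c s i = row c s j ∨ kind c (s i) ≠ .horiz)
    (hlev : level c s i = level c s j ∨ kind c (s i) ≠ .small) :
    Before (s i) (pos c W s i) (pos c W s j) := by
  have hcell : cell c (s i) = cell c (s j) := congrArg Prod.fst h
  have hkind : kind c (s i) = kind c (s j) := by rw [← cell_fst, ← cell_fst, hcell]
  have hoff := off_add_le hc hs hij h
  obtain ⟨ha1, ha2, ha3⟩ := area_ge (hs i)
  have hw1 := (hs i).1
  have hw2 := (hs i).2.2.2.1
  have hcap := cap_pos hc (cell c (s i))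
  right; right
  cases hk : kind c (s i) with
  | deg => exact absurd hk hi
  | long => exact absurd hk hl
  | vert =>
    have hk' := hkind.symm.trans hk
    have hkk : cls c (s i).lx = cls c (s j).lx := by
      rw [cell_vert hk, cell_vert hk'] at hcell
      simpa using hcell
    have hcol' : col c s i = col c s j := by simpa [hk] using hcol
    rw [cell_vert hk] at hoff hcap
    simp only [cap] at hoff hcap
    have hd := div_pow_pos hc (cls c (s i).lx)
    have hx := cls_spec (kind_vert hk).1 (kind_vert hk).2.1
    have h1 := width_le hw1 ha1 (kind_vert hk).2.2.le hd.le hcap (le_of_eq (mul_comm _ _))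
    have h2 := width_le (d := 2 * c) hw2 ha2 hx.1.le (by positivity) hcap
      (le_of_eq (by ring))
    rw [pos_vert hk, pos_vert hk', ← hkk, ← hcol']
    have e1 := mul_le_mul_of_nonneg_left hoff hd.le
    have e2 := mul_le_mul_of_nonneg_left hoff (show 0 ≤ 2 * c by positivity)
    rw [mul_add] at e1 e2
    constructor <;> simp only <;> linarith
  | horiz =>
    have hk' := hkind.symm.trans hk
    have hkk : cls c (s i).ly = cls c (s j).ly := by
      rw [cell_horiz hk, cell_horiz hk'] at hcell
      simpa using hcell
    have hrow' : row c s i = row c s j := by simpa [hk] using hrow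
    rw [cell_horiz hk] at hoff hcap
    simp only [cap] at hoff hcap
    have hd := div_pow_pos hc (cls c (s i).ly)
    have hx := cls_spec (kind_horiz hk).1 (kind_horiz hk).2.1
    have h1 := width_le hw2 ha2 (kind_horiz hk).2.2.le hd.le hcap (le_of_eq (mul_comm _ _))
    have h2 := width_le (d := 2 * c) hw1 ha1 hx.1.le (by positivity) hcap
      (le_of_eq (by ring))
    rw [pos_horiz hk, pos_horiz hk', ← hkk, ← hrow']
    have e1 := mul_le_mul_of_nonneg_left hoff hd.le
    have e2 := mul_le_mul_of_nonneg_left hoff (show 0 ≤ 2 * c by positivity)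
    rw [mul_add] at e1 e2
    constructor <;> simp only <;> linarith
  | small =>
    have hk' := hkind.symm.trans hk
    have hkk : cls c (s i).lx = cls c (s j).lx ∧ cls c (s i).ly = cls c (s j).ly := by
      rw [cell_small hk, cell_small hk'] at hcell
      simpa using hcell
    have hcol' : col c s i = col c s j := by simpa [hk] using hcol
    have hlev' : level c s i = level c s j := by simpa [hk] using hlev
    rw [cell_small hk] at hoff hcap
    simp only [cap] at hoff hcap
    have hdx := div_pow_pos hc (cls c (s i).lx)
    have hdy := div_pow_pos hc (cls c (s i).ly)
    have hx := cls_spec (kind_small hk).1 (kind_small hk).2.1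
    have hy := cls_spec (kind_small hk).2.2.1 (kind_small hk).2.2.2
    have h1 := width_le hw1 ha1 hy.1.le hdx.le hcap (le_of_eq (by ring))
    have h2 := width_le hw2 ha2 hx.1.le hdy.le hcap (le_of_eq (by ring))
    rw [pos_small hk, pos_small hk', ← hkk.1, ← hkk.2, ← hcol', ← hlev']
    have e1 := mul_le_mul_of_nonneg_left hoff hdx.le
    have e2 := mul_le_mul_of_nonneg_left hoff hdy.le
    rw [mul_add] at e1 e2
    constructor <;> simp only <;> linarith

theorem long_nested (hc : 0 < c) (hs : ∀ j, (s j).IsValid) {i j : ℕ} (hij : i < j)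
    (hi : kind c (s i) = .long) (hj : kind c (s j) = .long) :
    Before (s i) (pos c W s i) (pos c W s j) := by
  have h := fill_add_le hc hs hij (by rw [cell_long hi, cell_long hj])
  rw [cell_long hi] at h
  simp only [cap] at h
  obtain ⟨ha1, ha2, -⟩ := area_ge (hs i)
  have h1 := width_le (d := 1) (hs i).1 ha1 (kind_long hi).2.le zero_le_one hc (by simp)
  have h2 := width_le (d := 1) (hs i).2.2.2.1 ha2 (kind_long hi).1.le zero_le_one hc (by simp)
  right; right
  rw [pos_long hi, pos_long hj]
  constructor <;> simp only <;> linarith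

/-- Two items in columns are separated: by their columns, else by their boxes, else nested. -/
theorem separated_col (hc : 0 < c) (hs : ∀ j, (s j).IsValid) {i j : ℕ} (hij : i < j)
    (hi : kind c (s i) = .vert ∨ kind c (s i) = .small)
    (hj : kind c (s j) = .vert ∨ kind c (s j) = .small) :
    Before (s i) (pos c W s i) (pos c W s j) ∨ Before (s j) (pos c W s j) (pos c W s i) := by
  have ei := col_extent (W := W) hc hs hi
  have ej := col_extent (W := W) hc hs hj
  by_cases hlab : colLab c s i = colLab c s j
  swap
  · rcases base_separated (colW_nonneg hc) hlab with h | h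
    · exact Or.inl (Or.inl (ei.2.trans (h.trans ej.1)))
    · exact Or.inr (Or.inl (ej.2.trans (h.trans ei.1)))
  have hcol : col c s i = col c s j := base_eq_of_lab_eq hlab
  have hkind : kind c (s i) = kind c (s j) := by
    rw [← cell_fst, ← cell_fst]
    exact congrArg (fun a => a.1) hlab
  have hk : (cell c (s i)).2.1 = (cell c (s j)).2.1 := congrArg (fun a => a.2.1) hlab
  have hn : (colLab c s i).2.2 = (colLab c s j).2.2 := congrArg (fun a => a.2.2) hlab
  rcases hi with hi | hi
  · have hj' := hkind.symm.trans hi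
    left
    apply nested_of_box_eq hc hs hij (by simp [hi]) (by simp [hi]) _ (Or.inl hcol)
      (Or.inr (by simp [hi])) (Or.inr (by simp [hi]))
    simp only [colLab, cell_fst, hi, hj', reduceCtorEq, if_false] at hn
    simp only [box, hn, Prod.mk.injEq, and_true]
    rw [cell_vert hi, cell_vert hj'] at hk ⊢
    simpa using hk
  · have hj' := hkind.symm.trans hi
    simp only [colLab, cell_fst, hi, hj', if_true] at hn
    by_cases hbox : box c s i = box c s j
    · left
      apply nested_of_box_eq hc hs hij (by simp [hi]) (by simp [hi]) hbox (Or.inl hcol)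
        (Or.inr (by simp [hi])) (Or.inl _)
      have hst : stack c s i = stack c s j := by
        unfold stack
        rw [hk]
        exact base_eq_of_lab_eq hbox
      unfold level
      rw [hst]
    -- Distinct boxes of one column occupy disjoint intervals of the same stack.
    · have hsep := base_separated (stackH_nonneg hc (cell c (s i)).2.1) hbox
      have hsi : stackH c (cell c (s i)).2.1 (box c s i) = 2 * (c / 2 ^ cls c (s i).ly) := by
        simp [stackH, box, cell_small hi, mul_div_assoc]
      have hsj : stackH c (cell c (s i)).2.1 (box c s j) = 2 * (c / 2 ^ cls c (s j).ly) := by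
        rw [hk]
        simp [stackH, box, cell_small hj', mul_div_assoc]
      have hbj : base (box c s) (stackH c (cell c (s i)).2.1) j = stack c s j := by
        rw [hk]
        rfl
      rw [hsi, hsj, hbj] at hsep
      change stack c s i + _ ≤ _ ∨ _ ≤ stack c s i at hsep
      have hyi := (cls_spec (kind_small hi).2.2.1 (kind_small hi).2.2.2).2
      have hyj := (cls_spec (kind_small hj').2.2.1 (kind_small hj').2.2.2).2
      have hdi := scaled_off_mem hc hs i (div_pow_pos hc (cls c (s i).ly)).le
      have hdj := scaled_off_mem hc hs j (div_pow_pos hc (cls c (s j).ly)).le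
      rw [pos_small hi, pos_small hj']
      unfold level
      rw [hn]
      rcases hsep with h | h
      · left; right; left
        simp only
        linarith
      · right; right; left
        simp only
        linarith

theorem separated_row (hc : 0 < c) (hs : ∀ j, (s j).IsValid) {i j : ℕ} (hij : i < j)
    (hi : kind c (s i) = .horiz) (hj : kind c (s j) = .horiz) :
    Before (s i) (pos c W s i) (pos c W s j) ∨ Before (s j) (pos c W s j) (pos c W s i) := by
  have ei := row_extent (W := W) hc hs hi
  have ej := row_extent (W := W) hc hs hj
  by_cases hlab : rowLab c s i = rowLab c s j
  swap
  · rcases base_separated (rowH_nonneg hc) hlab with h | h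
    · exact Or.inl (Or.inr (Or.inl (ei.2.trans (h.trans ej.1))))
    · exact Or.inr (Or.inr (Or.inl (ej.2.trans (h.trans ei.1))))
  have hk : (cell c (s i)).2.2 = (cell c (s j)).2.2 := congrArg (fun a => a.2.1) hlab
  have hn : ⌊fill c s i⌋₊ = ⌊fill c s j⌋₊ := congrArg (fun a => a.2.2) hlab
  left
  apply nested_of_box_eq hc hs hij (by simp [hi]) (by simp [hi]) _ (Or.inr hi)
    (Or.inl (base_eq_of_lab_eq hlab)) (Or.inr (by simp [hi]))
  simp only [box, hn, Prod.mk.injEq, and_true]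
  rw [cell_horiz hi, cell_horiz hj] at hk ⊢
  simpa using hk

/-- Any two nondegenerate items are separated, provided the columns and rows stay in their
regions. -/
theorem separated (hc : 0 < c) (hs : ∀ j, (s j).IsValid)
    (hcol : ∀ i, col c s i + colW c (colLab c s i) ≤ W)
    (hrow : ∀ i, row c s i + rowH c (rowLab c s i) ≤ W) {i j : ℕ} (hij : i < j)
    (hi : kind c (s i) ≠ .deg) (hj : kind c (s j) ≠ .deg) :
    Before (s i) (pos c W s i) (pos c W s j) ∨ Before (s j) (pos c W s j) (pos c W s i) := by
  have left_of : ∀ k l, (kind c (s k) = .vert ∨ kind c (s k) = .small) →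
      (kind c (s l) = .horiz ∨ kind c (s l) = .long) →
      Before (s k) (pos c W s k) (pos c W s l) := by
    intro k l hk hl
    left
    refine ((col_extent hc hs hk).2.trans (hcol k)).trans ?_
    rcases hl with hl | hl
    · rw [pos_horiz hl]
      simpa using (scaled_off_mem hc hs l (show 0 ≤ 2 * c by positivity)).1
    · rw [pos_long hl]
      simpa using fill_nonneg hc hs l
  have below : ∀ k l, kind c (s k) = .horiz → kind c (s l) = .long →
      Before (s k) (pos c W s k) (pos c W s l) := by
    intro k l hk hl
    right; left
    refine ((row_extent hc hs hk).2.trans (hrow k)).trans ?_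
    rw [pos_long hl]
    simpa using fill_nonneg hc hs l
  have split : ∀ k, kind c (s k) ≠ .deg → (kind c (s k) = .vert ∨ kind c (s k) = .small) ∨
      kind c (s k) = .horiz ∨ kind c (s k) = .long := by
    intro k hk
    cases h : kind c (s k) <;> simp_all
  rcases split i hi with hi | hi | hi <;> rcases split j hj with hj | hj | hj
  · exact separated_col hc hs hij hi hj
  · exact Or.inl (left_of i j hi (Or.inl hj))
  · exact Or.inl (left_of i j hi (Or.inr hj))
  · exact Or.inr (left_of j i hj (Or.inl hi))
  · exact separated_row hc hs hij hi hj
  · exact Or.inl (below i j hi hj)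
  · exact Or.inr (left_of j i hj (Or.inr hi))
  · exact Or.inr (below j i hj hi)
  · exact Or.inl (long_nested hc hs hij hi hj)

theorem pos_mem {t : ℝ} (ht0 : 0 < t) (hc : 0 < c) (hc2 : 2 * c < 1) (hW : 0 ≤ W)
    (hWt : W + 2 * c + t ≤ 1) (hs : ∀ j, (s j).IsValid) (hx : ∀ j, (s j).lx ≤ t)
    (hy : ∀ j, (s j).ly ≤ t)
    (hcol : ∀ i, col c s i + colW c (colLab c s i) ≤ W)
    (hrow : ∀ i, row c s i + rowH c (rowLab c s i) ≤ W)
    {A : ℝ} (hA : ∀ n, ∑ j ∈ Finset.range n, (s j).area ≤ A) (hWA : W + A / c + t ≤ 1) (i : ℕ) :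
    planeTranslate (pos c W s i) (s i).toSet ⊆ unitBin := by
  have hxi := hx i
  have hyi := hy i
  have hcol0 : 0 ≤ col c s i := base_nonneg (colW_nonneg hc) i
  have hrow0 : 0 ≤ row c s i := base_nonneg (rowH_nonneg hc) i
  have h2c := scaled_off_mem hc hs i (show 0 ≤ 2 * c by positivity)
  have hci := hcol i
  have hri := hrow i
  cases hk : kind c (s i) with
  | deg =>
    have h : pos c W s i = (0, 0) := by
      unfold pos
      rw [hk]
    rw [h]
    have := (hs i).2.2.1
    have := (hs i).2.2.2.2.2
    apply translate_subset_unitBin (hs i) <;> simp only <;> linarith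
  | long =>
    rw [pos_long hk]
    have h0 := fill_nonneg hc hs i
    have h1 : fill c s i ≤ A / c := by
      unfold fill
      rw [cell_long hk]
      exact div_le_div_of_nonneg_right (filter_area_le hs hA i _) hc.le
    apply translate_subset_unitBin (hs i) <;> simp only <;> linarith
  | vert =>
    have he := col_extent (W := W) hc hs (Or.inl hk)
    apply translate_subset_unitBin (hs i)
    · linarith
    · rw [pos_vert hk]
      exact h2c.1
    · linarith
    · rw [pos_vert hk]
      simp only
      linarith
  | horiz =>
    have he := row_extent (W := W) hc hs hk
    apply translate_subset_unitBin (hs i)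
    · rw [pos_horiz hk]
      simp only
      linarith
    · linarith
    · rw [pos_horiz hk]
      simp only
      linarith
    · linarith
  | small =>
    have he := col_extent (W := W) hc hs (Or.inr hk)
    have hd := scaled_off_mem hc hs i (div_pow_pos hc (cls c (s i).ly)).le
    have hl := level_mem (s := s) hc hc2 i
    have hdc : c / 2 ^ cls c (s i).ly ≤ c := div_le_self hc.le (one_le_pow₀ one_le_two)
    have hyc := (kind_small hk).2.2.2
    apply translate_subset_unitBin (hs i)
    · linarith
    · rw [pos_small hk]
      simp only
      linarith
    · linarith
    · rw [pos_small hk]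
      simp only
      linarith

end Correct

/-! ### Choice of constants -/

/-- The algorithm with `c = (1 - t) / 20` and `W = 21 (1 - t) / 25`, for infinite sequences. -/
theorem sequence_correct {t : ℝ} (ht0 : 0 < t) (ht1 : t < 1) {s : ℕ → LShape}
    (hs : ∀ j, (s j).IsValid) (hx : ∀ j, (s j).lx ≤ t) (hy : ∀ j, (s j).ly ≤ t)
    (hA : ∀ n, ∑ j ∈ Finset.range n, (s j).area ≤ (1 - t) ^ 3 / 125) :
    (∀ i, planeTranslate (pos ((1 - t) / 20) (21 * (1 - t) / 25) s i) (s i).toSet ⊆ unitBin) ∧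
    ∀ i j, i < j →
      Disjoint
        (interior (planeTranslate (pos ((1 - t) / 20) (21 * (1 - t) / 25) s i) (s i).toSet))
        (interior (planeTranslate (pos ((1 - t) / 20) (21 * (1 - t) / 25) s j) (s j).toSet)) := by
  obtain ⟨u, hu⟩ : ∃ u, u = 1 - t := ⟨_, rfl⟩
  rw [← hu] at hA ⊢
  have hu0 : 0 < u := by linarith
  have hu1 : u < 1 := by linarith
  have husq : u ^ 2 ≤ u := by nlinarith
  have hcu : u ^ 3 ≤ u := by nlinarith
  have hc : 0 < u / 20 := by positivity
  have hc2 : 2 * (u / 20) < 1 := by linarith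
  have hq : 2 / (u / 20) * (u ^ 3 / 125) = 8 / 25 * u ^ 2 := by field_simp; norm_num
  have hrow : ∀ i, row (u / 20) s i + rowH (u / 20) (rowLab (u / 20) s i) ≤ 21 * u / 25 := by
    intro i
    refine (row_add_le hc hs hA i).trans ?_
    rw [hq]
    linarith
  have hcol : ∀ i, col (u / 20) s i + colW (u / 20) (colLab (u / 20) s i) ≤ 21 * u / 25 := by
    intro i
    refine (col_add_le hc hc2 hs hA i).trans ?_
    rw [hq]
    have hH : 9 / 10 ≤ 1 - 2 * (u / 20) := by linarith
    have h1 : 4 * (u / 20) / (1 - 2 * (u / 20)) ≤ 2 / 9 * u := by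
      rw [div_le_iff₀ (by linarith)]
      nlinarith
    have h2 : 8 / (1 - 2 * (u / 20)) ≤ 80 / 9 := by
      rw [div_le_iff₀ (by linarith)]
      linarith
    have h3 := mul_le_mul_of_nonneg_right h2 (show 0 ≤ u ^ 3 / 125 by positivity)
    have h4 := mul_le_mul_of_nonneg_left h1 (show 0 ≤ 4 * (u / 20) by positivity)
    nlinarith
  refine ⟨fun i => pos_mem ht0 hc hc2 (by positivity) (by linarith) hs hx hy hcol hrow hA ?_ i,
    fun i j hij => ?_⟩
  · have : u ^ 3 / 125 / (u / 20) = 4 / 25 * u ^ 2 := by field_simp; norm_num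
    rw [this]
    linarith
  · by_cases hi : kind (u / 20) (s i) = .deg
    · rw [interior_eq_empty (hs i) (kind_deg hi)]
      exact Set.empty_disjoint _
    by_cases hj : kind (u / 20) (s j) = .deg
    · rw [interior_eq_empty (hs j) (kind_deg hj)]
      exact Set.disjoint_empty _
    rcases separated hc hs hcol hrow hij hi hj with h | h
    · exact h.disjoint (hs i)
    · exact (h.disjoint (hs j)).symm

theorem sum_getD_le (l : List LShape) (d : LShape) (hd : d.area = 0)
    (hl : ∀ L ∈ l, L.IsValid) (n : ℕ) :
    ∑ j ∈ Finset.range n, (l.getD j d).area ≤ (l.map LShape.area).sum := by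
  induction l generalizing n with
  | nil => simp [hd]
  | cons a l ih =>
    have hl' : ∀ L ∈ l, L.IsValid := fun L hL => hl L (List.mem_cons_of_mem _ hL)
    have ha := (area_ge (hl a List.mem_cons_self)).2.2
    rcases n with _ | n
    · have h0 : 0 ≤ (l.map LShape.area).sum := by simpa using ih hl' 0
      simp only [Finset.range_zero, Finset.sum_empty, List.map_cons, List.sum_cons]
      linarith
    · rw [Finset.sum_range_succ']
      simp only [List.getD_cons_succ, List.getD_cons_zero, List.map_cons, List.sum_cons]
      linarith [ih hl' n]

end OnlineL

/-- for every `0 < t < 1`, with `A = (1−t)³/125`, there is a deterministic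
online algorithm placing L-shapes into the unit bin by translations that successfully packs
every finite sequence of L-shapes whose arm lengths are at most `t` and whose total area is
at most `A`: every translate lies in `[0,1]²` and the translates have pairwise disjoint
interiors. -/
theorem stmt11 (t : ℝ) (ht0 : 0 < t) (ht1 : t < 1) :
    ∃ A : List LShape → ℝ × ℝ,
      ∀ l : List LShape,
        (∀ L ∈ l, L.IsValid ∧ L.lx ≤ t ∧ L.ly ≤ t) →
        (l.map LShape.area).sum ≤ (1 - t) ^ 3 / 125 →
        (∀ i : Fin l.length,
          planeTranslate (A (l.take (i.1 + 1))) (l.get i).toSet ⊆ unitBin) ∧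
        ∀ i j : Fin l.length, i ≠ j →
          Disjoint (interior (planeTranslate (A (l.take (i.1 + 1))) (l.get i).toSet))
                   (interior (planeTranslate (A (l.take (j.1 + 1))) (l.get j).toSet)) := by
  -- A list is extended to an infinite sequence by a shape consisting of a single point.
  obtain ⟨d, hd⟩ : ∃ d : LShape, d = ⟨0, 0, 0, 0⟩ := ⟨_, rfl⟩
  refine ⟨fun l => OnlineL.pos ((1 - t) / 20) (21 * (1 - t) / 25) (fun j => l.getD j d)
    (l.length - 1), fun l hl hA => ?_⟩
  have hget : ∀ j, l.getD j d ∈ l ∨ l.getD j d = d := by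
    intro j
    rcases lt_or_ge j l.length with hj | hj
    · left
      rw [List.getD_eq_getElem _ _ hj]
      exact List.getElem_mem hj
    · right
      exact List.getD_eq_default _ _ hj
  have hall : ∀ j, (l.getD j d).IsValid ∧ (l.getD j d).lx ≤ t ∧ (l.getD j d).ly ≤ t := by
    intro j
    rcases hget j with h | h
    · exact hl _ h
    · rw [h, hd]
      refine ⟨?_, ht0.le, ht0.le⟩
      norm_num [LShape.IsValid]
  obtain ⟨h1, h2⟩ := OnlineL.sequence_correct ht0 ht1 (fun j => (hall j).1)
    (fun j => (hall j).2.1) (fun j => (hall j).2.2)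
    (fun n => (OnlineL.sum_getD_le l d (by simp [hd, LShape.area])
      (fun L hL => (hl L hL).1) n).trans hA)
  have hpos : ∀ i : Fin l.length,
      OnlineL.pos ((1 - t) / 20) (21 * (1 - t) / 25) (fun j => (l.take (i.1 + 1)).getD j d)
        ((l.take (i.1 + 1)).length - 1) =
      OnlineL.pos ((1 - t) / 20) (21 * (1 - t) / 25) (fun j => l.getD j d) i.1 := by
    intro i
    have hi := i.2
    have hlen : (l.take (i.1 + 1)).length = i.1 + 1 := by
      rw [List.length_take]
      omega
    rw [hlen, Nat.add_sub_cancel]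
    apply OnlineL.pos_congr
    intro j hj
    rw [List.getD_eq_getElem _ _ (by omega), List.getD_eq_getElem _ _ (by omega),
      List.getElem_take]
  have hitem : ∀ i : Fin l.length, l.get i = l.getD i.1 d := by
    intro i
    rw [List.getD_eq_getElem _ _ i.2]
    rfl
  constructor
  · intro i
    beta_reduce
    rw [hpos i, hitem i]
    exact h1 i.1
  · intro i j hij
    beta_reduce
    rw [hpos i, hpos j, hitem i, hitem j]
    rcases lt_or_gt_of_ne (fun h => hij (Fin.ext h)) with h | h
    · exact h2 i.1 j.1 h
    · exact (h2 j.1 i.1 h).symm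
end

section
/- For every ε > 0 there exist two L-shapes L and L′ with total area at most ε, each of which individually fits into [0,1]² by a translation, such that there is no pair of translations placing both L and L′ into [0,1]² with disjoint interiors. Concretely, for any L-shape L with ℓx(L) = 1 and wy(L) > 0 and any L-shape L′ with ℓy(L′) = 1 and wx(L′) > 0, every pair of translations placing both into [0,1]² makes their interiors intersect. Consequently, the online (and offline) critical packing density for L-shapes with arm lengths in [0,1] is 0. -/
/-- The two arms of a translated L-shape are closed rectangles. -/
lemma mem_planeTranslate_toSet (L : LShape) (v p : ℝ × ℝ) :
    p ∈ planeTranslate v L.toSet ↔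
      (v.1 ≤ p.1 ∧ p.1 ≤ v.1 + L.lx ∧ v.2 ≤ p.2 ∧ p.2 ≤ v.2 + L.wy) ∨
      (v.1 ≤ p.1 ∧ p.1 ≤ v.1 + L.wx ∧ v.2 ≤ p.2 ∧ p.2 ≤ v.2 + L.ly) := by
  have key : p ∈ planeTranslate v L.toSet ↔ p - v ∈ L.toSet := by
    constructor
    · rintro ⟨q, hq, rfl⟩
      simpa using hq
    · intro h
      exact ⟨p - v, h, by simp⟩
  rw [key]
  simp only [LShape.toSet, Set.mem_union, Set.mem_Icc, Prod.le_def, Prod.fst_sub, Prod.snd_sub,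
    sub_nonneg, sub_le_iff_le_add']
  tauto

lemma mem_unitBin (p : ℝ × ℝ) : p ∈ unitBin ↔ 0 ≤ p.1 ∧ p.1 ≤ 1 ∧ 0 ≤ p.2 ∧ p.2 ≤ 1 := by
  simp only [unitBin, Set.mem_Icc, Prod.le_def]
  tauto

lemma mem_interior_of_openRect {S : Set (ℝ × ℝ)} {a b c d : ℝ} {p : ℝ × ℝ}
    (hS : Set.Ioo a b ×ˢ Set.Ioo c d ⊆ S) (hp : p ∈ Set.Ioo a b ×ˢ Set.Ioo c d) :
    p ∈ interior S :=
  interior_maximal hS (isOpen_Ioo.prod isOpen_Ioo) hp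

/-- A full-width and a full-height L-shape inside the bin have a common interior point, the centre
of the crossing of the horizontal arm of the first and the vertical arm of the second. -/
lemma interiors_meet (L L' : LShape) (hx : L.lx = 1) (hw : 0 < L.wy) (hy : L'.ly = 1)
    (hw' : 0 < L'.wx) (v v' : ℝ × ℝ) (hv : planeTranslate v L.toSet ⊆ unitBin)
    (hv' : planeTranslate v' L'.toSet ⊆ unitBin) :
    (interior (planeTranslate v L.toSet) ∩
      interior (planeTranslate v' L'.toSet)).Nonempty := by
  -- Opposite corners of the long arms lie in the bin, which forces `v.1 = 0` and `v'.2 = 0`.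
  have h1 := (mem_unitBin _).1 (hv ((mem_planeTranslate_toSet L v v).2
    (Or.inl ⟨by linarith, by linarith, by linarith, by linarith⟩)))
  have h2 := (mem_unitBin _).1 (hv ((mem_planeTranslate_toSet L v (v.1 + 1, v.2 + L.wy)).2
    (Or.inl ⟨by simp, by simp [hx], by simp [hw.le], by simp⟩)))
  have h3 := (mem_unitBin _).1 (hv' ((mem_planeTranslate_toSet L' v' v').2
    (Or.inr ⟨by linarith, by linarith, by linarith, by linarith⟩)))
  have h4 := (mem_unitBin _).1 (hv' ((mem_planeTranslate_toSet L' v' (v'.1 + L'.wx, v'.2 + 1)).2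
    (Or.inr ⟨by simp [hw'.le], by simp, by simp, by simp [hy]⟩)))
  dsimp only at h2 h4
  refine ⟨(v'.1 + L'.wx / 2, v.2 + L.wy / 2), ?_, ?_⟩
  · refine mem_interior_of_openRect (a := v.1) (b := v.1 + L.lx) (c := v.2) (d := v.2 + L.wy)
      ?_ ?_
    · rintro q ⟨⟨ha, hb⟩, hc, hd⟩
      exact (mem_planeTranslate_toSet _ _ _).2 (Or.inl ⟨ha.le, hb.le, hc.le, hd.le⟩)
    · constructor <;> constructor <;> dsimp only <;> linarith
  · refine mem_interior_of_openRect (a := v'.1) (b := v'.1 + L'.wx) (c := v'.2)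
      (d := v'.2 + L'.ly) ?_ ?_
    · rintro q ⟨⟨ha, hb⟩, hc, hd⟩
      exact (mem_planeTranslate_toSet _ _ _).2 (Or.inr ⟨ha.le, hb.le, hc.le, hd.le⟩)
    · constructor <;> constructor <;> dsimp only <;> linarith

/-- Every valid L-shape lies in the bin without being moved. -/
lemma LShape.IsValid.fits {L : LShape} (h : L.IsValid) :
    planeTranslate 0 L.toSet ⊆ unitBin := by
  obtain ⟨h1, h2, h3, h4, h5, h6⟩ := h
  intro p hp
  rw [mem_planeTranslate_toSet] at hp
  rw [mem_unitBin]
  simp only [Prod.fst_zero, Prod.snd_zero, zero_add] at hp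
  rcases hp with ⟨a, b, c, d⟩ | ⟨a, b, c, d⟩ <;>
    exact ⟨by linarith, by linarith, by linarith, by linarith⟩

/-- for every `ε > 0` there are two L-shapes of total area at most `ε`, each
individually fitting into the unit bin by translation, which cannot be placed together into
the unit bin with disjoint interiors. Concretely, any L-shape with `ℓx = 1`, `wy > 0` and
any L-shape with `ℓy = 1`, `wx > 0`, when both are translated into `[0,1]²`, have
intersecting interiors. -/
theorem stmt12 :
    (∀ ε : ℝ, 0 < ε →
      ∃ L L' : LShape, L.IsValid ∧ L'.IsValid ∧ L.area + L'.area ≤ ε ∧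
        (∃ v : ℝ × ℝ, planeTranslate v L.toSet ⊆ unitBin) ∧
        (∃ v : ℝ × ℝ, planeTranslate v L'.toSet ⊆ unitBin) ∧
        ∀ v v' : ℝ × ℝ, planeTranslate v L.toSet ⊆ unitBin →
          planeTranslate v' L'.toSet ⊆ unitBin →
          ¬ Disjoint (interior (planeTranslate v L.toSet))
                     (interior (planeTranslate v' L'.toSet))) ∧
    (∀ L L' : LShape, L.IsValid → L'.IsValid →
      L.lx = 1 → 0 < L.wy → L'.ly = 1 → 0 < L'.wx →
      ∀ v v' : ℝ × ℝ, planeTranslate v L.toSet ⊆ unitBin →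
        planeTranslate v' L'.toSet ⊆ unitBin →
        (interior (planeTranslate v L.toSet) ∩
          interior (planeTranslate v' L'.toSet)).Nonempty) := by
  refine ⟨fun ε hε => ?_, fun L L' _ _ hx hw hy hw' v v' hv hv' =>
    interiors_meet L L' hx hw hy hw' v v' hv hv'⟩
  obtain ⟨δ, hδ, hδ1, hδε⟩ : ∃ δ : ℝ, 0 < δ ∧ δ ≤ 1 ∧ δ ≤ ε / 2 :=
    ⟨min (ε / 2) 1, by positivity, min_le_right _ _, min_le_left _ _⟩
  -- Degenerate L-shapes suffice: a horizontal and a vertical strip of thickness `δ`.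
  have hL : LShape.IsValid ⟨1, 0, δ, δ⟩ := by
    refine ⟨?_, ?_, ?_, ?_, ?_, ?_⟩ <;> dsimp only <;> linarith
  have hL' : LShape.IsValid ⟨δ, δ, 1, 0⟩ := by
    refine ⟨?_, ?_, ?_, ?_, ?_, ?_⟩ <;> dsimp only <;> linarith
  refine ⟨_, _, hL, hL', ?_, ⟨0, hL.fits⟩, ⟨0, hL'.fits⟩, fun v v' hv hv' => ?_⟩
  · simp only [LShape.area]
    linarith
  · rw [Set.not_disjoint_iff_nonempty_inter]
    exact interiors_meet _ _ rfl hδ rfl hδ v v' hv hv'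
end

section
/- Let L_1, …, L_k be L-shapes placed so that the reference point of L_i is (Σ_{j<i} wx(L_j), Σ_{j<i} wy(L_j)), and assume this placement is a valid packing of the unit bin. Let L be a further L-shape placed with reference point (X, Y), where X = Σ_{i=1}^{k} wx(L_i) and Y = Σ_{i=1}^{k} wy(L_i). Then the resulting placement of all k+1 L-shapes is a valid packing of the unit bin if and only if X + ℓx(L) ≤ 1 and Y + ℓy(L) ≤ 1. -/
/-- A valid packing of the shapes `L i` translated by `v i` into one unit bin. -/
def ValidPacking {n : ℕ} (L : Fin n → LShape) (v : Fin n → ℝ × ℝ) : Prop :=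
  (∀ i, planeTranslate (v i) (L i).toSet ⊆ unitBin) ∧
  ∀ i j, i ≠ j →
    Disjoint (interior (planeTranslate (v i) (L i).toSet))
             (interior (planeTranslate (v j) (L j).toSet))

/-- The reference point of the `i`-th shape in a stacked gravity packing:
`(Σ_{j<i} wx(L_j), Σ_{j<i} wy(L_j))`. -/
noncomputable def stackPos {k : ℕ} (L0 : Fin k → LShape) (i : Fin k) : ℝ × ℝ :=
  (∑ j ∈ Finset.Iio i, (L0 j).wx, ∑ j ∈ Finset.Iio i, (L0 j).wy)

theorem mem_planeTranslate {v p : ℝ × ℝ} {L : LShape} :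
    p ∈ planeTranslate v L.toSet ↔
      (v.1 ≤ p.1 ∧ p.1 ≤ v.1 + L.lx ∧ v.2 ≤ p.2 ∧ p.2 ≤ v.2 + L.wy) ∨
      (v.1 ≤ p.1 ∧ p.1 ≤ v.1 + L.wx ∧ v.2 ≤ p.2 ∧ p.2 ≤ v.2 + L.ly) := by
  constructor
  · rintro ⟨q, hq | hq, rfl⟩
    · obtain ⟨⟨h1, h2⟩, h3, h4⟩ := hq
      simp only at h1 h2 h3 h4
      left
      simp only [Prod.fst_add, Prod.snd_add]
      refine ⟨?_, ?_, ?_, ?_⟩ <;> linarith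
    · obtain ⟨⟨h1, h2⟩, h3, h4⟩ := hq
      simp only at h1 h2 h3 h4
      right
      simp only [Prod.fst_add, Prod.snd_add]
      refine ⟨?_, ?_, ?_, ?_⟩ <;> linarith
  · intro h
    refine ⟨p - v, ?_, sub_add_cancel p v⟩
    rcases h with ⟨h1, h2, h3, h4⟩ | ⟨h1, h2, h3, h4⟩
    · left
      refine ⟨⟨?_, ?_⟩, ?_, ?_⟩ <;> simp only [Prod.fst_sub, Prod.snd_sub] <;> linarith
    · right
      refine ⟨⟨?_, ?_⟩, ?_, ?_⟩ <;> simp only [Prod.fst_sub, Prod.snd_sub] <;> linarith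

/-- A shape whose reference point dominates the reflex corner of another shape does not
overlap it. -/
theorem disjoint_interior_of_le {v w : ℝ × ℝ} {A B : LShape}
    (hx : v.1 + A.wx ≤ w.1) (hy : v.2 + A.wy ≤ w.2) :
    Disjoint (interior (planeTranslate v A.toSet)) (interior (planeTranslate w B.toSet)) := by
  rw [Set.disjoint_left]
  intro p hpA hpB
  have hsub : planeTranslate w B.toSet ⊆ Set.Ici w.1 ×ˢ Set.Ici w.2 := by
    intro q hq
    rcases mem_planeTranslate.1 hq with ⟨h1, -, h3, -⟩ | ⟨h1, -, h3, -⟩ <;> exact ⟨h1, h3⟩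
  have hp := interior_mono hsub hpB
  rw [interior_prod_eq, interior_Ici, interior_Ici] at hp
  obtain ⟨h1, h2⟩ := hp
  rw [Set.mem_Ioi] at h1 h2
  rcases mem_planeTranslate.1 (interior_subset hpA) with ⟨-, -, -, h⟩ | ⟨-, h, -, -⟩ <;> linarith

theorem subset_unitBin_iff {v : ℝ × ℝ} {L : LShape} (hL : L.IsValid)
    (hx : 0 ≤ v.1) (hy : 0 ≤ v.2) :
    planeTranslate v L.toSet ⊆ unitBin ↔ v.1 + L.lx ≤ 1 ∧ v.2 + L.ly ≤ 1 := by
  obtain ⟨a1, a2, a3, a4, a5, a6⟩ := hL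
  constructor
  · intro h
    have tipx : (v.1 + L.lx, v.2) ∈ planeTranslate v L.toSet :=
      mem_planeTranslate.2 (Or.inl ⟨by simp only; linarith, le_rfl, le_rfl, by simp only; linarith⟩)
    have tipy : (v.1, v.2 + L.ly) ∈ planeTranslate v L.toSet :=
      mem_planeTranslate.2 (Or.inr ⟨le_rfl, by simp only; linarith, by simp only; linarith, le_rfl⟩)
    exact ⟨(h tipx).2.1, (h tipy).2.2⟩
  · rintro ⟨h1, h2⟩ p hp
    rcases mem_planeTranslate.1 hp with ⟨b1, b2, b3, b4⟩ | ⟨b1, b2, b3, b4⟩ <;>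
      refine ⟨⟨?_, ?_⟩, ?_, ?_⟩ <;> simp only <;> linarith

/-- A prefix sum of nonnegative widths together with the next width is at most the total; in a
stack this bounds one coordinate of a reflex corner. -/
theorem sum_Iio_add_le {k : ℕ} {f : Fin k → ℝ} (hf : ∀ i, 0 ≤ f i) (i : Fin k) :
    ∑ j ∈ Finset.Iio i, f j + f i ≤ ∑ j, f j := by
  rw [add_comm, ← Finset.sum_insert (s := Finset.Iio i) (by simp)]
  exact Finset.sum_le_sum_of_subset_of_nonneg (Finset.subset_univ _) fun j _ _ => hf j

/-- given a stacked gravity packing of `L_1, …, L_k` in the unit bin, placing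
a further L-shape `L` with reference point `(X, Y) = (Σ wx(L_i), Σ wy(L_i))` on top of the
stack yields a valid packing of all `k+1` shapes if and only if `X + ℓx(L) ≤ 1` and
`Y + ℓy(L) ≤ 1`. -/
theorem stmt17 (k : ℕ) (L0 : Fin k → LShape) (L : LShape)
    (hL0 : ∀ i, (L0 i).IsValid) (hL : L.IsValid)
    (hpack : ValidPacking L0 (stackPos L0)) :
    ValidPacking (Fin.snoc L0 L)
      (Fin.snoc (stackPos L0) (∑ j, (L0 j).wx, ∑ j, (L0 j).wy)) ↔
    (∑ j, (L0 j).wx) + L.lx ≤ 1 ∧ (∑ j, (L0 j).wy) + L.ly ≤ 1 := by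
  have hwx : ∀ i, 0 ≤ (L0 i).wx := fun i => (hL0 i).1
  have hwy : ∀ i, 0 ≤ (L0 i).wy := fun i => (hL0 i).2.2.2.1
  have key := subset_unitBin_iff (v := (∑ j, (L0 j).wx, ∑ j, (L0 j).wy)) hL
    (Finset.sum_nonneg fun i _ => hwx i) (Finset.sum_nonneg fun i _ => hwy i)
  have hdisj : ∀ i, Disjoint (interior (planeTranslate (stackPos L0 i) (L0 i).toSet))
      (interior (planeTranslate (∑ j, (L0 j).wx, ∑ j, (L0 j).wy) L.toSet)) := fun i =>
    disjoint_interior_of_le (sum_Iio_add_le hwx i) (sum_Iio_add_le hwy i)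
  constructor
  · rintro ⟨h, -⟩
    have hlast := h (Fin.last k)
    rw [Fin.snoc_last, Fin.snoc_last] at hlast
    exact key.1 hlast
  · intro h
    refine ⟨fun i => ?_, fun i j hij => ?_⟩
    · induction i using Fin.lastCases with
      | last => rw [Fin.snoc_last, Fin.snoc_last]; exact key.2 h
      | cast i => rw [Fin.snoc_castSucc, Fin.snoc_castSucc]; exact hpack.1 i
    · induction i using Fin.lastCases with
      | last =>
        induction j using Fin.lastCases with
        | last => exact absurd rfl hij
        | cast j =>
          simp only [Fin.snoc_last, Fin.snoc_castSucc]
          exact (hdisj j).symm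
      | cast i =>
        induction j using Fin.lastCases with
        | last =>
          simp only [Fin.snoc_last, Fin.snoc_castSucc]
          exact hdisj i
        | cast j =>
          simp only [Fin.snoc_castSucc]
          exact hpack.2 i j fun e => hij (congrArg _ e)
end
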